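/- In dimension 10, every finite set S of points on the unit sphere of EuclideanSpace ℝ (Fin 10) (i.e., ‖x‖ = 1 for all x ∈ S) such that any two distinct points of S are at Euclidean distance at least 1 has cardinality at most 554; that is, the kissing number in dimension 10 is at most 554. -/

import Mathlib

/-!
This is the three-point semidefinite programming bound of Bachoc and Vallentin.

On the unit sphere of a space of dimension `ν + 2`, the Gegenbauer kernels are positive: the zonal
polynomial of degree `k` with pole `y` is a harmonic polynomial `Z y`, and up to a positive factor
the kernel at `(x, y)` is the product of `Z x` and `Z y` for the Fischer inner product
`⟨p, q⟩ = p(∂) q`. Applied to the projections of the points of `S` onto the hyperplane orthogonal to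
a point `z` of `S`, with polynomial weights in the inner products with `z`, these kernels yield
inequalities `∑ K ⟪x, z⟫ ⟪y, z⟫ ⟪x, y⟫ ≥ 0` over all triples of points of `S`, besides the two-point
inequalities of Delsarte. A positive combination of them is chosen whose terms are nonpositive at
all triples of distinct points that are allowed by `⟪x, y⟫ ≤ 1 / 2` and by the nonnegativity of the
Gram determinant; the remaining terms then bound the cardinality.

The signs are certified exactly. With `u = (3 s - 2) / 2`, the combination becomes a polynomial on
the unit cube, homogeneous in each pair `(s, 1 - s)`, whose Bernstein coefficients bound it from
above; the cube is subdivided by de Casteljau's algorithm until the coefficients on each cell,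
possibly after a nonnegative multiple of the Gram determinant has been added, are at most zero.
To make this a computation with a few large integers, the coefficients are obtained by evaluation
at powers of two (Kronecker's substitution), and all of them are subdivided at once inside a single
natural number.
-/

namespace KissingNumber

/-! ### Gegenbauer kernels and the Fischer form -/

section Gegenbauer

open MvPolynomial

/-- The homogenized Gegenbauer polynomial `k! * s ^ (k / 2) * C_k^{(ν / 2)} (w / √s)`, given by its
three-term recurrence: a polynomial in `w` and `s`, zonal on the sphere of dimension `ν + 1`. -/
def gegenbauerKernel {R : Type*} [CommRing R] (ν : ℕ) (w s : R) : ℕ → R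
  | 0 => 1
  | 1 => ν * w
  | k + 2 => ((2 * (k + 1) + ν : ℕ) : R) * (w * gegenbauerKernel ν w s (k + 1))
      - (((k + 1) * (k + ν) : ℕ) : R) * (s * gegenbauerKernel ν w s k)

theorem pderiv_pderiv_comm {σ R : Type*} [CommSemiring R] (i j : σ) (p : MvPolynomial σ R) :
    pderiv i (pderiv j p) = pderiv j (pderiv i p) := by
  classical
  rcases eq_or_ne i j with rfl | hij
  · rfl
  · ext m
    simp [coeff_pderiv, hij, hij.symm, add_right_comm, mul_right_comm]

variable {σ : Type*} [Fintype σ]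

/-- The Fischer inner product on real polynomials, for which the monomials are orthogonal, the
monomial with exponent `m` having squared norm `m!`. -/
noncomputable def fischerForm : MvPolynomial σ ℝ →ₗ[ℝ] MvPolynomial σ ℝ →ₗ[ℝ] ℝ :=
  (basisMonomials σ ℝ).constr ℝ fun m => ((∏ i, (m i).factorial : ℕ) : ℝ) • lcoeff ℝ m

theorem fischerForm_monomial_left (m : σ →₀ ℕ) (c : ℝ) (q : MvPolynomial σ ℝ) :
    fischerForm (monomial m c) q = (∏ i, (m i).factorial : ℕ) * (c * coeff m q) := by
  have hbasis : fischerForm (monomial m 1) = ((∏ i, (m i).factorial : ℕ) : ℝ) • lcoeff ℝ m := by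
    simpa only [fischerForm, coe_basisMonomials] using (basisMonomials σ ℝ).constr_basis ℝ
      (fun m => ((∏ i, (m i).factorial : ℕ) : ℝ) • lcoeff ℝ m) m
  have hsmul : monomial m c = c • monomial m (1 : ℝ) := by
    rw [smul_monomial, smul_eq_mul, mul_one]
  rw [hsmul, map_smul, hbasis]
  simp only [LinearMap.smul_apply, lcoeff_apply, smul_eq_mul]
  ring

theorem fischerForm_eq_sum {p : MvPolynomial σ ℝ} {s : Finset (σ →₀ ℕ)} (hs : p.support ⊆ s)
    (q : MvPolynomial σ ℝ) :
    fischerForm p q = ∑ m ∈ s, (∏ i, (m i).factorial : ℕ) * (coeff m p * coeff m q) := by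
  conv_lhs => rw [as_sum p, map_sum, LinearMap.sum_apply]
  simp only [fischerForm_monomial_left]
  refine Finset.sum_subset hs fun m _ hm => ?_
  rw [notMem_support_iff.mp hm, zero_mul, mul_zero]

theorem fischerForm_comm (p q : MvPolynomial σ ℝ) : fischerForm p q = fischerForm q p := by
  classical
  rw [fischerForm_eq_sum (s := p.support ∪ q.support) Finset.subset_union_left,
    fischerForm_eq_sum (s := p.support ∪ q.support) Finset.subset_union_right]
  simp only [mul_comm (coeff _ p)]

theorem fischerForm_self_nonneg (p : MvPolynomial σ ℝ) : 0 ≤ fischerForm p p := by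
  rw [fischerForm_eq_sum subset_rfl]
  exact Finset.sum_nonneg fun m _ => mul_nonneg (Nat.cast_nonneg _) (mul_self_nonneg _)

theorem fischerForm_one_one : fischerForm (1 : MvPolynomial σ ℝ) 1 = 1 := by
  simpa using fischerForm_monomial_left (0 : σ →₀ ℕ) 1 1

theorem prod_factorial_add_single (m : σ →₀ ℕ) (i : σ) :
    ∏ j, ((m + Finsupp.single i 1 : σ →₀ ℕ) j).factorial = (∏ j, (m j).factorial) * (m i + 1) := by
  classical
  have hrest : ∏ j ∈ Finset.univ.erase i, ((m + Finsupp.single i 1 : σ →₀ ℕ) j).factorial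
      = ∏ j ∈ Finset.univ.erase i, (m j).factorial :=
    Finset.prod_congr rfl fun j hj => by
      simp [(Finset.ne_of_mem_erase hj).symm]
  rw [← Finset.mul_prod_erase _ _ (Finset.mem_univ i), hrest,
    ← Finset.mul_prod_erase _ (fun j => (m j).factorial) (Finset.mem_univ i)]
  simp only [Finsupp.add_apply, Finsupp.single_eq_same, Nat.factorial_succ]
  ring

theorem fischerForm_X_mul (i : σ) (p q : MvPolynomial σ ℝ) :
    fischerForm (X i * p) q = fischerForm p (pderiv i q) := by
  induction p using MvPolynomial.induction_on' with
  | add p₁ p₂ h₁ h₂ => rw [mul_add, map_add, map_add, LinearMap.add_apply, LinearMap.add_apply,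
      h₁, h₂]
  | monomial m c =>
    rw [X, monomial_mul, add_comm, one_mul, fischerForm_monomial_left, fischerForm_monomial_left,
      coeff_pderiv, prod_factorial_add_single]
    push_cast
    ring

/-- The linear form `x ↦ ⟨y, x⟩`, as a polynomial. -/
noncomputable def linearForm (y : σ → ℝ) : MvPolynomial σ ℝ := ∑ i, C (y i) * X i

variable (σ) in
/-- The squared Euclidean norm `x ↦ ∑ i, x i ^ 2`, as a polynomial. -/
noncomputable def normSqPoly : MvPolynomial σ ℝ := ∑ i, X i * X i

/-- The derivative in the direction `y`; it is Fischer-adjoint to multiplication by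
`linearForm y`. -/
noncomputable def directionalDeriv (y : σ → ℝ) :
    Derivation ℝ (MvPolynomial σ ℝ) (MvPolynomial σ ℝ) :=
  ∑ i, y i • pderiv i

variable (σ) in
/-- The Laplace operator on polynomials; it is Fischer-adjoint to multiplication by `normSqPoly`. -/
noncomputable def laplacian : MvPolynomial σ ℝ →ₗ[ℝ] MvPolynomial σ ℝ :=
  ∑ i, (pderiv i).toLinearMap ∘ₗ (pderiv i).toLinearMap

theorem directionalDeriv_apply (y : σ → ℝ) (p : MvPolynomial σ ℝ) :
    directionalDeriv y p = ∑ i, y i • pderiv i p := by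
  rw [directionalDeriv, ← Derivation.coeFnAddMonoidHom_apply, map_sum, Finset.sum_apply]
  rfl

theorem laplacian_apply (p : MvPolynomial σ ℝ) : laplacian σ p = ∑ i, pderiv i (pderiv i p) := by
  simp [laplacian]

theorem fischerForm_linearForm_mul (y : σ → ℝ) (p q : MvPolynomial σ ℝ) :
    fischerForm (linearForm y * p) q = fischerForm p (directionalDeriv y q) := by
  rw [linearForm, directionalDeriv_apply, Finset.sum_mul, map_sum, map_sum, LinearMap.sum_apply]
  refine Finset.sum_congr rfl fun i _ => ?_
  rw [mul_assoc, ← smul_eq_C_mul, map_smul, map_smul, LinearMap.smul_apply, fischerForm_X_mul]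

theorem fischerForm_normSqPoly_mul (p q : MvPolynomial σ ℝ) :
    fischerForm (normSqPoly σ * p) q = fischerForm p (laplacian σ q) := by
  rw [normSqPoly, laplacian_apply, Finset.sum_mul, map_sum, map_sum, LinearMap.sum_apply]
  simp only [mul_assoc, fischerForm_X_mul]

theorem pderiv_linearForm (y : σ → ℝ) (i : σ) : pderiv i (linearForm y) = C (y i) := by
  classical
  simp [linearForm, pderiv_X, Pi.single_apply]

theorem pderiv_normSqPoly (i : σ) : pderiv i (normSqPoly σ) = 2 * X i := by
  classical
  simp only [normSqPoly, map_sum, pderiv_mul, pderiv_X, Pi.single_apply, ite_mul, mul_ite, one_mul,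
    mul_one, zero_mul, mul_zero, Finset.sum_add_distrib, Finset.sum_ite_eq', Finset.mem_univ,
    if_true]
  ring

theorem directionalDeriv_linearForm (y z : σ → ℝ) :
    directionalDeriv y (linearForm z) = C (y ⬝ᵥ z) := by
  simp only [directionalDeriv_apply, pderiv_linearForm, dotProduct, map_sum, smul_eq_C_mul, C_mul]

theorem directionalDeriv_normSqPoly (y : σ → ℝ) :
    directionalDeriv y (normSqPoly σ) = 2 * linearForm y := by
  simp only [directionalDeriv_apply, pderiv_normSqPoly, linearForm, smul_eq_C_mul, Finset.mul_sum]
  exact Finset.sum_congr rfl fun i _ => by ring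

theorem laplacian_directionalDeriv (y : σ → ℝ) (p : MvPolynomial σ ℝ) :
    laplacian σ (directionalDeriv y p) = directionalDeriv y (laplacian σ p) := by
  simp only [laplacian_apply, directionalDeriv_apply, map_sum, Derivation.map_smul]
  rw [Finset.sum_comm]
  refine Finset.sum_congr rfl fun i _ => Finset.sum_congr rfl fun j _ => ?_
  rw [pderiv_pderiv_comm j i, pderiv_pderiv_comm j i]

theorem laplacian_mul (p q : MvPolynomial σ ℝ) :
    laplacian σ (p * q)
      = p * laplacian σ q + 2 * ∑ i, pderiv i p * pderiv i q + laplacian σ p * q := by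
  simp only [laplacian_apply, Finset.mul_sum, Finset.sum_mul, ← Finset.sum_add_distrib]
  refine Finset.sum_congr rfl fun i _ => ?_
  simp only [pderiv_mul, map_add]
  ring

theorem laplacian_linearForm (y : σ → ℝ) : laplacian σ (linearForm y) = 0 := by
  simp [laplacian_apply, pderiv_linearForm]

theorem laplacian_linearForm_mul (y : σ → ℝ) (p : MvPolynomial σ ℝ) :
    laplacian σ (linearForm y * p) = 2 * directionalDeriv y p + linearForm y * laplacian σ p := by
  simp only [laplacian_mul, laplacian_linearForm, pderiv_linearForm, directionalDeriv_apply,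
    smul_eq_C_mul]
  ring

theorem laplacian_normSqPoly_mul {k : ℕ} {p : MvPolynomial σ ℝ} (hp : p.IsHomogeneous k) :
    laplacian σ (normSqPoly σ * p)
      = (2 * Fintype.card σ + 4 * k) • p + normSqPoly σ * laplacian σ p := by
  have hnormSq : laplacian σ (normSqPoly σ) = (2 * Fintype.card σ) • 1 := by
    have htwo (i : σ) : pderiv i (2 * X i : MvPolynomial σ ℝ) = 2 := by
      rw [← map_ofNat C 2, pderiv_C_mul, pderiv_X_self, mul_one]
    simp only [laplacian_apply, pderiv_normSqPoly, htwo]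
    simp [mul_comm]
  have heuler : ∑ i, pderiv i (normSqPoly σ) * pderiv i p = 2 * (k • p) := by
    simp only [pderiv_normSqPoly, ← hp.sum_X_mul_pderiv, Finset.mul_sum, mul_assoc]
  rw [laplacian_mul, hnormSq, heuler]
  simp only [nsmul_eq_mul]
  push_cast
  ring

/-- The zonal polynomial of degree `k` with pole `y`. For `ν + 2` variables it is harmonic, and it
is a multiple of the harmonic component of `linearForm y ^ k`. -/
noncomputable def zonalPoly (ν : ℕ) (y : σ → ℝ) (k : ℕ) : MvPolynomial σ ℝ :=
  gegenbauerKernel ν (linearForm y) (C (y ⬝ᵥ y) * normSqPoly σ) k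

theorem zonalPoly_zero (ν : ℕ) (y : σ → ℝ) : zonalPoly ν y 0 = 1 := rfl

theorem zonalPoly_one (ν : ℕ) (y : σ → ℝ) : zonalPoly ν y 1 = (ν : ℝ) • linearForm y := by
  simp only [zonalPoly, gegenbauerKernel, smul_eq_C_mul, map_natCast]

theorem zonalPoly_add_two (ν : ℕ) (y : σ → ℝ) (k : ℕ) :
    zonalPoly ν y (k + 2)
      = ((2 * (k + 1) + ν : ℕ) : ℝ) • (linearForm y * zonalPoly ν y (k + 1))
        - (((k + 1) * (k + ν) : ℕ) * (y ⬝ᵥ y) : ℝ) • (normSqPoly σ * zonalPoly ν y k) := by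
  simp only [zonalPoly, gegenbauerKernel, smul_eq_C_mul, C_mul, map_natCast]
  ring

theorem isHomogeneous_linearForm (y : σ → ℝ) : (linearForm y).IsHomogeneous 1 :=
  IsHomogeneous.sum _ _ _ fun i _ => isHomogeneous_C_mul_X (y i) i

theorem isHomogeneous_normSqPoly : (normSqPoly σ).IsHomogeneous 2 :=
  IsHomogeneous.sum _ _ _ fun i _ => (isHomogeneous_X ℝ i).mul (isHomogeneous_X ℝ i)

theorem isHomogeneous_zonalPoly (ν : ℕ) (y : σ → ℝ) (k : ℕ) :
    (zonalPoly ν y k).IsHomogeneous k := by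
  have hsmul {p : MvPolynomial σ ℝ} {d : ℕ} (c : ℝ) (hp : p.IsHomogeneous d) :
      (c • p).IsHomogeneous d := by
    simpa only [smul_eq_C_mul, zero_add] using (isHomogeneous_C σ c).mul hp
  induction k using Nat.twoStepInduction with
  | zero => exact isHomogeneous_one σ ℝ
  | one => exact zonalPoly_one ν y ▸ hsmul _ (isHomogeneous_linearForm y)
  | more k ih₀ ih₁ =>
    rw [zonalPoly_add_two]
    refine (hsmul _ ?_).sub (hsmul _ ?_)
    · exact (by ring : 1 + (k + 1) = k + 2) ▸ (isHomogeneous_linearForm y).mul ih₁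
    · exact add_comm 2 k ▸ isHomogeneous_normSqPoly.mul ih₀

theorem directionalDeriv_zonalPoly (ν : ℕ) (y : σ → ℝ) (k : ℕ) :
    directionalDeriv y (zonalPoly ν y (k + 1))
      = (((k + 1) * (k + ν) : ℕ) * (y ⬝ᵥ y) : ℝ) • zonalPoly ν y k := by
  induction k using Nat.twoStepInduction with
  | zero =>
    rw [zonalPoly_one, Derivation.map_smul, directionalDeriv_linearForm, zonalPoly_zero]
    simp [smul_eq_C_mul]
  | one =>
    simp only [zonalPoly_add_two, zonalPoly_one, zonalPoly_zero, zero_add, Derivation.leibniz,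
      map_sub, Derivation.map_smul, directionalDeriv_linearForm, directionalDeriv_normSqPoly,
      mul_one]
    simp only [smul_eq_C_mul, smul_eq_mul, C_mul, map_natCast]
    push_cast
    ring
  | more k ih₀ ih₁ =>
    rw [zonalPoly_add_two ν y (k + 1)]
    simp only [Derivation.leibniz, map_sub, Derivation.map_smul, directionalDeriv_linearForm,
      directionalDeriv_normSqPoly, ih₀, ih₁]
    rw [zonalPoly_add_two]
    simp only [smul_eq_C_mul, smul_eq_mul, C_mul, map_natCast]
    push_cast
    ring

theorem laplacian_zonalPoly {ν : ℕ} (hν : Fintype.card σ = ν + 2) (y : σ → ℝ) (k : ℕ) :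
    laplacian σ (zonalPoly ν y k) = 0 := by
  induction k using Nat.twoStepInduction with
  | zero => simp [zonalPoly_zero, laplacian_apply]
  | one => rw [zonalPoly_one, map_smul, laplacian_linearForm, smul_zero]
  | more k ih₀ ih₁ =>
    rw [zonalPoly_add_two, map_sub, map_smul, map_smul, laplacian_linearForm_mul,
      laplacian_normSqPoly_mul (isHomogeneous_zonalPoly ν y k), ih₀, ih₁,
      directionalDeriv_zonalPoly, hν]
    simp only [smul_eq_C_mul, C_mul, map_natCast, nsmul_eq_mul]
    push_cast
    ring

/- The terms of `zonalPoly` divisible by `normSqPoly` are Fischer-orthogonal to harmonic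
polynomials, so only the leading term `linearForm y ^ k` contributes. -/
theorem exists_fischerForm_zonalPoly_eq {ν : ℕ} (hν : 0 < ν) (k : ℕ) :
    ∃ c : ℝ, 0 < c ∧ ∀ (y : σ → ℝ) (q : MvPolynomial σ ℝ), laplacian σ q = 0 →
      fischerForm (zonalPoly ν y k) q = c * fischerForm (linearForm y ^ k) q := by
  induction k using Nat.twoStepInduction with
  | zero => exact ⟨1, one_pos, fun y q _ => by rw [zonalPoly_zero, pow_zero, one_mul]⟩
  | one => exact ⟨ν, Nat.cast_pos.mpr hν, fun y q _ => by
      rw [zonalPoly_one, map_smul, LinearMap.smul_apply, smul_eq_mul, pow_one]⟩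
  | more k _ ih =>
    obtain ⟨c, hc, h⟩ := ih
    refine ⟨(2 * (k + 1) + ν : ℕ) * c, by positivity, fun y q hq => ?_⟩
    have hderiv : laplacian σ (directionalDeriv y q) = 0 := by
      rw [laplacian_directionalDeriv, hq, map_zero]
    rw [zonalPoly_add_two, map_sub, map_smul, map_smul, LinearMap.sub_apply, LinearMap.smul_apply,
      LinearMap.smul_apply, fischerForm_linearForm_mul, fischerForm_normSqPoly_mul, hq, map_zero,
      smul_zero, sub_zero, h _ _ hderiv, ← fischerForm_linearForm_mul, smul_eq_mul, ← pow_succ',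
      mul_assoc]

theorem directionalDeriv_linearForm_pow (y z : σ → ℝ) (k : ℕ) :
    directionalDeriv z (linearForm y ^ (k + 1)) = ((k + 1) * (z ⬝ᵥ y) : ℝ) • linearForm y ^ k := by
  simp only [Derivation.leibniz_pow, directionalDeriv_linearForm, smul_eq_C_mul, smul_eq_mul,
    nsmul_eq_mul, add_tsub_cancel_right, C_mul, C_add, C_1, map_natCast]
  push_cast
  ring

theorem laplacian_linearForm_pow (y : σ → ℝ) (k : ℕ) :
    laplacian σ (linearForm y ^ (k + 2))
      = ((k + 2) * (k + 1) * (y ⬝ᵥ y) : ℝ) • linearForm y ^ k := by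
  induction k with
  | zero =>
    rw [zero_add, pow_two, laplacian_linearForm_mul, directionalDeriv_linearForm,
      laplacian_linearForm]
    simp only [smul_eq_C_mul, C_mul, C_add, C_1, map_natCast, map_ofNat]
    push_cast
    ring
  | succ k ih =>
    rw [pow_succ', laplacian_linearForm_mul, ih, directionalDeriv_linearForm_pow]
    simp only [smul_eq_C_mul, C_mul, C_add, C_1, map_natCast, map_ofNat]
    push_cast
    ring

theorem fischerForm_zonalPoly_linearForm_pow (ν : ℕ) (y z : σ → ℝ) (k : ℕ) :
    fischerForm (zonalPoly ν z k) (linearForm y ^ k)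
      = k.factorial * gegenbauerKernel ν (z ⬝ᵥ y) ((z ⬝ᵥ z) * (y ⬝ᵥ y)) k := by
  induction k using Nat.twoStepInduction with
  | zero => simp [zonalPoly_zero, gegenbauerKernel, fischerForm_one_one]
  | one =>
    rw [zonalPoly_one, map_smul, LinearMap.smul_apply, ← mul_one (linearForm z),
      fischerForm_linearForm_mul, directionalDeriv_linearForm_pow, map_smul]
    simp [gegenbauerKernel, fischerForm_one_one]
  | more k ih₀ ih₁ =>
    rw [zonalPoly_add_two, map_sub, map_smul, map_smul, LinearMap.sub_apply, LinearMap.smul_apply,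
      LinearMap.smul_apply, fischerForm_linearForm_mul, fischerForm_normSqPoly_mul,
      directionalDeriv_linearForm_pow, laplacian_linearForm_pow, map_smul, map_smul, ih₀, ih₁,
      gegenbauerKernel]
    simp only [smul_eq_mul, Nat.factorial_succ]
    push_cast
    ring

theorem sum_gegenbauerKernel_dotProduct_nonneg {ν : ℕ} (hν : 0 < ν) (hσ : Fintype.card σ = ν + 2)
    {ι : Type*} (s : Finset ι) (c : ι → ℝ) (x : ι → σ → ℝ) (k : ℕ) :
    0 ≤ ∑ i ∈ s, ∑ j ∈ s, c i * c j *
      gegenbauerKernel ν (x i ⬝ᵥ x j) ((x i ⬝ᵥ x i) * (x j ⬝ᵥ x j)) k := by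
  obtain ⟨a, ha, hform⟩ := exists_fischerForm_zonalPoly_eq (σ := σ) hν k
  refine (mul_nonneg_iff_of_pos_left (by positivity : 0 < a * k.factorial)).mp ?_
  refine (fischerForm_self_nonneg (∑ i ∈ s, c i • zonalPoly ν (x i) k)).trans_eq ?_
  rw [map_sum fischerForm, LinearMap.sum_apply, Finset.mul_sum]
  refine Finset.sum_congr rfl fun i _ => ?_
  rw [map_sum, Finset.mul_sum]
  refine Finset.sum_congr rfl fun j _ => ?_
  rw [map_smul, map_smul, LinearMap.smul_apply, hform _ _ (laplacian_zonalPoly hσ _ _),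
    fischerForm_comm, fischerForm_zonalPoly_linearForm_pow, dotProduct_comm (x j) (x i),
    mul_comm (x j ⬝ᵥ x j)]
  simp only [smul_eq_mul]
  ring

theorem sum_gegenbauerKernel_inner_nonneg {E : Type*} [NormedAddCommGroup E]
    [InnerProductSpace ℝ E] [FiniteDimensional ℝ E] {ν : ℕ} (hν : 0 < ν)
    (hE : Module.finrank ℝ E = ν + 2) {ι : Type*} (s : Finset ι) (c : ι → ℝ) (x : ι → E) (k : ℕ) :
    0 ≤ ∑ i ∈ s, ∑ j ∈ s, c i * c j *
      gegenbauerKernel ν (inner ℝ (x i) (x j)) (‖x i‖ ^ 2 * ‖x j‖ ^ 2) k := by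
  let b := stdOrthonormalBasis ℝ E
  have hdot (v w : E) : ⇑(b.repr v) ⬝ᵥ ⇑(b.repr w) = inner ℝ v w := by
    rw [← b.repr.inner_map_map v w, real_inner_comm, PiLp.inner_apply]
    rfl
  have hpos := sum_gegenbauerKernel_dotProduct_nonneg hν (by rw [Fintype.card_fin, hE]) s c
    (fun i => b.repr (x i)) k
  simpa only [hdot, real_inner_self_eq_norm_sq] using hpos

end Gegenbauer

/-! ### The three-point bound -/

section ThreePoint

open Finset RealInnerProductSpace

variable {E : Type*} [NormedAddCommGroup E] [InnerProductSpace ℝ E]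

theorem inner_sub_inner_smul_sub_inner_smul {z : E} (hz : ‖z‖ = 1) (x y : E) :
    ⟪x - ⟪x, z⟫ • z, y - ⟪y, z⟫ • z⟫ = ⟪x, y⟫ - ⟪x, z⟫ * ⟪y, z⟫ := by
  simp only [inner_sub_left, inner_sub_right, real_inner_smul_left, real_inner_smul_right,
    real_inner_self_eq_norm_sq, hz, real_inner_comm y z]
  ring

theorem sum_gegenbauerKernel_orthogonal_nonneg [FiniteDimensional ℝ E] {ν : ℕ} (hν : 0 < ν)
    (hE : Module.finrank ℝ E = ν + 3) {z : E} (hz : ‖z‖ = 1) (T : Finset E) (f : E → ℝ) (k : ℕ) :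
    0 ≤ ∑ x ∈ T, ∑ y ∈ T, f x * f y * gegenbauerKernel ν (⟪x, y⟫ - ⟪x, z⟫ * ⟪y, z⟫)
      ((‖x‖ ^ 2 - ⟪x, z⟫ ^ 2) * (‖y‖ ^ 2 - ⟪y, z⟫ ^ 2)) k := by
  have hmem (x : E) : x - ⟪x, z⟫ • z ∈ (Submodule.span ℝ {z})ᗮ := by
    rw [Submodule.mem_orthogonal_singleton_iff_inner_right, inner_sub_right,
      real_inner_smul_right, real_inner_self_eq_norm_sq, hz, real_inner_comm]
    ring
  have hfinrank : Module.finrank ℝ (Submodule.span ℝ {z})ᗮ = ν + 2 :=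
    haveI : Fact (Module.finrank ℝ E = ν + 2 + 1) := ⟨hE⟩
    Submodule.finrank_orthogonal_span_singleton (norm_ne_zero_iff.mp (hz ▸ one_ne_zero))
  have hinner (x y : E) :
      ⟪(⟨_, hmem x⟩ : (Submodule.span ℝ {z})ᗮ), ⟨_, hmem y⟩⟫ = ⟪x, y⟫ - ⟪x, z⟫ * ⟪y, z⟫ :=
    inner_sub_inner_smul_sub_inner_smul hz x y
  have hpos := sum_gegenbauerKernel_inner_nonneg hν hfinrank T f (fun x => ⟨_, hmem x⟩) k
  simpa only [← real_inner_self_eq_norm_sq, hinner, ← pow_two] using hpos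

theorem gram_det_nonneg {x y z : E} (hx : ‖x‖ = 1) (hy : ‖y‖ = 1) (hz : ‖z‖ = 1) :
    0 ≤ 1 + 2 * ⟪x, z⟫ * ⟪y, z⟫ * ⟪x, y⟫ - ⟪x, z⟫ ^ 2 - ⟪y, z⟫ ^ 2 - ⟪x, y⟫ ^ 2 := by
  have hcauchy := real_inner_mul_inner_self_le (x - ⟪x, z⟫ • z) (y - ⟪y, z⟫ • z)
  simp only [inner_sub_inner_smul_sub_inner_smul hz, real_inner_self_eq_norm_sq, hx, hy]
    at hcauchy
  linarith

theorem inner_le_half_of_one_le_dist {x y : E} (hx : ‖x‖ = 1) (hy : ‖y‖ = 1)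
    (hxy : 1 ≤ dist x y) : ⟪x, y⟫ ≤ 1 / 2 := by
  have hsq := norm_sub_sq_real x y
  rw [hx, hy, ← dist_eq_norm] at hsq
  nlinarith

variable [DecidableEq E]

/-- A valid linear inequality on the three-point distribution of the code `S`: the constant `A`
counts points, `B` is summed over ordered pairs and `K` over ordered triples of distinct points,
the latter through `⟪x, z⟫`, `⟪y, z⟫` and `⟪x, y⟫`. -/
def ThreePointNonneg (S : Finset E) (A : ℝ) (B : ℝ → ℝ) (K : ℝ → ℝ → ℝ → ℝ) : Prop :=
  0 ≤ #S * A + ∑ z ∈ S, ∑ x ∈ S.erase z, B ⟪x, z⟫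
    + ∑ z ∈ S, ∑ x ∈ S.erase z, ∑ y ∈ (S.erase z).erase x, K ⟪x, z⟫ ⟪y, z⟫ ⟪x, y⟫

namespace ThreePointNonneg

variable {S : Finset E} {A A' : ℝ} {B B' : ℝ → ℝ} {K K' : ℝ → ℝ → ℝ → ℝ}

protected theorem add (h : ThreePointNonneg S A B K) (h' : ThreePointNonneg S A' B' K') :
    ThreePointNonneg S (A + A') (fun u => B u + B' u) (fun u v t => K u v t + K' u v t) := by
  unfold ThreePointNonneg at *
  simp only [sum_add_distrib]
  linarith

variable (S) in
protected theorem zero : ThreePointNonneg S 0 (fun _ => 0) (fun _ _ _ => 0) := by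
  simp [ThreePointNonneg]

protected theorem smul {c : ℝ} (hc : 0 ≤ c) (h : ThreePointNonneg S A B K) :
    ThreePointNonneg S (c * A) (fun u => c * B u) (fun u v t => c * K u v t) := by
  unfold ThreePointNonneg at *
  simp only [← mul_sum]
  linarith [mul_nonneg hc h]

end ThreePointNonneg

theorem sum_sum_eq_sum_diag_add_sum_erase {ι : Type*} [DecidableEq ι] (T : Finset ι)
    (g : ι → ι → ℝ) :
    ∑ x ∈ T, ∑ y ∈ T, g x y = ∑ x ∈ T, g x x + ∑ x ∈ T, ∑ y ∈ T.erase x, g x y := by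
  rw [← sum_add_distrib]
  exact sum_congr rfl fun x hx => (add_sum_erase T _ hx).symm

theorem threePointNonneg_sq (S : Finset E) (c : ℝ) (f : ℝ → ℝ) :
    ThreePointNonneg S (c * c) (fun u => 2 * c * f u + f u * f u) (fun u v _ => f u * f v) := by
  have hpoint (z : E) : 0 ≤ c * c + ∑ x ∈ S.erase z, (2 * c * f ⟪x, z⟫ + f ⟪x, z⟫ * f ⟪x, z⟫)
      + ∑ x ∈ S.erase z, ∑ y ∈ (S.erase z).erase x, f ⟪x, z⟫ * f ⟪y, z⟫ := by
    have hdiag := sum_sum_eq_sum_diag_add_sum_erase (S.erase z) fun x y => f ⟪x, z⟫ * f ⟪y, z⟫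
    rw [← sum_mul_sum] at hdiag
    rw [sum_add_distrib, ← mul_sum]
    nlinarith [sq_nonneg (c + ∑ x ∈ S.erase z, f ⟪x, z⟫)]
  have hsum := sum_nonneg fun z (_ : z ∈ S) => hpoint z
  rwa [sum_add_distrib, sum_add_distrib, sum_const, nsmul_eq_mul] at hsum

section Sphere

variable [FiniteDimensional ℝ E] {S : Finset E}

theorem threePointNonneg_gegenbauerKernel (hS : ∀ x ∈ S, ‖x‖ = 1) {ν : ℕ} (hν : 0 < ν)
    (hE : Module.finrank ℝ E = ν + 2) (k : ℕ) :
    ThreePointNonneg S (gegenbauerKernel ν 1 1 k) (fun u => gegenbauerKernel ν u 1 k)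
      (fun _ _ _ => 0) := by
  have hpos := sum_gegenbauerKernel_inner_nonneg hν hE S (fun _ => 1) id k
  have hunit : ∀ x ∈ S, ∀ y ∈ S, (1 : ℝ) * 1 *
      gegenbauerKernel ν ⟪id y, id x⟫ (‖id y‖ ^ 2 * ‖id x‖ ^ 2) k
        = gegenbauerKernel ν ⟪y, x⟫ 1 k := fun x hx y hy => by simp [hS x hx, hS y hy]
  rw [sum_comm, sum_congr rfl fun x hx => sum_congr rfl (hunit x hx),
    sum_sum_eq_sum_diag_add_sum_erase] at hpos
  simp only [ThreePointNonneg, sum_const_zero, add_zero]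
  refine hpos.trans_eq (congrArg (· + _) ?_)
  rw [sum_congr rfl fun x hx => by rw [real_inner_self_eq_norm_sq, hS x hx, one_pow],
    sum_const, nsmul_eq_mul]

theorem threePointNonneg_gegenbauerKernel_orthogonal (hS : ∀ x ∈ S, ‖x‖ = 1) {ν : ℕ} (hν : 0 < ν)
    (hE : Module.finrank ℝ E = ν + 3) (f : ℝ → ℝ) (k : ℕ) :
    ThreePointNonneg S 0
      (fun u => f u * f u * gegenbauerKernel ν (1 - u * u) ((1 - u ^ 2) * (1 - u ^ 2)) k)
      (fun u v t => f u * f v * gegenbauerKernel ν (t - u * v) ((1 - u ^ 2) * (1 - v ^ 2)) k) := by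
  unfold ThreePointNonneg
  rw [mul_zero, zero_add, ← sum_add_distrib]
  refine sum_nonneg fun z hz => ?_
  have hT : ∀ x ∈ S.erase z, ‖x‖ = 1 := fun x hx => hS x (mem_of_mem_erase hx)
  have hpos := sum_gegenbauerKernel_orthogonal_nonneg hν hE (hS z hz) (S.erase z)
    (fun x => f ⟪x, z⟫) k
  rw [sum_sum_eq_sum_diag_add_sum_erase] at hpos
  refine hpos.trans_eq (congrArg₂ (· + ·) (sum_congr rfl fun x hx => ?_)
    (sum_congr rfl fun x hx => sum_congr rfl fun y hy => ?_))
  · rw [real_inner_self_eq_norm_sq, hT x hx, one_pow]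
  · rw [hT x hx, hT y (mem_of_mem_erase hy), one_pow]

end Sphere

section DistinctTriples

variable {ι : Type*} [DecidableEq ι] (S : Finset ι) (g : ι → ι → ι → ℝ)

theorem sum_distinct_triples_eq_sum_ite :
    ∑ z ∈ S, ∑ x ∈ S.erase z, ∑ y ∈ (S.erase z).erase x, g z x y
      = ∑ z ∈ S, ∑ x ∈ S, ∑ y ∈ S, if z ≠ x ∧ z ≠ y ∧ x ≠ y then g z x y else 0 := by
  refine sum_congr rfl fun z _ => ?_
  rw [← filter_ne, sum_filter]
  refine sum_congr rfl fun x _ => ?_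
  rw [← filter_ne, filter_filter, sum_filter]
  split_ifs with hzx <;> simp [hzx]

theorem sum_distinct_triples_swap_left :
    ∑ z ∈ S, ∑ x ∈ S.erase z, ∑ y ∈ (S.erase z).erase x, g z x y
      = ∑ z ∈ S, ∑ x ∈ S.erase z, ∑ y ∈ (S.erase z).erase x, g x z y := by
  rw [sum_distinct_triples_eq_sum_ite, sum_distinct_triples_eq_sum_ite S fun z x y => g x z y,
    sum_comm]
  refine sum_congr rfl fun x _ => sum_congr rfl fun z _ => sum_congr rfl fun y _ => ?_
  exact if_congr (by tauto) rfl rfl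

theorem sum_distinct_triples_swap_right :
    ∑ z ∈ S, ∑ x ∈ S.erase z, ∑ y ∈ (S.erase z).erase x, g z x y
      = ∑ z ∈ S, ∑ x ∈ S.erase z, ∑ y ∈ (S.erase z).erase x, g z y x := by
  rw [sum_distinct_triples_eq_sum_ite, sum_distinct_triples_eq_sum_ite S fun z x y => g z y x]
  refine sum_congr rfl fun z _ => ?_
  rw [sum_comm]
  refine sum_congr rfl fun x _ => sum_congr rfl fun y _ => ?_
  exact if_congr (by tauto) rfl rfl

end DistinctTriples

theorem sum_pairs_le {ι : Type*} [DecidableEq ι] (S : Finset ι) {g : ι → ι → ℝ} {b : ℝ}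
    (hg : ∀ z ∈ S, ∀ x ∈ S, x ≠ z → g z x ≤ b) :
    ∑ z ∈ S, ∑ x ∈ S.erase z, g z x ≤ #S * ((#S - 1) * b) := by
  rw [← nsmul_eq_mul]
  refine sum_le_card_nsmul _ _ _ fun z hz => ?_
  have hcard : (#S : ℝ) - 1 = #(S.erase z) := by
    rw [card_erase_of_mem hz, Nat.cast_sub (card_pos.mpr ⟨z, hz⟩), Nat.cast_one]
  rw [hcard, ← nsmul_eq_mul]
  exact sum_le_card_nsmul _ _ _ fun x hx => hg z hz x (mem_of_mem_erase hx) (ne_of_mem_erase hx)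

/- Only the symmetrization of `K` matters, since the three points of a triple may be permuted. -/
theorem sum_triples_nonpos {S : Finset E} {K : ℝ → ℝ → ℝ → ℝ}
    (hK : ∀ z ∈ S, ∀ x ∈ S, ∀ y ∈ S, x ≠ z → y ≠ z → y ≠ x →
      K ⟪x, z⟫ ⟪y, z⟫ ⟪x, y⟫ + K ⟪x, z⟫ ⟪x, y⟫ ⟪y, z⟫ + K ⟪y, z⟫ ⟪x, y⟫ ⟪x, z⟫ ≤ 0) :
    ∑ z ∈ S, ∑ x ∈ S.erase z, ∑ y ∈ (S.erase z).erase x, K ⟪x, z⟫ ⟪y, z⟫ ⟪x, y⟫ ≤ 0 := by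
  have hswap := sum_distinct_triples_swap_left S fun z x y => K ⟪x, z⟫ ⟪y, z⟫ ⟪x, y⟫
  have hcycle := sum_distinct_triples_swap_right S fun z x y => K ⟪z, x⟫ ⟪y, x⟫ ⟪z, y⟫
  have hsum : ∑ z ∈ S, ∑ x ∈ S.erase z, ∑ y ∈ (S.erase z).erase x,
      (K ⟪x, z⟫ ⟪y, z⟫ ⟪x, y⟫ + K ⟪z, x⟫ ⟪y, x⟫ ⟪z, y⟫ + K ⟪z, y⟫ ⟪x, y⟫ ⟪z, x⟫) ≤ 0 := by
    refine sum_nonpos fun z hz => sum_nonpos fun x hx => sum_nonpos fun y hy => ?_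
    rw [real_inner_comm x z, real_inner_comm x y, real_inner_comm y z]
    exact hK z hz x (mem_of_mem_erase hx) y (mem_of_mem_erase (mem_of_mem_erase hy))
      (ne_of_mem_erase hx) (ne_of_mem_erase (mem_of_mem_erase hy)) (ne_of_mem_erase hy)
  simp only [sum_add_distrib] at hsum
  linarith

/-- The Bachoc–Vallentin bound for spherical codes with inner products at most `c`. -/
theorem ThreePointNonneg.card_mul_le {S : Finset E} {A : ℝ} {B : ℝ → ℝ} {K : ℝ → ℝ → ℝ → ℝ}
    (h : ThreePointNonneg S A B K) (hS : ∀ x ∈ S, ‖x‖ = 1) {b c : ℝ}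
    (hc : ∀ x ∈ S, ∀ y ∈ S, x ≠ y → ⟪x, y⟫ ≤ c) (hB : ∀ u ∈ Set.Icc (-1) c, B u ≤ -b)
    (hK : ∀ u ∈ Set.Icc (-1) c, ∀ v ∈ Set.Icc (-1) c, ∀ t ∈ Set.Icc (-1) c,
      0 ≤ 1 + 2 * u * v * t - u ^ 2 - v ^ 2 - t ^ 2 → K u v t + K u t v + K v t u ≤ 0) :
    #S * ((#S - 1) * b) ≤ #S * A := by
  have hinner : ∀ x ∈ S, ∀ y ∈ S, x ≠ y → ⟪x, y⟫ ∈ Set.Icc (-1) c := fun x hx y hy hxy =>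
    ⟨by simpa [hS x hx, hS y hy] using (abs_le.mp (abs_real_inner_le_norm x y)).1,
      hc x hx y hy hxy⟩
  have hpairs := sum_pairs_le S fun z hz x hx hxz => hB _ (hinner x hx z hz hxz)
  have htriples := sum_triples_nonpos fun z hz x hx y hy hxz hyz hyx =>
    hK _ (hinner x hx z hz hxz) _ (hinner y hy z hz hyz) _ (hinner x hx y hy hyx.symm)
      (gram_det_nonneg (hS x hx) (hS y hy) (hS z hz))
  unfold ThreePointNonneg at h
  linarith

end ThreePoint

open Finset

/-! ### Vectors packed into a natural number -/

section Slots

/-- The `i`-th base-`2^w` digit of `T`. A natural number is read as a vector of `w`-bit slots, so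
that one big-integer operation acts on all the entries at once. -/
def slot (w T i : ℕ) : ℕ := T / 2 ^ (w * i) % 2 ^ w

theorem slot_lt (w T i : ℕ) : slot w T i < 2 ^ w := Nat.mod_lt _ (by positivity)

theorem slot_zero_left (w i : ℕ) : slot w 0 i = 0 := by simp [slot]

theorem slot_shiftRight (w T s i : ℕ) : slot w (T >>> (w * s)) i = slot w T (i + s) := by
  rw [slot, slot, Nat.shiftRight_eq_div_pow, Nat.div_div_eq_div_mul, ← pow_add]
  congr 3
  ring

theorem slot_shiftLeft_of_lt (w T : ℕ) {s i : ℕ} (h : i < s) : slot w (T <<< (w * s)) i = 0 := by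
  obtain ⟨k, rfl⟩ := Nat.exists_eq_add_of_lt h
  have factor : T * 2 ^ (w * (i + k + 1)) = T * 2 ^ (w * k) * 2 ^ w * 2 ^ (w * i) := by ring
  rw [slot, Nat.shiftLeft_eq, factor, Nat.mul_div_cancel _ (by positivity), Nat.mul_mod_left]

theorem slot_shiftLeft_add (w T s i : ℕ) : slot w (T <<< (w * s)) (i + s) = slot w T i := by
  rw [slot, slot, Nat.shiftLeft_eq, mul_add, pow_add, Nat.mul_div_mul_right _ _ (by positivity)]

theorem slot_land (w T U i : ℕ) : slot w (T &&& U) i = slot w T i &&& slot w U i := by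
  refine Nat.eq_of_testBit_eq fun j => ?_
  simp only [slot, Nat.testBit_land, Nat.testBit_mod_two_pow, Nat.testBit_div_two_pow]
  by_cases h : j < w <;> simp [h]

theorem land_two_pow_sub_one_of_lt {w a : ℕ} (h : a < 2 ^ w) : a &&& (2 ^ w - 1) = a := by
  rw [Nat.and_two_pow_sub_one_eq_mod, Nat.mod_eq_of_lt h]

theorem add_div_two_pow_of_slot_lt {w T U : ℕ} (h : ∀ i, slot w T i + slot w U i < 2 ^ w) (i : ℕ) :
    (T + U) / 2 ^ (w * i) = T / 2 ^ (w * i) + U / 2 ^ (w * i) := by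
  induction i with
  | zero => simp
  | succ i ih =>
    rw [Nat.mul_succ, pow_add, ← Nat.div_div_eq_div_mul, ← Nat.div_div_eq_div_mul,
      ← Nat.div_div_eq_div_mul, ih, Nat.add_div (by positivity), if_neg, add_zero]
    exact not_le.mpr (h i)

theorem slot_add {w T U : ℕ} (h : ∀ i, slot w T i + slot w U i < 2 ^ w) (i : ℕ) :
    slot w (T + U) i = slot w T i + slot w U i := by
  rw [slot, add_div_two_pow_of_slot_lt h, Nat.add_mod, ← slot, ← slot, Nat.mod_eq_of_lt (h i)]

theorem mul_div_two_pow_of_slot_lt {w T c : ℕ} (h : ∀ i, slot w T i * c < 2 ^ w) (i : ℕ) :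
    T * c / 2 ^ (w * i) = T / 2 ^ (w * i) * c := by
  induction i with
  | zero => simp
  | succ i ih =>
    rw [Nat.mul_succ, pow_add, ← Nat.div_div_eq_div_mul, ← Nat.div_div_eq_div_mul, ih]
    conv_lhs => rw [← Nat.div_add_mod (T / 2 ^ (w * i)) (2 ^ w)]
    rw [add_mul, mul_assoc, Nat.mul_add_div (by positivity), ← slot, Nat.div_eq_of_lt (h i),
      add_zero]

theorem slot_mul {w T c : ℕ} (h : ∀ i, slot w T i * c < 2 ^ w) (i : ℕ) :
    slot w (T * c) i = slot w T i * c := by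
  have hmod := h i
  rw [slot, mul_div_two_pow_of_slot_lt h, ← Nat.mod_mul_mod, ← slot, Nat.mod_eq_of_lt hmod]

/-- The number whose first `N` slots are the entries of `c`. -/
def pack (w N : ℕ) (c : ℕ → ℕ) : ℕ := ∑ k ∈ range N, c k * 2 ^ (w * k)

theorem slot_pack {w : ℕ} {c : ℕ → ℕ} (hc : ∀ i, c i < 2 ^ w) (N i : ℕ) :
    slot w (pack w N c) i = if i < N then c i else 0 := by
  induction N generalizing c i with
  | zero => simp [pack, slot]
  | succ N ih =>
    have cons : pack w (N + 1) c = c 0 + 2 ^ w * pack w N fun k => c (k + 1) := by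
      rw [pack, pack, sum_range_succ', mul_sum, add_comm, mul_zero, pow_zero, mul_one]
      congr 1
      exact sum_congr rfl fun k _ => by ring
    rcases i with _ | i
    · simp [slot, cons, Nat.mod_eq_of_lt (hc 0)]
    · have tail : slot w (pack w (N + 1) c) (i + 1) = slot w (pack w N fun k => c (k + 1)) i := by
        rw [slot, slot, cons, Nat.mul_succ, add_comm (w * i), pow_add, ← Nat.div_div_eq_div_mul,
          Nat.add_mul_div_left _ _ (by positivity), Nat.div_eq_of_lt (hc 0), zero_add]
      rw [tail, ih fun k => hc (k + 1)]
      simp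

/-- `pack` of a constant vector, in the closed form of the geometric series. -/
def constSlots (w N c : ℕ) : ℕ := c * ((2 ^ (w * N) - 1) / (2 ^ w - 1))

theorem constSlots_eq_pack {w : ℕ} (hw : 0 < w) (N c : ℕ) :
    constSlots w N c = pack w N fun _ => c := by
  simp only [constSlots, pack, pow_mul, ← mul_sum]
  rw [Nat.geomSum_eq (Nat.le_self_pow hw.ne' 2)]

theorem slot_constSlots {w c : ℕ} (hw : 0 < w) (hc : c < 2 ^ w) (N i : ℕ) :
    slot w (constSlots w N c) i = if i < N then c else 0 := by
  rw [constSlots_eq_pack hw, slot_pack fun _ => hc]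

/-- Shift each of the first `N` slots right by `k` bits, i.e. divide it by `2^k`. -/
def shiftSlots (w N k T : ℕ) : ℕ := (T >>> k) &&& constSlots w N (2 ^ (w - k) - 1)

theorem slot_shiftRight_land {w k : ℕ} (hk : k ≤ w) (T i : ℕ) :
    slot w (T >>> k) i &&& (2 ^ (w - k) - 1) = slot w T i / 2 ^ k := by
  rw [Nat.and_two_pow_sub_one_eq_mod]
  refine Nat.eq_of_testBit_eq fun j => ?_
  simp only [slot, Nat.testBit_mod_two_pow, Nat.testBit_div_two_pow, Nat.testBit_shiftRight]
  have hsum : k + (j + w * i) = j + k + w * i := by ring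
  by_cases hj : j < w - k
  · simp [hj, hsum, show j < w by omega, show j + k < w by omega]
  · simp [hj, show ¬ j + k < w by omega]

theorem slot_shiftSlots {w k : ℕ} (hw : 0 < w) (hk : k ≤ w) (N T i : ℕ) :
    slot w (shiftSlots w N k T) i = if i < N then slot w T i / 2 ^ k else 0 := by
  have hpow : 2 ^ (w - k) ≤ 2 ^ w := Nat.pow_le_pow_right two_pos (Nat.sub_le w k)
  have hpos : 0 < 2 ^ (w - k) := by positivity
  rw [shiftSlots, slot_land, slot_constSlots hw (by omega)]
  split_ifs
  · exact slot_shiftRight_land hk T i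
  · exact Nat.and_zero _

/-- Whether the first `N` slots are smaller than `2^m`. -/
def slotsLT (w N m T : ℕ) : Bool := Nat.beq (shiftSlots w N m T) 0

theorem slot_lt_of_slotsLT {w N m T : ℕ} (hw : 0 < w) (hm : m ≤ w) (h : slotsLT w N m T = true)
    {i : ℕ} (hi : i < N) : slot w T i < 2 ^ m := by
  have hshift := slot_shiftSlots hw hm N T i
  rw [Nat.eq_of_beq_eq_true h, slot_zero_left, if_pos hi] at hshift
  exact (Nat.div_eq_zero_iff_lt (by positivity)).mp hshift.symm

/-- Whether the first `N` slots are smaller than `2^m` and at most `b`: adding `2^m - 1 - b` must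
not carry into bit `m`. -/
def slotsLE (w N m b T : ℕ) : Bool :=
  Nat.blt b (2 ^ m) && slotsLT w N m T && slotsLT w N m (T + constSlots w N (2 ^ m - 1 - b))

theorem slot_le_of_slotsLE {w N m b T : ℕ} (hm : m < w) (h : slotsLE w N m b T = true)
    {i : ℕ} (hi : i < N) : slot w T i ≤ b := by
  have hw : 0 < w := by omega
  rw [slotsLE, Bool.and_eq_true, Bool.and_eq_true] at h
  obtain ⟨⟨hb, hT⟩, hsum⟩ := h
  have hb : b < 2 ^ m := Nat.le_of_ble_eq_true hb
  have hT : ∀ i < N, slot w T i < 2 ^ m := fun i hi => slot_lt_of_slotsLT hw hm.le hT hi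
  have hpow : 2 ^ m * 2 ≤ 2 ^ w := by
    rw [← pow_succ]
    exact Nat.pow_le_pow_right two_pos hm
  have hconst := slot_constSlots (w := w) (c := 2 ^ m - 1 - b) hw (by omega) N
  have hlt := slot_lt_of_slotsLT hw hm.le hsum hi
  rw [slot_add, hconst, if_pos hi] at hlt
  · omega
  · intro j
    rw [hconst]
    split_ifs with hj
    · have := hT j hj
      omega
    · simpa using slot_lt w T j

theorem slot_slot {w n : ℕ} (hn : 0 < n) (T i : ℕ) :
    slot w (slot (w * n) T (i / n)) (i % n) = slot w T i := by
  refine Nat.eq_of_testBit_eq fun j => ?_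
  simp only [slot, Nat.testBit_mod_two_pow, Nat.testBit_div_two_pow]
  by_cases hj : j < w
  · have hlt : j + w * (i % n) < w * n := by
      have := Nat.mul_le_mul_left w (Nat.succ_le_of_lt (Nat.mod_lt i hn))
      rw [Nat.mul_succ] at this
      omega
    have hindex : j + w * (i % n) + w * n * (i / n) = j + w * i := by
      conv_rhs => rw [← Nat.mod_add_div i n]
      ring
    simp [hj, hlt, hindex]
  · simp [hj]

/-- The mask whose slot `i` is full when `i < s * n * H` and the base-`n` digit `i / s % n` is
`0`: its coarse slots, of width `w * (s * n)`, all start with `s` full slots. -/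
def digitMask (w s n H : ℕ) : ℕ := constSlots (w * (s * n)) H (2 ^ (w * s) - 1)

theorem slot_two_pow_sub_one (w s i : ℕ) :
    slot w (2 ^ (w * s) - 1) i = if i < s then 2 ^ w - 1 else 0 := by
  refine Nat.eq_of_testBit_eq fun j => ?_
  have hlt : j < w → (j + w * i < w * s ↔ i < s) := fun hj =>
    ⟨fun h => by
      by_contra hs
      have := Nat.mul_le_mul_left w (not_lt.mp hs)
      omega,
    fun h => by
      have := Nat.mul_le_mul_left w (Nat.succ_le_of_lt h)
      rw [Nat.mul_succ] at this
      omega⟩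
  simp only [slot, Nat.testBit_mod_two_pow, Nat.testBit_div_two_pow, Nat.testBit_two_pow_sub_one]
  split_ifs with h <;> by_cases hj : j < w <;>
    simp [hj, hlt, h, Nat.testBit_two_pow_sub_one]

theorem slot_digitMask {w s n : ℕ} (hw : 0 < w) (hs : 0 < s) (hn : 0 < n) (H i : ℕ) :
    slot w (digitMask w s n H) i = if i / s % n = 0 ∧ i < s * n * H then 2 ^ w - 1 else 0 := by
  have hsn : 0 < s * n := Nat.mul_pos hs hn
  have hc : 2 ^ (w * s) - 1 < 2 ^ (w * (s * n)) :=
    (Nat.sub_lt (by positivity) one_pos).trans_le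
      (Nat.pow_le_pow_right two_pos (Nat.mul_le_mul_left w (Nat.le_mul_of_pos_right s hn)))
  have hdigit : i % (s * n) < s ↔ i / s % n = 0 := by
    rw [Nat.mod_mul]
    have := Nat.mod_lt i hs
    constructor
    · intro h
      by_contra h0
      have := Nat.le_mul_of_pos_right s (Nat.pos_of_ne_zero h0)
      omega
    · intro h
      simpa [h] using this
  rw [← slot_slot hsn, digitMask, slot_constSlots (Nat.mul_pos hw hsn) hc]
  simp only [Nat.div_lt_iff_lt_mul hsn, mul_comm H]
  split_ifs with h1 h2 h2
  · rw [slot_two_pow_sub_one, if_pos (hdigit.mpr h2.1)]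
  · rw [slot_two_pow_sub_one, if_neg fun h => h2 ⟨hdigit.mp h, h1⟩]
  · exact absurd h2.2 h1
  · exact slot_zero_left _ _

theorem slot_digitMask_shiftLeft {w s n j : ℕ} (hw : 0 < w) (hs : 0 < s) (hj : j < n) (H i : ℕ) :
    slot w (digitMask w s n H <<< (w * (s * j))) i
      = if i / s % n = j ∧ i < s * n * H then 2 ^ w - 1 else 0 := by
  have hn : 0 < n := by omega
  have hbound : ∀ i, i < s * n * H ↔ i / s / n < H := fun i => by
    rw [Nat.div_div_eq_div_mul, Nat.div_lt_iff_lt_mul (Nat.mul_pos hs hn), mul_comm H]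
  simp only [hbound]
  rcases lt_or_ge i (s * j) with hi | hi
  · rw [slot_shiftLeft_of_lt w _ hi, if_neg]
    have hlt : i / s < j := Nat.div_lt_of_lt_mul hi
    rw [Nat.mod_eq_of_lt (hlt.trans hj)]
    omega
  · obtain ⟨i, rfl⟩ := Nat.exists_eq_add_of_le' hi
    rw [slot_shiftLeft_add, slot_digitMask hw hs hn, Nat.add_mul_div_left _ _ hs]
    simp only [hbound]
    refine if_congr ⟨fun ⟨h0, hH⟩ => ?_, fun ⟨h0, hH⟩ => ?_⟩ rfl rfl
    · obtain ⟨q, hq⟩ := Nat.dvd_of_mod_eq_zero h0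
      rw [hq, Nat.mul_div_cancel_left _ hn] at hH
      rw [hq, Nat.mul_add_mod, Nat.mul_add_div hn, Nat.mod_eq_of_lt hj, Nat.div_eq_of_lt hj]
      exact ⟨rfl, hH⟩
    · have hdvd : i / s % n = 0 := by
        have hmod : i / s + j ≡ 0 + j [MOD n] := by
          rw [Nat.ModEq, h0, zero_add, Nat.mod_eq_of_lt hj]
        simpa [Nat.ModEq] using Nat.ModEq.add_right_cancel' j hmod
      exact ⟨hdvd, (Nat.div_le_div_right (Nat.le_add_right _ _)).trans_lt hH⟩

end Slots

/-! ### Tensor-product Bernstein form and its subdivision -/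

section Bernstein

/-- `t`-fold iteration of `f ↦ fun i ↦ f i + f (i + s)`, at `i`: up to the factor `2^t`, level `t`
of de Casteljau's triangle. -/
def binomialSum {R : Type*} [Semiring R] (s t : ℕ) (f : ℕ → R) (i : ℕ) : R :=
  ∑ k ∈ range (t + 1), (t.choose k : R) * f (i + s * k)

theorem binomialSum_succ {R : Type*} [Semiring R] (s t : ℕ) (f : ℕ → R) (i : ℕ) :
    binomialSum s (t + 1) f i = binomialSum s t (fun i => f i + f (i + s)) i := by
  simp only [binomialSum, mul_add, sum_add_distrib]
  rw [sum_choose_succ_mul (fun k _ => f (i + s * k)) t]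
  congr 1
  exact sum_congr rfl fun k _ => by rw [Nat.mul_succ, add_assoc]

theorem binomialSum_le (s t : ℕ) {f : ℕ → ℕ} {b : ℕ} (hf : ∀ i, f i ≤ b) (i : ℕ) :
    binomialSum s t f i ≤ 2 ^ t * b :=
  calc binomialSum s t f i ≤ ∑ k ∈ range (t + 1), t.choose k * b :=
        sum_le_sum fun k _ => Nat.mul_le_mul_left _ (hf _)
    _ = 2 ^ t * b := by rw [← sum_mul, Nat.sum_range_choose]

/-- The midpoint of `x` and the lower endpoint `0` or the upper endpoint `1` of the unit
interval. -/
noncomputable def halfway (upper : Bool) (x : ℝ) : ℝ := (x + bif upper then 1 else 0) / 2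

/-- The level of de Casteljau's triangle that holds coefficient `j` of the lower or upper half. -/
def halfLevel (upper : Bool) (d j : ℕ) : ℕ := bif upper then d - j else j

/-- The place, within its level of de Casteljau's triangle, of coefficient `j` of the lower or
upper half. -/
def halfStart (upper : Bool) (j : ℕ) : ℕ := bif upper then j else 0

theorem halfLevel_le (upper : Bool) {d j : ℕ} (h : j ≤ d) : halfLevel upper d j ≤ d := by
  cases upper <;> simp [halfLevel, h]

theorem two_pow_mul_bernstein_eval_div_two {d k : ℕ} (hk : k ≤ d) (x : ℝ) :
    2 ^ d * (bernsteinPolynomial ℝ d k).eval (x / 2)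
      = ∑ j ∈ range (d + 1), 2 ^ (d - j) * j.choose k * (bernsteinPolynomial ℝ d j).eval x := by
  obtain ⟨m, rfl⟩ := Nat.exists_eq_add_of_le hk
  have binomial : (2 * (1 - x / 2)) ^ m
      = ∑ i ∈ range (m + 1), x ^ i * (2 * (1 - x)) ^ (m - i) * m.choose i := by
    rw [← add_pow]
    ring
  have vanish : ∑ j ∈ range k, (2 : ℝ) ^ (k + m - j) * j.choose k
      * (bernsteinPolynomial ℝ (k + m) j).eval x = 0 :=
    sum_eq_zero fun j hj => by simp [Nat.choose_eq_zero_of_lt (mem_range.mp hj)]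
  rw [add_assoc, sum_range_add, vanish, zero_add]
  simp only [bernsteinPolynomial, Polynomial.eval_mul, Polynomial.eval_pow, Polynomial.eval_sub,
    Polynomial.eval_natCast, Polynomial.eval_X, Polynomial.eval_one, Nat.add_sub_cancel_left]
  calc (2 : ℝ) ^ (k + m) * ((k + m).choose k * (x / 2) ^ k * (1 - x / 2) ^ m)
      = (k + m).choose k * x ^ k * (2 * (1 - x / 2)) ^ m := by
        rw [pow_add, div_pow, mul_pow]
        field_simp
    _ = ∑ i ∈ range (m + 1), (k + m).choose k * m.choose i
          * (x ^ (k + i) * (2 * (1 - x)) ^ (m - i)) := by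
        rw [binomial, mul_sum]
        exact sum_congr rfl fun i _ => by ring
    _ = _ := sum_congr rfl fun i _ => by
        have trinomial := Nat.choose_mul (n := k + m) (Nat.le_add_right k i)
        rw [Nat.add_sub_cancel_left, Nat.add_sub_cancel_left] at trinomial
        have trinomial : ((k + m).choose (k + i) : ℝ) * (k + i).choose k
            = (k + m).choose k * m.choose i := mod_cast trinomial
        rw [← trinomial, Nat.add_sub_add_left, mul_pow]
        ring

theorem sum_mul_bernstein_eval_div_two (d : ℕ) (f : ℕ → ℝ) (x : ℝ) :
    2 ^ d * ∑ k ∈ range (d + 1), f k * (bernsteinPolynomial ℝ d k).eval (x / 2)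
      = ∑ j ∈ range (d + 1),
          2 ^ (d - j) * binomialSum 1 j f 0 * (bernsteinPolynomial ℝ d j).eval x := by
  have extend : ∀ j ∈ range (d + 1),
      binomialSum 1 j f 0 = ∑ k ∈ range (d + 1), (j.choose k : ℝ) * f k := fun j hj => by
    simp only [binomialSum, zero_add, one_mul]
    refine sum_subset (range_subset_range.mpr (mem_range.mp hj)) fun k _ hk => ?_
    rw [Nat.choose_eq_zero_of_lt (by simpa [Nat.lt_succ_iff] using hk), Nat.cast_zero, zero_mul]
  calc 2 ^ d * ∑ k ∈ range (d + 1), f k * (bernsteinPolynomial ℝ d k).eval (x / 2)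
      = ∑ k ∈ range (d + 1), ∑ j ∈ range (d + 1),
          f k * (2 ^ (d - j) * j.choose k * (bernsteinPolynomial ℝ d j).eval x) := by
        rw [mul_sum]
        refine sum_congr rfl fun k hk => ?_
        rw [← mul_sum,
          ← two_pow_mul_bernstein_eval_div_two (Nat.lt_succ_iff.mp (mem_range.mp hk))]
        ring
    _ = _ := by
        rw [sum_comm]
        refine sum_congr rfl fun j hj => ?_
        rw [extend j hj, mul_sum, sum_mul]
        exact sum_congr rfl fun k _ => by ring

theorem bernstein_eval_one_sub {d k : ℕ} (hk : k ≤ d) (x : ℝ) :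
    (bernsteinPolynomial ℝ d k).eval (1 - x) = (bernsteinPolynomial ℝ d (d - k)).eval x := by
  rw [← bernsteinPolynomial.flip ℝ d k hk]
  simp

theorem binomialSum_reflect {d t : ℕ} (ht : t ≤ d) (f : ℕ → ℝ) :
    binomialSum 1 t (fun k => f (d - k)) 0 = binomialSum 1 t f (d - t) := by
  simp only [binomialSum, zero_add, one_mul]
  rw [← sum_range_reflect]
  refine sum_congr rfl fun k hk => ?_
  have hk : k ≤ t := Nat.lt_succ_iff.mp (mem_range.mp hk)
  rw [Nat.add_sub_cancel, Nat.choose_symm hk, show d - (t - k) = d - t + k by omega]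

theorem sum_mul_bernstein_eval_halfway (upper : Bool) (d : ℕ) (f : ℕ → ℝ) (x : ℝ) :
    2 ^ d * ∑ k ∈ range (d + 1), f k * (bernsteinPolynomial ℝ d k).eval (halfway upper x)
      = ∑ j ∈ range (d + 1), 2 ^ (d - halfLevel upper d j)
          * binomialSum 1 (halfLevel upper d j) f (halfStart upper j)
          * (bernsteinPolynomial ℝ d j).eval x := by
  cases upper
  · simpa [halfway, halfLevel, halfStart] using sum_mul_bernstein_eval_div_two d f x
  · have flip : ∀ k ∈ range (d + 1), f k * (bernsteinPolynomial ℝ d k).eval ((x + 1) / 2)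
        = f k * (bernsteinPolynomial ℝ d (d - k)).eval ((1 - x) / 2) := fun k hk => by
      rw [← bernstein_eval_one_sub (Nat.lt_succ_iff.mp (mem_range.mp hk))]
      ring_nf
    have lower := sum_mul_bernstein_eval_div_two d (fun k => f (d - k)) (1 - x)
    rw [← sum_range_reflect, ← sum_range_reflect fun j => 2 ^ (d - j)
      * binomialSum 1 j (fun k => f (d - k)) 0 * (bernsteinPolynomial ℝ d j).eval (1 - x)] at lower
    simp only [halfway, halfLevel, halfStart, cond_true, Nat.add_sub_cancel] at lower ⊢
    rw [sum_congr rfl flip]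
    refine (congrArg _ (sum_congr rfl fun j hj => ?_)).trans
      (lower.trans (sum_congr rfl fun j hj => ?_)) <;>
      have hj : j ≤ d := Nat.lt_succ_iff.mp (mem_range.mp hj)
    · rw [Nat.sub_sub_self hj]
    · rw [binomialSum_reflect (Nat.sub_le d j), bernstein_eval_one_sub (Nat.sub_le d j),
        Nat.sub_sub_self hj]

/-- The polynomial of degree at most `d` in each of the variables `x a` whose coefficient on the
product of the Bernstein polynomials of indices `e a` is `c e`. -/
noncomputable def bernsteinForm {A : ℕ} (d : ℕ) (c : (Fin A → ℕ) → ℝ) (x : Fin A → ℝ) : ℝ :=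
  ∑ e ∈ Fintype.piFinset fun _ => range (d + 1),
    c e * ∏ a, (bernsteinPolynomial ℝ d (e a)).eval (x a)

variable {A d : ℕ} {x : Fin A → ℝ}

theorem bernsteinForm_add_mul (c c' : (Fin A → ℕ) → ℝ) (g : ℝ) :
    bernsteinForm d (fun e => c e + g * c' e) x
      = bernsteinForm d c x + g * bernsteinForm d c' x := by
  simp only [bernsteinForm, mul_sum, ← sum_add_distrib]
  exact sum_congr rfl fun e _ => by ring

theorem bernsteinForm_mul (g : ℝ) (c : (Fin A → ℕ) → ℝ) :
    bernsteinForm d (fun e => g * c e) x = g * bernsteinForm d c x := by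
  simp only [bernsteinForm, mul_sum, mul_assoc]

theorem bernsteinForm_const (b : ℝ) : bernsteinForm d (fun _ => b) x = b := by
  have unity : ∀ y : ℝ, ∑ k ∈ range (d + 1), (bernsteinPolynomial ℝ d k).eval y = 1 := fun y => by
    rw [← Polynomial.eval_finsetSum, bernsteinPolynomial.sum, Polynomial.eval_one]
  rw [bernsteinForm, ← mul_sum,
    ← prod_univ_sum (fun _ => range (d + 1)) fun a k => (bernsteinPolynomial ℝ d k).eval (x a)]
  simp [unity]

theorem bernstein_eval_nonneg (d k : ℕ) {y : ℝ} (hy : y ∈ Set.Icc 0 1) :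
    0 ≤ (bernsteinPolynomial ℝ d k).eval y := by
  have h0 : 0 ≤ y := hy.1
  have h1 : 0 ≤ 1 - y := sub_nonneg.mpr hy.2
  simp only [bernsteinPolynomial, Polynomial.eval_mul, Polynomial.eval_pow, Polynomial.eval_sub,
    Polynomial.eval_natCast, Polynomial.eval_X, Polynomial.eval_one]
  positivity

theorem bernsteinForm_mono (hx : ∀ a, x a ∈ Set.Icc 0 1) {c c' : (Fin A → ℕ) → ℝ}
    (h : ∀ e, (∀ a, e a ≤ d) → c e ≤ c' e) : bernsteinForm d c x ≤ bernsteinForm d c' x := by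
  refine sum_le_sum fun e he => mul_le_mul_of_nonneg_right (h e fun a => ?_)
    (prod_nonneg fun a _ => bernstein_eval_nonneg d (e a) (hx a))
  exact Nat.lt_succ_iff.mp (mem_range.mp (Fintype.mem_piFinset.mp he a))

theorem bernsteinForm_eq_sum_insertNth (c : (Fin (A + 1) → ℕ) → ℝ) (x : Fin (A + 1) → ℝ)
    (p : Fin (A + 1)) :
    bernsteinForm d c x = ∑ e ∈ Fintype.piFinset fun _ : Fin A => range (d + 1),
      (∑ k ∈ range (d + 1), c (p.insertNth k e) * (bernsteinPolynomial ℝ d k).eval (x p))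
        * ∏ i, (bernsteinPolynomial ℝ d (e i)).eval (x (p.succAbove i)) := by
  simp only [bernsteinForm, sum_mul]
  rw [← sum_product', eq_comm]
  refine sum_nbij' (fun q => p.insertNth q.2 q.1) (fun e => (p.removeNth e, e p)) ?_ ?_ ?_ ?_ ?_
  · intro q hq
    rw [mem_product, Fintype.mem_piFinset] at hq
    rw [Fintype.mem_piFinset, Fin.forall_iff_succAbove p]
    simpa only [Fin.insertNth_apply_same, Fin.insertNth_apply_succAbove] using ⟨hq.2, hq.1⟩
  · intro e he
    rw [Fintype.mem_piFinset] at he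
    rw [mem_product, Fintype.mem_piFinset]
    exact ⟨fun i => he _, he p⟩
  · intro q _
    simp
  · intro e _
    simp
  · intro q _
    rw [Fin.prod_univ_succAbove _ p]
    simp only [Fin.insertNth_apply_same, Fin.insertNth_apply_succAbove]
    ring

theorem two_pow_mul_bernsteinForm_halfway_le (hx : ∀ a, x a ∈ Set.Icc 0 1) (upper : Bool)
    (p : Fin A) {c c' : (Fin A → ℕ) → ℝ}
    (h : ∀ e, (∀ a, e a ≤ d) → 2 ^ (d - halfLevel upper d (e p))
      * binomialSum 1 (halfLevel upper d (e p)) (fun k => c (Function.update e p k))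
          (halfStart upper (e p)) ≤ c' e) :
    2 ^ d * bernsteinForm d c (Function.update x p (halfway upper (x p)))
      ≤ bernsteinForm d c' x := by
  obtain _ | A := A
  · exact p.elim0
  rw [bernsteinForm_eq_sum_insertNth c _ p, bernsteinForm_eq_sum_insertNth c' _ p, mul_sum]
  refine sum_le_sum fun e he => ?_
  simp only [Function.update_self, Function.update_of_ne (Fin.succAbove_ne p _)]
  rw [← mul_assoc, sum_mul_bernstein_eval_halfway upper d fun k => c (p.insertNth k e)]
  refine mul_le_mul_of_nonneg_right (sum_le_sum fun j hj => ?_)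
    (prod_nonneg fun i _ => bernstein_eval_nonneg d _ (hx _))
  refine mul_le_mul_of_nonneg_right ?_ (bernstein_eval_nonneg d j (hx p))
  have axis := h (p.insertNth j e) <| by
    rw [Fin.forall_iff_succAbove p]
    simpa only [Fin.insertNth_apply_same, Fin.insertNth_apply_succAbove, mem_range,
      Nat.lt_succ_iff] using And.intro hj (Fintype.mem_piFinset.mp he)
  simpa only [Fin.insertNth_apply_same, Fin.update_insertNth] using axis

end Bernstein

section PackedHalving

/-- The number with base-`n` digits `e a`, i.e. the exponent of the monomial `∏ a, X a ^ e a` under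
Kronecker's substitution `X a = X ^ n ^ a`. -/
def kroneckerIndex {A : ℕ} (n : ℕ) (e : Fin A → ℕ) : ℕ := ∑ a, e a * n ^ (a : ℕ)

variable {A n : ℕ} {e : Fin A → ℕ}

theorem kroneckerIndex_lt (he : ∀ a, e a < n) : kroneckerIndex n e < n ^ A :=
  (finFunctionFinEquiv fun a => (⟨e a, he a⟩ : Fin n)).isLt

theorem kroneckerIndex_digit (he : ∀ a, e a < n) (p : Fin A) :
    kroneckerIndex n e / n ^ (p : ℕ) % n = e p :=
  congrArg Fin.val <| congrFun
    (finFunctionFinEquiv.symm_apply_apply fun a => (⟨e a, he a⟩ : Fin n)) p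

theorem kroneckerIndex_update (p : Fin A) (k : ℕ) :
    kroneckerIndex n (Function.update e p k)
      = kroneckerIndex n (Function.update e p 0) + n ^ (p : ℕ) * k := by
  simp only [kroneckerIndex, ← add_sum_erase univ _ (mem_univ p), Function.update_self]
  rw [zero_mul, zero_add, add_comm, mul_comm k]
  congr 1
  refine sum_congr rfl fun a ha => ?_
  rw [Function.update_of_ne (ne_of_mem_erase ha), Function.update_of_ne (ne_of_mem_erase ha)]

/-- The rows of de Casteljau's triangle of `W`, whose entries are `s` slots apart: of the `k`-th
row from the bottom the slots chosen by `select k` are kept, with weight `2^k`. -/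
def casteljau (w s : ℕ) (select : ℕ → ℕ → ℕ) : ℕ → ℕ → ℕ
  | 0, W => select 0 W
  | k + 1, W => (select (k + 1) W <<< (k + 1)) + casteljau w s select k (W + W >>> (w * s))

theorem slot_add_shiftRight {w W b : ℕ} (hW : ∀ i, slot w W i ≤ b) (hb : 2 * b < 2 ^ w) (s i : ℕ) :
    slot w (W + W >>> (w * s)) i = slot w W i + slot w W (i + s) := by
  rw [slot_add, slot_shiftRight]
  intro j
  rw [slot_shiftRight]
  linarith [hW j, hW (j + s)]

theorem slot_casteljau {w s d : ℕ} {select : ℕ → ℕ → ℕ} {row source : ℕ → ℕ} {P : ℕ → Prop}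
    [DecidablePred P]
    (hselect : ∀ k ≤ d, ∀ W i, slot w (select k W) i
      = if P i ∧ row i = k then slot w W (source i) else 0)
    {k : ℕ} (hk : k ≤ d) {W b : ℕ} (hW : ∀ i, slot w W i ≤ b) (hb : 2 ^ k * b < 2 ^ w) (i : ℕ) :
    slot w (casteljau w s select k W) i = if P i ∧ row i ≤ k then
      2 ^ row i * binomialSum s (k - row i) (slot w W) (source i) else 0 := by
  induction k generalizing W b i with
  | zero =>
    rw [casteljau, hselect 0 hk]
    simp only [Nat.le_zero]
    split_ifs with h
    · simp [h.2, binomialSum]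
    · rfl
  | succ k ih =>
    have hb2 : 2 * b < 2 ^ w := by
      refine lt_of_le_of_lt (Nat.mul_le_mul_right b ?_) hb
      exact Nat.le_self_pow k.succ_ne_zero 2
    have hstep := slot_add_shiftRight hW hb2 s
    have hrest := ih (by omega) (W := W + W >>> (w * s)) (b := 2 * b)
      (fun i => by linarith [hstep i, hW i, hW (i + s)]) (lt_of_eq_of_lt (by ring) hb)
    have hkept : ∀ i, slot w (select (k + 1) W <<< (k + 1)) i
        = if P i ∧ row i = k + 1 then slot w W (source i) * 2 ^ (k + 1) else 0 := fun i => by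
      rw [Nat.shiftLeft_eq, slot_mul, hselect _ hk, ite_mul, zero_mul]
      intro j
      rw [hselect _ hk, ite_mul, zero_mul, mul_comm]
      split_ifs
      · exact (Nat.mul_le_mul_left _ (hW _)).trans_lt hb
      · positivity
    have hdisjoint : ∀ i, row i = k + 1 → ¬ (P i ∧ row i ≤ k) := fun i h h' => by omega
    rw [casteljau, slot_add, hkept, hrest]
    · by_cases hi : row i = k + 1
      · rw [if_neg (hdisjoint i hi), add_zero]
        simp [hi, binomialSum, mul_comm]
      · rw [if_neg fun h => hi h.2, zero_add]
        refine ite_congr (by rw [show row i ≤ k ↔ row i ≤ k + 1 by omega]) (fun h => ?_)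
          fun _ => rfl
        rw [Nat.succ_sub (by omega), binomialSum_succ, funext hstep]
    · intro j
      by_cases hj : row j = k + 1
      · rw [hrest, if_neg (hdisjoint j hj), add_zero]
        exact slot_lt _ _ _
      · rw [hkept, if_neg fun h => hj h.2, zero_add]
        exact slot_lt _ _ _

/-- Of the row `k` from the bottom of de Casteljau's triangle, the entry that becomes a coefficient
of the lower or upper half, moved to the slots of that coefficient. -/
def selectHalf (w s d M : ℕ) (upper : Bool) (k W : ℕ) : ℕ :=
  let j := halfLevel upper d (d - k)
  (W <<< (w * (s * (j - halfStart upper j)))) &&& (M <<< (w * (s * j)))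

theorem slot_selectHalf {w s d : ℕ} (hw : 0 < w) (hs : 0 < s) (H : ℕ) (upper : Bool) {k : ℕ}
    (hk : k ≤ d) (W i : ℕ) :
    slot w (selectHalf w s d (digitMask w s (d + 1) H) upper k W) i
      = if i < s * (d + 1) * H ∧ d - halfLevel upper d (i / s % (d + 1)) = k then
          slot w W (i - s * (i / s % (d + 1) - halfStart upper (i / s % (d + 1)))) else 0 := by
  have hj : halfLevel upper d (d - k) < d + 1 := by cases upper <;> simp [halfLevel]
  have hdigit : i / s % (d + 1) < d + 1 := Nat.mod_lt _ (Nat.succ_pos d)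
  have hrow : d - halfLevel upper d (i / s % (d + 1)) = k
      ↔ i / s % (d + 1) = halfLevel upper d (d - k) := by
    cases upper <;> simp only [halfLevel, cond_true, cond_false] <;> omega
  rw [selectHalf, slot_land, slot_digitMask_shiftLeft hw hs hj]
  simp only [hrow, and_comm (a := i < _)]
  split_ifs with h
  · rw [land_two_pow_sub_one_of_lt (slot_lt _ _ _), ← h.1]
    set shift := s * (i / s % (d + 1) - halfStart upper (i / s % (d + 1)))
    have hle : shift ≤ i := calc
      shift ≤ s * (i / s) := Nat.mul_le_mul_left _ ((Nat.sub_le _ _).trans (Nat.mod_le _ _))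
      _ ≤ i := Nat.mul_div_le i s
    conv_lhs => rw [← Nat.sub_add_cancel hle]
    exact slot_shiftLeft_add _ _ _ _
  · exact Nat.and_zero _

/-- Divide the first `N` slots by `2^d`, rounding up. -/
def ceilShiftSlots (w N d X : ℕ) : ℕ := shiftSlots w N d (X + constSlots w N (2 ^ d - 1))

theorem slot_ceilShiftSlots {w N d X m : ℕ} (hw : 0 < w) (hm : m + d ≤ w)
    (hX : ∀ i, slot w X i ≤ 2 ^ d * (2 ^ m - 1)) (i : ℕ) :
    slot w (ceilShiftSlots w N d X) i
      = if i < N then (slot w X i + (2 ^ d - 1)) / 2 ^ d else 0 := by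
  have hd : 0 < 2 ^ d := by positivity
  have hmd : 2 ^ d * (2 ^ m - 1) + 2 ^ d ≤ 2 ^ w := by
    rw [← Nat.mul_succ, Nat.succ_eq_add_one, Nat.sub_add_cancel Nat.one_le_two_pow, ← pow_add]
    exact Nat.pow_le_pow_right two_pos (by omega)
  have hconst := slot_constSlots (w := w) (c := 2 ^ d - 1) hw (by omega) N
  rw [ceilShiftSlots, slot_shiftSlots hw (by omega)]
  refine ite_congr rfl (fun hi => ?_) fun _ => rfl
  rw [slot_add, hconst, if_pos hi]
  intro j
  rw [hconst]
  have := hX j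
  split_ifs <;> omega

/-- The packed Bernstein coefficients, in degree `d` and multiplied by `2 ^ d`, of the restriction
of a polynomial to the lower or upper half of the unit cube in direction `p`. -/
def scaledHalf (w d : ℕ) (p : Fin A) (upper : Bool) (T : ℕ) : ℕ :=
  let s := (d + 1) ^ (p : ℕ)
  casteljau w s (selectHalf w s d (digitMask w s (d + 1) ((d + 1) ^ (A - 1 - p))) upper) d T

/-- The packed Bernstein coefficients, in degree `d`, of the restriction of a polynomial to the
lower or upper half of the unit cube in direction `p`, rounded up. -/
def halve (w d : ℕ) (p : Fin A) (upper : Bool) (T : ℕ) : ℕ :=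
  ceilShiftSlots w ((d + 1) ^ A) d (scaledHalf w d p upper T)

variable {w d m T : ℕ}

theorem slot_scaledHalf (hw : 0 < w) (hm : m + d ≤ w) (hT : ∀ i, slot w T i < 2 ^ m)
    (p : Fin A) (upper : Bool) (i : ℕ) :
    slot w (scaledHalf w d p upper T) i
      = if i < (d + 1) ^ A then
          let j := i / (d + 1) ^ (p : ℕ) % (d + 1)
          2 ^ (d - halfLevel upper d j) * binomialSum ((d + 1) ^ (p : ℕ)) (halfLevel upper d j)
            (slot w T) (i - (d + 1) ^ (p : ℕ) * (j - halfStart upper j)) else 0 := by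
  have hdecomp : (d + 1) ^ (p : ℕ) * (d + 1) * (d + 1) ^ (A - 1 - p) = (d + 1) ^ A := by
    rw [← pow_succ, ← pow_add]
    congr 1
    omega
  have hb : 2 ^ d * (2 ^ m - 1) < 2 ^ w :=
    calc 2 ^ d * (2 ^ m - 1) < 2 ^ d * 2 ^ m :=
          Nat.mul_lt_mul_of_pos_left (Nat.sub_lt (by positivity) one_pos) (by positivity)
      _ ≤ 2 ^ w := by
        rw [← pow_add]
        exact Nat.pow_le_pow_right two_pos (by omega)
  rw [scaledHalf, slot_casteljau (fun k hk => slot_selectHalf hw (by positivity) _ upper hk) le_rfl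
    (fun i => Nat.le_sub_one_of_lt (hT i)) hb, hdecomp]
  simp only [Nat.sub_le, and_true]
  refine ite_congr rfl (fun _ => ?_) fun _ => rfl
  rw [Nat.sub_sub_self (halfLevel_le upper (Nat.lt_succ_iff.mp (Nat.mod_lt _ d.succ_pos)))]

theorem slot_scaledHalf_le (hw : 0 < w) (hm : m + d ≤ w) (hT : ∀ i, slot w T i < 2 ^ m)
    (p : Fin A) (upper : Bool) (i : ℕ) :
    slot w (scaledHalf w d p upper T) i ≤ 2 ^ d * (2 ^ m - 1) := by
  rw [slot_scaledHalf hw hm hT]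
  split_ifs
  · have hlevel : halfLevel upper d (i / (d + 1) ^ (p : ℕ) % (d + 1)) ≤ d :=
      halfLevel_le upper (Nat.lt_succ_iff.mp (Nat.mod_lt _ d.succ_pos))
    calc _ ≤ 2 ^ (d - _) * (2 ^ _ * (2 ^ m - 1)) :=
          Nat.mul_le_mul_left _ (binomialSum_le _ _ (fun i => Nat.le_sub_one_of_lt (hT i)) _)
      _ = 2 ^ d * (2 ^ m - 1) := by rw [← mul_assoc, ← pow_add, Nat.sub_add_cancel hlevel]
  · exact Nat.zero_le _

theorem slot_halve_lt (hw : 0 < w) (hm : m + d ≤ w) (hT : ∀ i, slot w T i < 2 ^ m)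
    (p : Fin A) (upper : Bool) (i : ℕ) : slot w (halve w d p upper T) i < 2 ^ m := by
  have hle := slot_scaledHalf_le hw hm hT p upper
  have hd : 0 < 2 ^ d := by positivity
  have hm1 : 2 ^ d * (2 ^ m - 1) + 2 ^ d = 2 ^ m * 2 ^ d := by
    rw [← Nat.mul_succ, Nat.succ_eq_add_one, Nat.sub_add_cancel Nat.one_le_two_pow, mul_comm]
  rw [halve, slot_ceilShiftSlots hw hm hle]
  split_ifs
  · rw [Nat.div_lt_iff_lt_mul hd]
    have := hle i
    omega
  · positivity

theorem le_two_pow_mul_slot_halve (hw : 0 < w) (hm : m + d ≤ w) (hT : ∀ i, slot w T i < 2 ^ m)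
    (p : Fin A) (upper : Bool) {e : Fin A → ℕ} (he : ∀ a, e a ≤ d) :
    2 ^ (d - halfLevel upper d (e p)) * binomialSum 1 (halfLevel upper d (e p))
        (fun k => slot w T (kroneckerIndex (d + 1) (Function.update e p k)))
        (halfStart upper (e p))
      ≤ 2 ^ d * slot w (halve w d p upper T) (kroneckerIndex (d + 1) e) := by
  have he : ∀ a, e a < d + 1 := fun a => Nat.lt_succ_of_le (he a)
  have hindex := kroneckerIndex_update (n := d + 1) (e := e) p
  have hstart : kroneckerIndex (d + 1) e - (d + 1) ^ (p : ℕ) * (e p - halfStart upper (e p))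
      = kroneckerIndex (d + 1) (Function.update e p (halfStart upper (e p))) := by
    have hle : halfStart upper (e p) ≤ e p := by cases upper <;> simp [halfStart]
    have hself := hindex (e p)
    rw [Function.update_eq_self] at hself
    rw [hself, hindex (halfStart upper (e p)), Nat.mul_sub]
    have := Nat.mul_le_mul_left ((d + 1) ^ (p : ℕ)) hle
    omega
  have hsum : binomialSum 1 (halfLevel upper d (e p))
        (fun k => slot w T (kroneckerIndex (d + 1) (Function.update e p k))) (halfStart upper (e p))
      = binomialSum ((d + 1) ^ (p : ℕ)) (halfLevel upper d (e p)) (slot w T)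
        (kroneckerIndex (d + 1) (Function.update e p (halfStart upper (e p)))) :=
    sum_congr rfl fun k _ => by
      rw [hindex (halfStart upper (e p)), one_mul]
      beta_reduce
      rw [hindex, mul_add, add_assoc]
  have hslot := slot_scaledHalf hw hm hT p upper (kroneckerIndex (d + 1) e)
  rw [if_pos (kroneckerIndex_lt he)] at hslot
  simp only [kroneckerIndex_digit he p, hstart] at hslot
  rw [hsum, ← hslot, halve,
    slot_ceilShiftSlots hw hm (slot_scaledHalf_le hw hm hT p upper),
    if_pos (kroneckerIndex_lt he)]
  have hceil := Nat.lt_div_mul_add (a := slot w (scaledHalf w d p upper T)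
    (kroneckerIndex (d + 1) e) + (2 ^ d - 1)) (Nat.two_pow_pos d)
  rw [mul_comm] at hceil
  omega

/-- The polynomial whose Bernstein coefficients in degree `d` are the slots of `T`. -/
noncomputable def packedForm (w d T : ℕ) (x : Fin A → ℝ) : ℝ :=
  bernsteinForm d (fun e => (slot w T (kroneckerIndex (d + 1) e) : ℝ)) x

theorem packedForm_le_halve (hw : 0 < w) (hm : m + d ≤ w) (hT : ∀ i, slot w T i < 2 ^ m)
    {x : Fin A → ℝ} (hx : ∀ a, x a ∈ Set.Icc 0 1) (p : Fin A) (upper : Bool) :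
    packedForm w d T (Function.update x p (halfway upper (x p)))
      ≤ packedForm w d (halve w d p upper T) x := by
  have hscaled := two_pow_mul_bernsteinForm_halfway_le hx upper p
    (c := fun e => (slot w T (kroneckerIndex (d + 1) e) : ℝ))
    (c' := fun e => 2 ^ d * (slot w (halve w d p upper T) (kroneckerIndex (d + 1) e) : ℝ))
    fun e he => by
      have hslot := le_two_pow_mul_slot_halve hw hm hT p upper he
      simp only [binomialSum] at hslot ⊢
      exact_mod_cast hslot
  rw [bernsteinForm_mul] at hscaled
  exact le_of_mul_le_mul_left hscaled (by positivity)

theorem packedForm_le {b : ℕ} (hT : ∀ i < (d + 1) ^ A, slot w T i ≤ b) {x : Fin A → ℝ}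
    (hx : ∀ a, x a ∈ Set.Icc 0 1) : packedForm w d T x ≤ b := by
  rw [← bernsteinForm_const (d := d) (x := x) (b : ℝ)]
  exact bernsteinForm_mono hx fun e he =>
    mod_cast hT _ (kroneckerIndex_lt fun a => Nat.lt_succ_of_le (he a))

end PackedHalving

/-! ### Certificates by subdivision -/

section Subdivision

/-- The box `∏ a, [corner a, corner a + 2 ^ level a]`, one of the dyadic parts of a large cube. -/
structure Cell (A : ℕ) where
  corner : Fin A → ℕ
  level : Fin A → ℕ

namespace Cell

variable {A : ℕ}

/-- The lower or upper half of a cell in direction `p`. -/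
def half (C : Cell A) (p : Fin A) (upper : Bool) : Cell A where
  corner := Function.update C.corner p
    (bif upper then C.corner p + 2 ^ (C.level p - 1) else C.corner p)
  level := Function.update C.level p (C.level p - 1)

/-- The point of a cell with relative position `x` in the unit cube. -/
noncomputable def point (C : Cell A) (x : Fin A → ℝ) (a : Fin A) : ℝ :=
  C.corner a + 2 ^ C.level a * x a

theorem point_half (C : Cell A) {p : Fin A} (hp : 0 < C.level p) (upper : Bool) (x : Fin A → ℝ) :
    (C.half p upper).point x = C.point (Function.update x p (halfway upper (x p))) := by
  ext a
  rcases eq_or_ne a p with rfl | ha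
  · obtain ⟨l, hl⟩ := Nat.exists_eq_succ_of_ne_zero hp.ne'
    cases upper <;> simp [point, half, halfway, hl, pow_succ] <;> ring
  · simp [point, half, Function.update_of_ne ha]

/-- The point of `C` at `x` has nondecreasing coordinates. A point shared by adjacent cells is
counted in the lower one only, so `x a = 0` is excluded unless `C` lies at the boundary. -/
def Ordered (C : Cell A) (x : Fin A → ℝ) : Prop :=
  Monotone (C.point x) ∧ ∀ a, C.corner a ≠ 0 → 0 < x a

/-- The cube of side `2 ^ n`. -/
def root (A n : ℕ) : Cell A := ⟨fun _ => 0, fun _ => n⟩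

theorem ordered_root {n : ℕ} {x : Fin A → ℝ} (hx : Monotone x) : (root A n).Ordered x := by
  refine ⟨fun a b hab => ?_, fun a ha => absurd rfl ha⟩
  simpa [point, root] using hx hab

theorem Ordered.half_lower {C : Cell A} {x : Fin A → ℝ} (h : C.Ordered x) {p : Fin A}
    (hp : 0 < C.level p) : (C.half p false).Ordered (Function.update x p (2 * x p)) := by
  refine ⟨?_, fun a ha => ?_⟩
  · simpa [point_half C hp, halfway] using h.1
  · rcases eq_or_ne a p with rfl | hap
    · have := h.2 a (by simpa [half] using ha)
      simpa using this
    · simpa [hap] using h.2 a (by simpa [half, hap] using ha)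

theorem Ordered.half_upper {C : Cell A} {x : Fin A → ℝ} (h : C.Ordered x) {p : Fin A}
    (hp : 0 < C.level p) (hx : 1 / 2 < x p) :
    (C.half p true).Ordered (Function.update x p (2 * x p - 1)) := by
  refine ⟨?_, fun a ha => ?_⟩
  · simpa [point_half C hp, halfway] using h.1
  · rcases eq_or_ne a p with rfl | hap
    · rw [Function.update_self]
      linarith
    · simpa [hap] using h.2 a (by simpa [half, hap] using ha)

theorem not_ordered {C : Cell A} {a b : Fin A} (hab : a < b)
    (h : C.corner b + 2 ^ C.level b ≤ C.corner a) {x : Fin A → ℝ} (hx : x b ≤ 1) :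
    ¬ C.Ordered x := by
  rintro ⟨hmono, hpos⟩
  have hle : (C.corner a : ℝ) + 2 ^ C.level a * x a ≤ C.corner b + 2 ^ C.level b * x b :=
    hmono hab.le
  have hb : (2 : ℝ) ^ C.level b * x b ≤ 2 ^ C.level b :=
    mul_le_of_le_one_right (by positivity) hx
  have ha : 0 < 2 ^ C.level a * x a :=
    mul_pos (by positivity) (hpos a (Nat.ne_of_gt (lt_of_lt_of_le (by positivity) h)))
  have h : (C.corner b : ℝ) + 2 ^ C.level b ≤ C.corner a := mod_cast h
  linarith

end Cell

/-- A certificate that `T ≤ off` at the points of the unit cube with nondecreasing coordinates and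
`offD ≤ D`: either `T + g * D ≤ off + g * offD` on the whole cell (`bound g`), or coordinate `a < b`
exceeds coordinate `b` on the whole cell (`disordered a b`), or the cell is split in two in
direction `p`. -/
inductive SubdivTree (A : ℕ)
  | bound (g : ℕ)
  | disordered (a b : Fin A)
  | split (p : Fin A) (lower upper : SubdivTree A)

namespace SubdivTree

variable {A : ℕ}

/-- Run a certificate on the packed Bernstein coefficients `T` and `D` of the restrictions to the
cell `C`. The bit lengths `m` and `md` bound the entries of `T` and `D`. -/
def check (w d m md off offD : ℕ) : SubdivTree A → ℕ → ℕ → Cell A → Bool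
  | bound g, T, D, _ => Nat.ble (g * 2 ^ md + 2 ^ m) (2 ^ w) &&
      slotsLE w ((d + 1) ^ A) m (off + g * offD) (T + D * g)
  | disordered a b, _, _, C => Nat.blt a b && Nat.ble (C.corner b + 2 ^ C.level b) (C.corner a)
  | split p l r, T, D, C => Nat.blt 0 (C.level p) &&
      check w d m md off offD l (halve w d p false T) (halve w d p false D) (C.half p false) &&
      check w d m md off offD r (halve w d p true T) (halve w d p true D) (C.half p true)

variable {w d m md off offD T D : ℕ} {x : Fin A → ℝ}

theorem packedForm_le_of_slotsLE (hmw : m < w) (hT : ∀ i, slot w T i < 2 ^ m)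
    (hD : ∀ i, slot w D i < 2 ^ md) {g : ℕ} (hg : g * 2 ^ md + 2 ^ m ≤ 2 ^ w)
    (h : slotsLE w ((d + 1) ^ A) m (off + g * offD) (T + D * g) = true)
    (hx : ∀ a, x a ∈ Set.Icc 0 1) (hDx : offD ≤ packedForm w d D x) :
    packedForm w d T x ≤ off := by
  have hDg : ∀ i, slot w D i * g ≤ g * 2 ^ md := fun i => by
    rw [mul_comm]
    exact Nat.mul_le_mul_left g (hD i).le
  have hmul : ∀ i, slot w (D * g) i = slot w D i * g :=
    slot_mul fun i => by linarith [hDg i, Nat.two_pow_pos m]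
  have hadd : ∀ i, slot w (T + D * g) i = slot w T i + g * slot w D i := fun i => by
    rw [slot_add, hmul, mul_comm g]
    intro j
    rw [hmul]
    linarith [hDg j, hT j]
  have hle := packedForm_le (w := w) (fun i hi => slot_le_of_slotsLE hmw h hi) hx
  have hsum : packedForm w d (T + D * g) x = packedForm w d T x + g * packedForm w d D x := by
    simp only [packedForm, hadd, Nat.cast_add, Nat.cast_mul]
    exact bernsteinForm_add_mul _ _ _
  rw [hsum, Nat.cast_add, Nat.cast_mul] at hle
  nlinarith [(Nat.cast_nonneg g : (0 : ℝ) ≤ g)]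

theorem packedForm_le_of_check (hm : m + d ≤ w) (hmd : md + d ≤ w) (hmw : m < w)
    {t : SubdivTree A} (hT : ∀ i, slot w T i < 2 ^ m) (hD : ∀ i, slot w D i < 2 ^ md) {C : Cell A}
    (h : t.check w d m md off offD T D C = true) (hx : ∀ a, x a ∈ Set.Icc 0 1)
    (hC : C.Ordered x) (hDx : offD ≤ packedForm w d D x) : packedForm w d T x ≤ off := by
  have hw : 0 < w := by omega
  induction t generalizing T D C x with
  | bound g =>
    rw [check, Bool.and_eq_true] at h
    exact packedForm_le_of_slotsLE hmw hT hD (Nat.le_of_ble_eq_true h.1) h.2 hx hDx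
  | disordered a b =>
    rw [check, Bool.and_eq_true] at h
    exact (Cell.not_ordered (Nat.le_of_ble_eq_true h.1) (Nat.le_of_ble_eq_true h.2) (hx b).2
      hC).elim
  | split p l r ihl ihr =>
    rw [check, Bool.and_eq_true, Bool.and_eq_true] at h
    obtain ⟨⟨hp, hl⟩, hr⟩ := h
    have hp : 0 < C.level p := Nat.le_of_ble_eq_true hp
    have hunit : ∀ {y : ℝ}, y ∈ Set.Icc 0 1 → ∀ a, Function.update x p y a ∈ Set.Icc (0 : ℝ) 1 :=
      fun hy a => by rcases eq_or_ne a p with rfl | ha <;> simp_all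
    have hdescend : ∀ upper {y : ℝ}, y ∈ Set.Icc 0 1 → halfway upper y = x p → ∀ {U k},
        k + d ≤ w → (∀ i, slot w U i < 2 ^ k) →
        packedForm w d U x ≤ packedForm w d (halve w d p upper U) (Function.update x p y) :=
      fun upper y hy hyx U k hk hU => by
        simpa [hyx] using packedForm_le_halve hw hk hU (hunit hy) p upper
    rcases le_or_gt (x p) (1 / 2) with hhalf | hhalf
    · have hy : 2 * x p ∈ Set.Icc (0 : ℝ) 1 := ⟨by linarith [(hx p).1], by linarith⟩
      have hdescend := fun {U k} => @hdescend false _ hy (by simp [halfway]) U k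
      exact (hdescend hm hT).trans <| ihl (slot_halve_lt hw hm hT p _) (slot_halve_lt hw hmd hD p _)
        hl (hunit hy) (hC.half_lower hp) (hDx.trans (hdescend hmd hD))
    · have hy : 2 * x p - 1 ∈ Set.Icc (0 : ℝ) 1 := ⟨by linarith, by linarith [(hx p).2]⟩
      have hdescend := fun {U k} => @hdescend true _ hy (by simp [halfway]) U k
      exact (hdescend hm hT).trans <| ihr (slot_halve_lt hw hm hT p _) (slot_halve_lt hw hmd hD p _)
        hr (hunit hy) (hC.half_upper hp hhalf) (hDx.trans (hdescend hmd hD))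

end SubdivTree

end Subdivision

/-! ### Bihomogeneous forms and their evaluation -/

section Forms

variable {R : Type*} [Add R] [Sub R] [Mul R] [IntCast R]

/-- The tail of Horner's scheme for `binaryForm`: `acc` is the value so far and `yPow` the power
of `p.2` that goes with the next coefficient. -/
def binaryFormAux (p : R × R) : ℕ → List ℤ → R → R → R
  | 0, _, acc, _ => acc
  | j + 1, l, acc, yPow =>
    binaryFormAux p j l.tail (acc * p.1 + ((l.headD 0 : ℤ) : R) * yPow) (yPow * p.2)

/-- The binary form `∑ i ≤ d, l i * p.1 ^ (d - i) * p.2 ^ i`, where missing entries of `l` are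
zero. It only uses the ring operations, so that the same program evaluates the form at a real
point, at a point of Kronecker's substitution, and, over `NormBound`, bounds its coefficients. -/
def binaryForm (p : R × R) (d : ℕ) (l : List ℤ) : R :=
  binaryFormAux p d l.tail ((l.headD 0 : ℤ) : R) p.2

/-- `∑ f, f p * f q` over the binary forms `f` of degree `d` with the given coefficients. -/
def gramForm (p q : R × R) (d : ℕ) : List (List ℤ) → R
  | [] => ((0 : ℤ) : R)
  | row :: rows => binaryForm p d row * binaryForm q d row + gramForm p q d rows

/-- The positive semidefinite matrix `2 ^ exponent • Vᵀ * V`, where `V` has the given rows. -/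
structure GramBlock where
  exponent : ℕ
  rows : List (List ℤ)

/-- The bihomogeneous form given by a positive semidefinite matrix. -/
def GramBlock.form (b : GramBlock) (p q : R × R) (d : ℕ) : R :=
  (((2 ^ b.exponent : ℕ) : ℤ) : R) * gramForm p q d b.rows

/-- The matrix of the `k`-th block, empty past the end of the list. -/
def nthBlock (blocks : List GramBlock) (k : ℕ) : GramBlock := blocks.getD k ⟨0, []⟩

/-- The tail of the summation in `gegenbauerSum`, from `acc` and the kernels of degrees `k` and
`k + 1` on. -/
def gegenbauerSumAux (ν : ℕ) (w s e : R) (c : ℕ → R) : ℕ → ℕ → R → R → R → R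
  | 0, _, acc, _, _ => acc
  | j + 1, k, acc, prev, cur =>
    gegenbauerSumAux ν w s e c j (k + 1) (acc * e + c (k + 1) * cur) cur
      (((2 * (k + 1) + ν : ℕ) : ℤ) * (w * cur) - (((k + 1) * (k + ν) : ℕ) : ℤ) * (s * prev))

/-- The sum `∑ k ≤ m, c k * gegenbauerKernel ν w s k * e ^ (m - k)`. -/
def gegenbauerSum (ν : ℕ) (w s e : R) (c : ℕ → R) (m : ℕ) : R :=
  gegenbauerSumAux ν w s e c m 0 (c 0) ((1 : ℤ) : R) (((ν : ℕ) : ℤ) * w)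

/-- The form that is `1` on normalized homogeneous coordinates. -/
def weight (p : R × R) : R := p.1 + p.2

/-- The form with value `2 * u` at the normalized coordinates
`((2 * u + 2) / 3, (1 - 2 * u) / 3)` of `u ∈ [-1, 1/2]`. -/
def twiceCos (p : R × R) : R := p.1 - ((2 : ℤ) : R) * p.2

/-- The form with value `4 * (1 - u ^ 2)` at the normalized coordinates of `u`. -/
def fourSinSq (p : R × R) : R :=
  ((4 : ℤ) : R) * (weight p * weight p) - twiceCos p * twiceCos p

/-- The trihomogeneous form of the kernel `K u v t` of the three-point bound; the rescaling of
`t - u * v` by `4` keeps its coefficients integral. -/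
def kernelForm (ν : ℕ) (blocks : List GramBlock) (m : ℕ) (p q r : R × R) : R :=
  gegenbauerSum ν
    (((2 : ℤ) : R) * (twiceCos r * (weight p * weight q)) - twiceCos p * twiceCos q * weight r)
    (fourSinSq p * fourSinSq q * (weight r * weight r)) (weight r)
    (fun k => (nthBlock blocks k).form p q (m - k)) m

/-- The form of `K u v t + K u t v + K v t u`. -/
def symmetrizedKernelForm (ν : ℕ) (blocks : List GramBlock) (m : ℕ) (p q r : R × R) : R :=
  kernelForm ν blocks m p q r + (kernelForm ν blocks m p r q + kernelForm ν blocks m q r p)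

/-- The square, for types without powers. -/
def square (a : R) : R := a * a

/-- The form with value `2 ^ 16 * (1 + 2 * u * v * t - u ^ 2 - v ^ 2 - t ^ 2)`, raised to degree
`16` in each of the three points. -/
def gramDetForm (p q r : R × R) : R :=
  let e := weight p * (weight q * weight r)
  (((4 : ℤ) : R) * (e * e) + twiceCos p * (twiceCos q * twiceCos r) * e
    - (square (twiceCos p * (weight q * weight r)) + (square (twiceCos q * (weight p * weight r))
      + square (twiceCos r * (weight p * weight q)))))
    * (((16384 : ℤ) : R) * (square (square (square e)) * (square (square e) * square e)))

/-- The form of degree `32` of the two-point part `B u` of the three-point bound. Its summands are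
the diagonal of `kernelForm 7`, the cross terms of the square in `threePointNonneg_sq`, and a
Gegenbauer sum with coefficients `α`. -/
def twoPointForm (blocks : List GramBlock) (c : ℤ) (α : List ℤ) (p : R × R) : R :=
  gegenbauerSum 7 (fourSinSq p) (square (fourSinSq p)) ((1 : ℤ) : R)
      (fun k => (nthBlock blocks k).form p p (16 - k)) 16
    + ((2 * (((2 ^ (nthBlock blocks 0).exponent : ℕ) : ℤ) * c) : ℤ) : R)
      * binaryForm p 16 ((nthBlock blocks 0).rows.headD [])
      * square (square (square (square (weight p))))
    + gegenbauerSum 8 (twiceCos p) (((4 : ℤ) : R) * square (weight p)) (weight p)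
      (fun k => ((α.getD k 0 : ℤ) : R)) 32

end Forms

/-- Upper bounds for the sum of the absolute values of the coefficients of a form. A difference
is bounded like a sum. -/
def NormBound : Type := ℕ

namespace NormBound

instance : Add NormBound := ⟨Nat.add⟩
instance : Sub NormBound := ⟨Nat.add⟩
instance : Mul NormBound := ⟨Nat.mul⟩
instance : IntCast NormBound := ⟨Int.natAbs⟩

/-- The bound as a natural number. -/
def toNat (L : NormBound) : ℕ := L

/-- The norm bounds of the two homogeneous coordinates. -/
def unitPoint : NormBound × NormBound := (((1 : ℤ) : NormBound), ((1 : ℤ) : NormBound))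

end NormBound

section Represents

variable {A w n : ℕ} {x : Fin A → ℝ}

theorem kroneckerIndex_add (e e' : Fin A → ℕ) :
    kroneckerIndex n (e + e') = kroneckerIndex n e + kroneckerIndex n e' := by
  simp only [kroneckerIndex, Pi.add_apply, add_mul, sum_add_distrib]

theorem kroneckerIndex_single (a : Fin A) (k : ℕ) :
    kroneckerIndex n (Pi.single a k) = k * n ^ (a : ℕ) := by
  rw [kroneckerIndex, Fintype.sum_eq_single a fun b hb => by simp [hb], Pi.single_eq_same]

/-- The homogeneous coordinates of the point of Kronecker's substitution. -/
def kroneckerPoint (w n a : ℕ) : ℤ × ℤ := (((2 ^ (w * n ^ a) : ℕ) : ℤ), 1)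

/-- The normalized homogeneous coordinates of a number. -/
noncomputable def barycentric (x : ℝ) : ℝ × ℝ := (x, 1 - x)

/-- There is a form of degree `D a` in each pair of variables `(X a, Y a)` whose integer
coefficients have absolute sum at most `L`, whose value is `Z` at the Kronecker points and `r` at
the points with normalized coordinates `x a`. -/
def Represents (w n : ℕ) (x : Fin A → ℝ) (D : Fin A → ℕ) (Z : ℤ) (r : ℝ) (L : NormBound) : Prop :=
  ∃ (ι : Type) (_ : Fintype ι) (c : ι → ℤ) (e : ι → Fin A → ℕ), (∀ i, e i ≤ D) ∧
    Z = ∑ i, c i * 2 ^ (w * kroneckerIndex n (e i)) ∧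
    r = ∑ i, (c i : ℝ) * ∏ a, x a ^ e i a * (1 - x a) ^ (D a - e i a) ∧
    ∑ i, (c i).natAbs ≤ L.toNat

namespace Represents

variable {D D' : Fin A → ℕ} {Z Z' : ℤ} {r r' : ℝ} {L L' : NormBound}

theorem cast (h : Represents w n x D Z r L) (hD : D = D') : Represents w n x D' Z r L := hD ▸ h

theorem add (h : Represents w n x D Z r L) (h' : Represents w n x D Z' r' L') :
    Represents w n x D (Z + Z') (r + r') (L + L') := by
  obtain ⟨ι, _, c, e, he, rfl, rfl, hc⟩ := h
  obtain ⟨ι', _, c', e', he', rfl, rfl, hc'⟩ := h'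
  refine ⟨ι ⊕ ι', inferInstance, Sum.elim c c', Sum.elim e e', ?_, ?_, ?_, ?_⟩
  · rintro (i | i)
    exacts [he i, he' i]
  · simp only [Fintype.sum_sum_type, Sum.elim_inl, Sum.elim_inr]
  · simp only [Fintype.sum_sum_type, Sum.elim_inl, Sum.elim_inr]
  · simp only [Fintype.sum_sum_type, Sum.elim_inl, Sum.elim_inr]
    exact Nat.add_le_add hc hc'

theorem neg (h : Represents w n x D Z r L) : Represents w n x D (-Z) (-r) L := by
  obtain ⟨ι, _, c, e, he, rfl, rfl, hc⟩ := h
  exact ⟨ι, inferInstance, fun i => -c i, e, he, by simp, by simp, by simpa using hc⟩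

theorem sub (h : Represents w n x D Z r L) (h' : Represents w n x D Z' r' L') :
    Represents w n x D (Z - Z') (r - r') (L - L') := by
  rw [sub_eq_add_neg, sub_eq_add_neg]
  exact h.add h'.neg

theorem mul (h : Represents w n x D Z r L) (h' : Represents w n x D' Z' r' L') :
    Represents w n x (D + D') (Z * Z') (r * r') (L * L') := by
  obtain ⟨ι, _, c, e, he, rfl, rfl, hc⟩ := h
  obtain ⟨ι', _, c', e', he', rfl, rfl, hc'⟩ := h'
  refine ⟨ι × ι', inferInstance, fun i => c i.1 * c' i.2, fun i => e i.1 + e' i.2,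
    fun i => add_le_add (he i.1) (he' i.2), ?_, ?_, ?_⟩
  · rw [Fintype.sum_mul_sum, Fintype.sum_prod_type]
    refine sum_congr rfl fun i _ => sum_congr rfl fun j _ => ?_
    rw [kroneckerIndex_add]
    ring
  · rw [Fintype.sum_mul_sum, Fintype.sum_prod_type]
    refine sum_congr rfl fun i _ => sum_congr rfl fun j _ => ?_
    have hsub (a : Fin A) : D a + D' a - (e i a + e' j a) = (D a - e i a) + (D' a - e' j a) :=
      (tsub_add_tsub_comm (he i a) (he' j a)).symm
    rw [Int.cast_mul, mul_mul_mul_comm, ← prod_mul_distrib]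
    congr 1
    refine prod_congr rfl fun a _ => ?_
    simp only [Pi.add_apply, hsub]
    ring
  · calc ∑ i : ι × ι', (c i.1 * c' i.2).natAbs = (∑ i, (c i).natAbs) * ∑ j, (c' j).natAbs := by
          rw [Fintype.sum_mul_sum, Fintype.sum_prod_type]
          simp only [Int.natAbs_mul]
      _ ≤ _ := Nat.mul_le_mul hc hc'

theorem const (c : ℤ) : Represents w n x 0 (c : ℤ) (c : ℝ) (c : NormBound) :=
  ⟨Unit, inferInstance, fun _ => c, fun _ => 0, fun _ => le_rfl, by simp [kroneckerIndex],
    by simp, (sum_const _).trans_le (one_smul _ _).le⟩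

theorem zero (D : Fin A → ℕ) : Represents w n x D 0 ((0 : ℤ) : ℝ) ((0 : ℤ) : NormBound) :=
  ⟨Empty, inferInstance, fun _ => 0, fun _ => 0, fun i => i.elim, by simp, by simp,
    Nat.zero_le _⟩

theorem const_mul (c : ℤ) (h : Represents w n x D Z r L) :
    Represents w n x D (c * Z) (c * r) (c * L) :=
  ((const c).mul h).cast (zero_add D)

theorem square (h : Represents w n x D Z r L) :
    Represents w n x (2 * D) (square Z) (square r) (square L) :=
  (h.mul h).cast (two_mul D).symm

end Represents

/-- Both homogeneous coordinates of a point are represented by forms of degree `D`. -/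
def RepresentsPoint (w n : ℕ) (x : Fin A → ℝ) (D : Fin A → ℕ) (Z : ℤ × ℤ) (r : ℝ × ℝ)
    (L : NormBound × NormBound) : Prop :=
  Represents w n x D Z.1 r.1 L.1 ∧ Represents w n x D Z.2 r.2 L.2

theorem prod_single_pow (x : Fin A → ℝ) (a : Fin A) (k : ℕ) :
    ∏ b, x b ^ (Pi.single a k : Fin A → ℕ) b = x a ^ k := by
  rw [Fintype.prod_eq_single a fun b hb => by simp [hb], Pi.single_eq_same]

theorem representsPoint_kroneckerPoint (a : Fin A) :
    RepresentsPoint w n x (Pi.single a 1) (kroneckerPoint w n a) (barycentric (x a))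
      NormBound.unitPoint := by
  refine ⟨⟨Unit, inferInstance, fun _ => 1, fun _ => Pi.single a 1, fun _ => le_rfl, ?_, ?_, ?_⟩,
    ⟨Unit, inferInstance, fun _ => 1, fun _ => 0, fun _ => zero_le, ?_, ?_, ?_⟩⟩
  · simp [kroneckerPoint, kroneckerIndex_single]
  · simp [barycentric, prod_single_pow]
  · exact (sum_const _).trans_le le_rfl
  · simp [kroneckerPoint, kroneckerIndex]
  · simp [barycentric, prod_single_pow fun b => 1 - x b]
  · exact (sum_const _).trans_le le_rfl

section Closure

variable {D D₁ D₂ D₃ E : Fin A → ℕ}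

namespace RepresentsPoint

variable {P Q : ℤ × ℤ} {p q : ℝ × ℝ} {bp bq : NormBound × NormBound}

theorem binaryFormAux (h : RepresentsPoint w n x D P p bp) (j : ℕ) (l : List ℤ) {k : ℕ}
    {acc yPow : ℤ} {acc' yPow' : ℝ} {acc'' yPow'' : NormBound}
    (hacc : Represents w n x (k * D) acc acc' acc'')
    (hy : Represents w n x ((k + 1) * D) yPow yPow' yPow'') :
    Represents w n x ((k + j) * D) (binaryFormAux P j l acc yPow) (binaryFormAux p j l acc' yPow')
      (binaryFormAux bp j l acc'' yPow'') := by
  induction j generalizing l k acc yPow acc' yPow' acc'' yPow'' with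
  | zero => exact hacc.cast (by simp)
  | succ j ih =>
    have hacc' := ((hacc.mul h.1).cast (D' := ((k + 1 : ℕ) : Fin A → ℕ) * D)
      (by push_cast; ring)).add ((hy.cast (by push_cast; ring)).const_mul (l.headD 0))
    exact (ih l.tail hacc' ((hy.mul h.2).cast (by push_cast; ring))).cast (by push_cast; ring)

theorem binaryForm (h : RepresentsPoint w n x D P p bp) (d : ℕ) (l : List ℤ) :
    Represents w n x (d * D) (binaryForm P d l) (binaryForm p d l) (binaryForm bp d l) :=
  (h.binaryFormAux d l.tail (k := 0) ((Represents.const _).cast (by simp))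
    (h.2.cast (by simp))).cast (by simp)

theorem gramForm (hp : RepresentsPoint w n x D₁ P p bp) (hq : RepresentsPoint w n x D₂ Q q bq)
    (d : ℕ) (rows : List (List ℤ)) :
    Represents w n x (d * (D₁ + D₂)) (gramForm P Q d rows) (gramForm p q d rows)
      (gramForm bp bq d rows) := by
  induction rows with
  | nil => exact Represents.zero _
  | cons row rows ih =>
    exact (((hp.binaryForm d row).mul (hq.binaryForm d row)).cast (mul_add _ _ _).symm).add ih

theorem blockForm (hp : RepresentsPoint w n x D₁ P p bp) (hq : RepresentsPoint w n x D₂ Q q bq)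
    (d : ℕ) (b : GramBlock) :
    Represents w n x (d * (D₁ + D₂)) (b.form P Q d) (b.form p q d) (b.form bp bq d) :=
  (hp.gramForm hq d b.rows).const_mul _

theorem weight (h : RepresentsPoint w n x D P p bp) :
    Represents w n x D (weight P) (weight p) (weight bp) := h.1.add h.2

theorem twiceCos (h : RepresentsPoint w n x D P p bp) :
    Represents w n x D (twiceCos P) (twiceCos p) (twiceCos bp) := h.1.sub (h.2.const_mul 2)

theorem fourSinSq (h : RepresentsPoint w n x D P p bp) :
    Represents w n x (2 * D) (fourSinSq P) (fourSinSq p) (fourSinSq bp) :=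
  (((h.weight.mul h.weight).const_mul 4).sub (h.twiceCos.mul h.twiceCos)).cast (two_mul D).symm

end RepresentsPoint

namespace Represents

variable {W S e : ℤ} {w' s' e' : ℝ} {bw bs be : NormBound}
  {c : ℕ → ℤ} {c' : ℕ → ℝ} {bc : ℕ → NormBound} {F : ℕ → Fin A → ℕ} {m : ℕ}

theorem gegenbauerSumAux (ν : ℕ) (hw : Represents w n x D W w' bw)
    (hs : Represents w n x (2 * D) S s' bs) (he : Represents w n x E e e' be)
    (hc : ∀ k, Represents w n x (F k) (c k) (c' k) (bc k)) {j k : ℕ}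
    (hF : ∀ i ≤ k + j, F i + i * D = F 0 + i * E)
    {acc prev cur : ℤ} {acc' prev' cur' : ℝ} {acc'' prev'' cur'' : NormBound}
    (hacc : Represents w n x (F 0 + k * E) acc acc' acc'')
    (hprev : Represents w n x (k * D) prev prev' prev'')
    (hcur : Represents w n x ((k + 1) * D) cur cur' cur'') :
    Represents w n x (F 0 + (k + j) * E) (gegenbauerSumAux ν W S e c j k acc prev cur)
      (gegenbauerSumAux ν w' s' e' c' j k acc' prev' cur')
      (gegenbauerSumAux ν bw bs be bc j k acc'' prev'' cur'') := by
  induction j generalizing k acc acc' acc'' prev prev' prev'' cur cur' cur'' with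
  | zero => exact hacc.cast (by simp)
  | succ j ih =>
    have hterm := ((hc (k + 1)).mul hcur).cast (D' := F 0 + ((k + 1 : ℕ) : Fin A → ℕ) * E)
      (by rw [← hF (k + 1) (by omega)]; push_cast; rfl)
    have hnext := (((hw.mul hcur).cast (D' := (((k + 1 : ℕ) : Fin A → ℕ) + 1) * D)
      (by push_cast; ring)).const_mul ((2 * (k + 1) + ν : ℕ) : ℤ)).sub
        (((hs.mul hprev).cast (by push_cast; ring)).const_mul (((k + 1) * (k + ν) : ℕ) : ℤ))
    exact (ih (fun i hi => hF i (by omega))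
      (((hacc.mul he).cast (by push_cast; ring)).add hterm) (hcur.cast (by push_cast; rfl))
      hnext).cast (by push_cast; ring)

theorem gegenbauerSum (ν : ℕ) (hw : Represents w n x D W w' bw)
    (hs : Represents w n x (2 * D) S s' bs) (he : Represents w n x E e e' be)
    (hc : ∀ k, Represents w n x (F k) (c k) (c' k) (bc k))
    (hF : ∀ i ≤ m, F i + i * D = F 0 + i * E) :
    Represents w n x (F 0 + m * E) (gegenbauerSum ν W S e c m) (gegenbauerSum ν w' s' e' c' m)
      (gegenbauerSum ν bw bs be bc m) :=
  (gegenbauerSumAux ν hw hs he hc (j := m) (k := 0) (by simpa using hF) ((hc 0).cast (by simp))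
    ((const 1).cast (by simp)) ((hw.const_mul ν).cast (by simp))).cast (by simp)

end Represents

namespace RepresentsPoint

variable {P Q T : ℤ × ℤ} {p q t : ℝ × ℝ} {bp bq bt : NormBound × NormBound}

theorem kernelForm (hp : RepresentsPoint w n x D₁ P p bp) (hq : RepresentsPoint w n x D₂ Q q bq)
    (ht : RepresentsPoint w n x D₃ T t bt) (ν : ℕ) (blocks : List GramBlock) (m : ℕ) :
    Represents w n x (m * (D₁ + D₂ + D₃)) (kernelForm ν blocks m P Q T)
      (kernelForm ν blocks m p q t) (kernelForm ν blocks m bp bq bt) := by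
  have hcos := (((ht.twiceCos.mul (hp.weight.mul hq.weight)).const_mul 2).cast
    (add_comm D₃ (D₁ + D₂))).sub ((hp.twiceCos.mul hq.twiceCos).mul ht.weight)
  have hsin := ((hp.fourSinSq.mul hq.fourSinSq).mul (ht.weight.mul ht.weight)).cast
    (D' := 2 * (D₁ + D₂ + D₃)) (by ring)
  refine (Represents.gegenbauerSum ν hcos hsin ht.weight
    (fun k => hp.blockForm hq (m - k) (nthBlock blocks k)) fun i hi => ?_).cast (by simp; ring)
  obtain ⟨j, rfl⟩ := Nat.exists_eq_add_of_le hi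
  simp only [Nat.add_sub_cancel_left, Nat.sub_zero]
  push_cast
  ring

theorem symmetrizedKernelForm (hp : RepresentsPoint w n x D₁ P p bp)
    (hq : RepresentsPoint w n x D₂ Q q bq) (ht : RepresentsPoint w n x D₃ T t bt) (ν : ℕ)
    (blocks : List GramBlock) (m : ℕ) :
    Represents w n x (m * (D₁ + D₂ + D₃)) (symmetrizedKernelForm ν blocks m P Q T)
      (symmetrizedKernelForm ν blocks m p q t) (symmetrizedKernelForm ν blocks m bp bq bt) :=
  (hp.kernelForm hq ht ν blocks m).add
    (((hp.kernelForm ht hq ν blocks m).cast (by ring)).add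
      ((hq.kernelForm ht hp ν blocks m).cast (by ring)))

theorem gramDetForm (hp : RepresentsPoint w n x D₁ P p bp) (hq : RepresentsPoint w n x D₂ Q q bq)
    (ht : RepresentsPoint w n x D₃ T t bt) :
    Represents w n x (16 * (D₁ + D₂ + D₃)) (gramDetForm P Q T) (gramDetForm p q t)
      (gramDetForm bp bq bt) := by
  have he := hp.weight.mul (hq.weight.mul ht.weight)
  have hsquares := ((hp.twiceCos.mul (hq.weight.mul ht.weight)).square.add
    (((hq.twiceCos.mul (hp.weight.mul ht.weight)).square.cast (by ring)).add
      ((ht.twiceCos.mul (hp.weight.mul hq.weight)).square.cast (by ring)))).cast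
    (D' := D₁ + (D₂ + D₃) + (D₁ + (D₂ + D₃))) (by ring)
  exact (((((he.mul he).const_mul 4).add
    ((hp.twiceCos.mul (hq.twiceCos.mul ht.twiceCos)).mul he)).sub hsquares).mul
      ((he.square.square.square.mul (he.square.square.mul he.square)).const_mul 16384)).cast
        (by ring)

theorem twoPointForm (hp : RepresentsPoint w n x D P p bp) (blocks : List GramBlock) (c : ℤ)
    (α : List ℤ) :
    Represents w n x (32 * D) (twoPointForm blocks c α P) (twoPointForm blocks c α p)
      (twoPointForm blocks c α bp) := by
  have hdiag := Represents.gegenbauerSum 7 hp.fourSinSq hp.fourSinSq.square (Represents.const 1)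
    (fun k => hp.blockForm hp (16 - k) (nthBlock blocks k)) (m := 16) fun i hi => by
      obtain ⟨j, hj⟩ := Nat.exists_eq_add_of_le hi
      rw [hj, Nat.add_sub_cancel_left, Nat.sub_zero]
      push_cast
      ring
  have hcross := ((hp.binaryForm 16 ((nthBlock blocks 0).rows.headD [])).const_mul
    (2 * (((2 ^ (nthBlock blocks 0).exponent : ℕ) : ℤ) * c))).mul
      hp.weight.square.square.square.square
  have hgeg := Represents.gegenbauerSum 8 hp.twiceCos (hp.weight.square.const_mul 4) hp.weight
    (fun k => Represents.const (α.getD k 0)) (m := 32) fun i _ => rfl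
  refine ((hdiag.cast ?_).add (hcross.cast ?_)).add (hgeg.cast ?_)
  · push_cast; ring
  · push_cast; ring
  · push_cast; ring

end RepresentsPoint

end Closure

end Represents

/-! ### Bernstein coefficients from Kronecker's substitution -/

section Repack

theorem pack_lt {w : ℕ} {c : ℕ → ℕ} (hc : ∀ i, c i < 2 ^ w) (N : ℕ) :
    pack w N c < 2 ^ (w * N) := by
  induction N with
  | zero => simp [pack]
  | succ N ih =>
    have hlast := Nat.mul_le_mul_right (2 ^ (w * N)) (Nat.succ_le_of_lt (hc N))
    calc pack w (N + 1) c = pack w N c + c N * 2 ^ (w * N) := sum_range_succ _ _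
      _ < (c N + 1) * 2 ^ (w * N) := by linarith
      _ ≤ 2 ^ w * 2 ^ (w * N) := hlast
      _ = 2 ^ (w * (N + 1)) := by ring

theorem slot_eq_zero_of_lt {w T N i : ℕ} (hT : T < 2 ^ (w * N)) (hi : N ≤ i) : slot w T i = 0 := by
  rw [slot, Nat.div_eq_of_lt, Nat.zero_mod]
  exact hT.trans_le (Nat.pow_le_pow_right two_pos (Nat.mul_le_mul_left w hi))

theorem kroneckerIndex_castSucc {A : ℕ} (n : ℕ) (e : Fin (A + 1) → ℕ) :
    kroneckerIndex n e = kroneckerIndex n (fun a => e a.castSucc) + e (Fin.last A) * n ^ A := by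
  simp [kroneckerIndex, Fin.sum_univ_castSucc]

/-- Replace each of the `(d + 1) ^ A` slots `q` of `Q`, of width `v`, by a slot `f b q` of width
`w`, where `b` is the product of `b₀` and of the binomial coefficients of `d` and the base-`(d + 1)`
digits of the index of the slot. -/
def repack (w v d : ℕ) (f : ℕ → ℕ → ℕ) : (A b₀ Q : ℕ) → ℕ
  | 0, b₀, Q => f b₀ (slot v Q 0)
  | A + 1, b₀, Q => pack (w * (d + 1) ^ A) (d + 1) fun j =>
      repack w v d f A (b₀ * d.choose j) (slot (v * (d + 1) ^ A) Q j)

variable {w v d : ℕ} {f : ℕ → ℕ → ℕ}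

theorem repack_lt (hf : ∀ b q, f b q < 2 ^ w) (A b₀ Q : ℕ) :
    repack w v d f A b₀ Q < 2 ^ (w * (d + 1) ^ A) := by
  induction A generalizing b₀ Q with
  | zero => simpa [repack] using hf _ _
  | succ A ih =>
    rw [pow_succ, ← mul_assoc]
    exact pack_lt (fun j => ih _ _) _

theorem slot_repack (hf : ∀ b q, f b q < 2 ^ w) {A : ℕ} (b₀ Q : ℕ) {e : Fin A → ℕ}
    (he : ∀ a, e a ≤ d) :
    slot w (repack w v d f A b₀ Q) (kroneckerIndex (d + 1) e)
      = f (b₀ * ∏ a, d.choose (e a)) (slot v Q (kroneckerIndex (d + 1) e)) := by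
  induction A generalizing b₀ Q with
  | zero => simp [repack, kroneckerIndex, slot, Nat.mod_eq_of_lt (hf _ _)]
  | succ A ih =>
    have hpos : 0 < (d + 1) ^ A := by positivity
    have hlow : kroneckerIndex (d + 1) (fun a => e a.castSucc) < (d + 1) ^ A :=
      kroneckerIndex_lt fun a => Nat.lt_succ_of_le (he _)
    have hdiv : kroneckerIndex (d + 1) e / (d + 1) ^ A = e (Fin.last A) := by
      rw [kroneckerIndex_castSucc, Nat.add_mul_div_right _ _ hpos, Nat.div_eq_of_lt hlow, zero_add]
    have hmod : kroneckerIndex (d + 1) e % (d + 1) ^ A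
        = kroneckerIndex (d + 1) fun a => e a.castSucc := by
      rw [kroneckerIndex_castSucc, Nat.add_mul_mod_self_right, Nat.mod_eq_of_lt hlow]
    rw [← slot_slot hpos, ← slot_slot hpos Q, hdiv, hmod, repack,
      slot_pack fun j => repack_lt hf _ _ _, if_pos (Nat.lt_succ_of_le (he _)),
      ih _ _ fun a => he _, Fin.prod_univ_castSucc, mul_assoc,
      mul_comm (d.choose (e (Fin.last A)))]

/-- The slots of `packInt` hold signed numbers, shifted by half of the range of a slot. -/
def packInt (v N : ℕ) (Z : ℤ) : ℕ := (Z + (constSlots v N (2 ^ (v - 1)) : ℤ)).toNat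

theorem slot_packInt {N : ℕ} (hv : 0 < v) {g : ℕ → ℤ} (hg : ∀ i, (g i).natAbs < 2 ^ (v - 1))
    {i : ℕ} (hi : i < N) :
    (slot v (packInt v N (∑ k ∈ range N, g k * 2 ^ (v * k))) i : ℤ) = g i + (2 ^ (v - 1) : ℕ) := by
  have hhalf : 2 * 2 ^ (v - 1) = 2 ^ v := by rw [← pow_succ', Nat.sub_add_cancel hv]
  rw [packInt]
  generalize 2 ^ (v - 1) = half at *
  have hshift : ∀ k, ((g k + half).toNat : ℤ) = g k + half := fun k =>
    Int.toNat_of_nonneg (by have := hg k; omega)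
  have hpack : ∑ k ∈ range N, g k * 2 ^ (v * k) + (constSlots v N half : ℤ)
      = (pack v N fun k => (g k + half).toNat : ℕ) := by
    rw [constSlots_eq_pack hv, pack, pack, Nat.cast_sum, Nat.cast_sum, ← sum_add_distrib]
    refine sum_congr rfl fun k _ => ?_
    rw [Nat.cast_mul, Nat.cast_mul, hshift, add_mul, Nat.cast_pow, Nat.cast_ofNat]
  rw [hpack, Int.toNat_natCast, slot_pack, if_pos hi, hshift]
  intro k
  have := hg k
  omega

/-- An upper bound for the coefficient `g / (b * 2 ^ p) + off`, where `g` is stored as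
`q = g + half`. The value `2 ^ m` stands for any coefficient that is too large. -/
def roundedCoeff (half p off m b q : ℕ) : ℕ :=
  min ((q + b * 2 ^ p * off - half) / (b * 2 ^ p) + 1) (2 ^ m)

theorem le_roundedCoeff {half p off m b q : ℕ} {g : ℤ} (hb : 0 < b) (hq : (q : ℤ) = g + half)
    (h : roundedCoeff half p off m b q < 2 ^ m) :
    (g : ℝ) / b / 2 ^ p + off ≤ roundedCoeff half p off m b q := by
  have hpos : 0 < b * 2 ^ p := by positivity
  have hmin : roundedCoeff half p off m b q = (q + b * 2 ^ p * off - half) / (b * 2 ^ p) + 1 :=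
    min_eq_left ((min_lt_iff.mp h).resolve_right (lt_irrefl _)).le
  have hround : q + b * 2 ^ p * off < b * 2 ^ p * roundedCoeff half p off m b q + half := by
    have := Nat.lt_mul_div_succ (q + b * 2 ^ p * off - half) hpos
    rw [← hmin] at this
    omega
  have hround : (q : ℝ) + b * 2 ^ p * off < b * 2 ^ p * roundedCoeff half p off m b q + half := by
    exact_mod_cast hround
  have hq : (q : ℝ) = g + half := mod_cast hq
  have hpos : (0 : ℝ) < b * 2 ^ p := mod_cast hpos
  rw [div_div, ← le_sub_iff_add_le, div_le_iff₀ hpos]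
  linarith

theorem sum_range_pow_eq_sum_kroneckerIndex {M : Type*} [AddCommMonoid M] (A n : ℕ) (f : ℕ → M) :
    ∑ i ∈ range (n ^ A), f i
      = ∑ e ∈ Fintype.piFinset fun _ : Fin A => range n, f (kroneckerIndex n e) := by
  have hlt : ∀ e ∈ Fintype.piFinset fun _ : Fin A => range n, ∀ a, e a < n := fun e he a =>
    mem_range.mp (Fintype.mem_piFinset.mp he a)
  refine (sum_nbij (kroneckerIndex n) (fun e he => ?_) (fun e he e' he' h => ?_) (fun i hi => ?_)
    fun _ _ => rfl).symm
  · exact mem_range.mpr (kroneckerIndex_lt (hlt e he))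
  · ext a
    rw [← kroneckerIndex_digit (hlt e he), h, kroneckerIndex_digit (hlt e' he')]
  · obtain ⟨e, he⟩ := finFunctionFinEquiv.surjective ⟨i, mem_range.mp hi⟩
    exact ⟨fun a => e a, Fintype.mem_piFinset.mpr fun a => mem_range.mpr (e a).isLt,
      congrArg Fin.val he⟩

theorem Represents.exists_coeff {A w n d : ℕ} {x : Fin A → ℝ} {Z : ℤ} {r : ℝ} {L : NormBound}
    (h : Represents w n x (fun _ => d) Z r L) :
    ∃ g : (Fin A → ℕ) → ℤ, (∀ e, (g e).natAbs ≤ L.toNat) ∧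
      Z = ∑ e ∈ Fintype.piFinset fun _ => range (d + 1), g e * 2 ^ (w * kroneckerIndex n e) ∧
      r = ∑ e ∈ Fintype.piFinset fun _ => range (d + 1),
        (g e : ℝ) * ∏ a, x a ^ e a * (1 - x a) ^ (d - e a) := by
  classical
  obtain ⟨ι, _, c, e, he, rfl, rfl, hc⟩ := h
  have hmem : ∀ i ∈ univ, e i ∈ Fintype.piFinset fun _ => range (d + 1) := fun i _ =>
    Fintype.mem_piFinset.mpr fun a => mem_range.mpr (Nat.lt_succ_of_le (he i a))
  refine ⟨fun e' => ∑ i with e i = e', c i, fun e' => ?_, ?_, ?_⟩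
  · exact (Int.natAbs_sum_le _ _).trans ((sum_le_sum_of_subset (subset_univ _)).trans hc)
  · rw [← sum_fiberwise_of_maps_to hmem]
    refine sum_congr rfl fun e' _ => ?_
    rw [sum_mul]
    exact sum_congr rfl fun i hi => by rw [(mem_filter.mp hi).2]
  · rw [← sum_fiberwise_of_maps_to hmem]
    refine sum_congr rfl fun e' _ => ?_
    rw [Int.cast_sum, sum_mul]
    exact sum_congr rfl fun i hi => by rw [(mem_filter.mp hi).2]

theorem sum_mul_prod_pow_eq_bernsteinForm {A : ℕ} (d : ℕ) (g : (Fin A → ℕ) → ℝ) (x : Fin A → ℝ) :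
    ∑ e ∈ Fintype.piFinset fun _ => range (d + 1), g e * ∏ a, x a ^ e a * (1 - x a) ^ (d - e a)
      = bernsteinForm d (fun e => g e / (∏ a, d.choose (e a) : ℕ)) x := by
  refine sum_congr rfl fun e he => ?_
  have hpos : ∀ a, 0 < d.choose (e a) := fun a =>
    Nat.choose_pos (Nat.lt_succ_iff.mp (mem_range.mp (Fintype.mem_piFinset.mp he a)))
  have hne : ((∏ a, d.choose (e a) : ℕ) : ℝ) ≠ 0 := mod_cast (prod_pos fun a _ => hpos a).ne'
  have heval : ∏ a, (bernsteinPolynomial ℝ d (e a)).eval (x a)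
      = (∏ a, d.choose (e a) : ℕ) * ∏ a, x a ^ e a * (1 - x a) ^ (d - e a) := by
    rw [Nat.cast_prod, ← prod_mul_distrib]
    simp [bernsteinPolynomial, mul_assoc]
  rw [heval, ← mul_assoc, div_mul_cancel₀ _ hne]

/-- Upper bounds for the Bernstein coefficients of `F / 2 ^ p + off`, rounded to integers and packed
into slots of width `w`, where `Z` is the value at the Kronecker points of width `v` of a form `F`
of degree `d` in each of `A` points. -/
def packedCoeffs (w v d A p off m : ℕ) (Z : ℤ) : ℕ :=
  repack w v d (roundedCoeff (2 ^ (v - 1)) p off m) A 1 (packInt v ((d + 1) ^ A) Z)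

theorem roundedCoeff_lt {m w : ℕ} (hm : m < w) (half p off b q : ℕ) :
    roundedCoeff half p off m b q < 2 ^ w :=
  (min_le_right _ _).trans_lt (Nat.pow_lt_pow_right one_lt_two hm)

theorem slot_packedCoeffs_lt {A p off m : ℕ} {Z : ℤ} (hm : m < w)
    (h : slotsLT w ((d + 1) ^ A) m (packedCoeffs w v d A p off m Z) = true) (i : ℕ) :
    slot w (packedCoeffs w v d A p off m Z) i < 2 ^ m := by
  rcases lt_or_ge i ((d + 1) ^ A) with hi | hi
  · exact slot_lt_of_slotsLT (by omega) hm.le h hi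
  · rw [packedCoeffs, slot_eq_zero_of_lt (repack_lt (roundedCoeff_lt hm _ _ _) _ _ _) hi]
    positivity

theorem Represents.le_packedForm {A p off m : ℕ} {x : Fin A → ℝ} {Z : ℤ} {r : ℝ} {L : NormBound}
    (h : Represents v (d + 1) x (fun _ => d) Z r L) (hv : 0 < v) (hL : L.toNat < 2 ^ (v - 1))
    (hm : m < w) (hx : ∀ a, x a ∈ Set.Icc 0 1)
    (hT : slotsLT w ((d + 1) ^ A) m (packedCoeffs w v d A p off m Z) = true) :
    r / 2 ^ p + off ≤ packedForm w d (packedCoeffs w v d A p off m Z) x := by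
  obtain ⟨g, hg, hZ, hr⟩ := h.exists_coeff
  have hdigits : ∀ e ∈ Fintype.piFinset fun _ : Fin A => range (d + 1),
      (fun a : Fin A => kroneckerIndex (d + 1) e / (d + 1) ^ (a : ℕ) % (d + 1)) = e := fun e he =>
    funext fun a => kroneckerIndex_digit (fun b => mem_range.mp (Fintype.mem_piFinset.mp he b)) a
  have hZ : Z = ∑ i ∈ range ((d + 1) ^ A),
      g (fun a => i / (d + 1) ^ (a : ℕ) % (d + 1)) * 2 ^ (v * i) := by
    rw [hZ, sum_range_pow_eq_sum_kroneckerIndex]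
    exact sum_congr rfl fun e he => by rw [hdigits e he]
  have hslot : ∀ e, (∀ a, e a ≤ d) →
      (slot v (packInt v ((d + 1) ^ A) Z) (kroneckerIndex (d + 1) e) : ℤ)
        = g e + (2 ^ (v - 1) : ℕ) := fun e he => by
    have he : ∀ a, e a < d + 1 := fun a => Nat.lt_succ_of_le (he a)
    rw [hZ, slot_packInt hv (fun i => (hg _).trans_lt hL) (kroneckerIndex_lt he),
      hdigits e (Fintype.mem_piFinset.mpr fun a => mem_range.mpr (he a))]
  have hform : r / 2 ^ p + off
      = bernsteinForm d (fun e => (off : ℝ) + (2 ^ p)⁻¹ * (g e / (∏ a, d.choose (e a) : ℕ))) x := by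
    rw [bernsteinForm_add_mul, bernsteinForm_const, ← sum_mul_prod_pow_eq_bernsteinForm, ← hr]
    ring
  rw [hform]
  refine bernsteinForm_mono hx fun e he => ?_
  have hlt := slot_packedCoeffs_lt hm hT (kroneckerIndex (d + 1) e)
  rw [packedCoeffs, slot_repack (roundedCoeff_lt hm _ _ _) _ _ he, one_mul] at hlt ⊢
  have hle := le_roundedCoeff (prod_pos fun a _ => Nat.choose_pos (he a)) (hslot e he) hlt
  rwa [add_comm, ← div_eq_inv_mul]

theorem Represents.nonpos_of_packedForm_le {A p off m : ℕ} {x : Fin A → ℝ} {Z : ℤ} {r : ℝ}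
    {L : NormBound} (h : Represents v (d + 1) x (fun _ => d) Z r L) (hv : 0 < v)
    (hL : L.toNat < 2 ^ (v - 1)) (hm : m < w) (hx : ∀ a, x a ∈ Set.Icc 0 1)
    (hT : slotsLT w ((d + 1) ^ A) m (packedCoeffs w v d A p off m Z) = true)
    (hle : packedForm w d (packedCoeffs w v d A p off m Z) x ≤ off) : r ≤ 0 := by
  have hdiv : r / 2 ^ p ≤ 0 := by linarith [h.le_packedForm hv hL hm hx hT]
  simpa using (div_le_iff₀ (by positivity : (0 : ℝ) < 2 ^ p)).mp hdiv

theorem Represents.off_le_packedForm {A p off m : ℕ} {x : Fin A → ℝ} {Z : ℤ} {r : ℝ}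
    {L : NormBound} (h : Represents v (d + 1) x (fun _ => d) Z r L) (hv : 0 < v)
    (hL : L.toNat < 2 ^ (v - 1)) (hm : m < w) (hx : ∀ a, x a ∈ Set.Icc 0 1)
    (hT : slotsLT w ((d + 1) ^ A) m (packedCoeffs w v d A p off m Z) = true) (hr : 0 ≤ r) :
    off ≤ packedForm w d (packedCoeffs w v d A p off m Z) x := by
  have hdiv : 0 ≤ r / 2 ^ p := by positivity
  linarith [h.le_packedForm hv hL hm hx hT]

end Repack

/-! ### The three-point bound in terms of forms -/

section GegenbauerSum

variable {R : Type*} [CommRing R] (ν : ℕ) (w s : R)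

theorem sum_range_succ_mul_pow_sub (a : ℕ → R) (e : R) (k : ℕ) :
    ∑ i ∈ range (k + 2), a i * e ^ (k + 1 - i)
      = (∑ i ∈ range (k + 1), a i * e ^ (k - i)) * e + a (k + 1) := by
  rw [sum_range_succ, sum_mul, Nat.sub_self, pow_zero, mul_one]
  refine congrArg (· + _) (sum_congr rfl fun i hi => ?_)
  rw [Nat.succ_sub (Nat.lt_succ_iff.mp (mem_range.mp hi)), pow_succ, mul_assoc]

theorem gegenbauerSumAux_eq_sum (e : R) (c : ℕ → R) (j k : ℕ) {acc : R}
    (hacc : acc = ∑ i ∈ range (k + 1), c i * gegenbauerKernel ν w s i * e ^ (k - i)) :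
    gegenbauerSumAux ν w s e c j k acc (gegenbauerKernel ν w s k) (gegenbauerKernel ν w s (k + 1))
      = ∑ i ∈ range (k + j + 1), c i * gegenbauerKernel ν w s i * e ^ (k + j - i) := by
  induction j generalizing k acc with
  | zero => exact hacc
  | succ j ih =>
    have hnext : acc * e + c (k + 1) * gegenbauerKernel ν w s (k + 1)
        = ∑ i ∈ range (k + 2), c i * gegenbauerKernel ν w s i * e ^ (k + 1 - i) := by
      rw [sum_range_succ_mul_pow_sub, hacc]
    have hsum := ih (k + 1) hnext
    simp only [gegenbauerKernel, gegenbauerSumAux, Int.cast_natCast] at hsum ⊢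
    rw [hsum, Nat.add_right_comm k 1 j, Nat.add_assoc k j 1]

theorem gegenbauerSum_eq_sum (e : R) (c : ℕ → R) (m : ℕ) :
    gegenbauerSum ν w s e c m
      = ∑ k ∈ range (m + 1), c k * gegenbauerKernel ν w s k * e ^ (m - k) := by
  have hsum := gegenbauerSumAux_eq_sum ν w s e c m 0 (acc := c 0) (by simp [gegenbauerKernel])
  simp only [zero_add] at hsum
  simpa only [gegenbauerSum, gegenbauerKernel, Int.cast_natCast, Int.cast_one] using hsum

theorem gegenbauerKernel_mul_sq_mul (a : R) (k : ℕ) :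
    gegenbauerKernel ν (a * w) (a ^ 2 * s) k = a ^ k * gegenbauerKernel ν w s k := by
  induction k using Nat.twoStepInduction with
  | zero => simp [gegenbauerKernel]
  | one => simp only [gegenbauerKernel]; ring
  | more k ih ih' => simp only [gegenbauerKernel, ih, ih']; ring

theorem gegenbauerSum_mul_sq_mul (a : R) (c : ℕ → R) (m : ℕ) :
    gegenbauerSum ν (a * w) (a ^ 2 * s) 1 c m
      = ∑ k ∈ range (m + 1), a ^ k * c k * gegenbauerKernel ν w s k := by
  rw [gegenbauerSum_eq_sum]
  refine sum_congr rfl fun k _ => ?_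
  rw [gegenbauerKernel_mul_sq_mul, one_pow]
  ring

theorem map_gegenbauerKernel {R' : Type*} [CommRing R'] (f : R →+* R') (k : ℕ) :
    f (gegenbauerKernel ν w s k) = gegenbauerKernel ν (f w) (f s) k := by
  induction k using Nat.twoStepInduction with
  | zero => simp [gegenbauerKernel]
  | one => simp [gegenbauerKernel]
  | more k ih ih' => simp only [gegenbauerKernel, map_sub, map_mul, map_natCast, ih, ih']

theorem intCast_gegenbauerSum (c : ℕ → ℤ) (m : ℕ) :
    ((gegenbauerSum ν 2 4 1 c m : ℤ) : R)
      = ∑ k ∈ range (m + 1), 2 ^ k * c k * gegenbauerKernel ν (1 : R) 1 k := by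
  have hmap (k : ℕ) : ((gegenbauerKernel ν (1 : ℤ) 1 k : ℤ) : R) = gegenbauerKernel ν 1 1 k := by
    simpa using map_gegenbauerKernel ν (1 : ℤ) 1 (Int.castRingHom R) k
  have hsum := gegenbauerSum_mul_sq_mul ν (1 : ℤ) 1 2 c m
  norm_num only at hsum
  simp only [hsum, Int.cast_sum, Int.cast_mul, Int.cast_pow, Int.cast_ofNat, hmap]

end GegenbauerSum

theorem GramBlock.form_eq {R : Type*} [CommRing R] (b : GramBlock) (p q : R × R) (d : ℕ) :
    b.form p q d = 2 ^ b.exponent * gramForm p q d b.rows := by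
  simp only [GramBlock.form, Nat.cast_pow, Nat.cast_ofNat, Int.cast_pow, Int.cast_ofNat]

section Symmetry

variable {R : Type*} [CommRing R] (ν : ℕ) (blocks : List GramBlock) (m : ℕ) (p q r : R × R)

theorem gramForm_comm (d : ℕ) (rows : List (List ℤ)) :
    gramForm p q d rows = gramForm q p d rows := by
  induction rows with
  | nil => rfl
  | cons row rows ih => rw [gramForm, gramForm, ih, mul_comm (binaryForm p d row)]

theorem kernelForm_comm : kernelForm ν blocks m p q r = kernelForm ν blocks m q p r := by
  simp only [kernelForm, GramBlock.form, gramForm_comm p q, mul_comm (weight p),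
    mul_comm (twiceCos p), mul_comm (fourSinSq p)]

theorem symmetrizedKernelForm_swap_left :
    symmetrizedKernelForm ν blocks m p q r = symmetrizedKernelForm ν blocks m q p r := by
  simp only [symmetrizedKernelForm, kernelForm_comm ν blocks m p q r]
  ring

theorem symmetrizedKernelForm_swap_right :
    symmetrizedKernelForm ν blocks m p q r = symmetrizedKernelForm ν blocks m p r q := by
  simp only [symmetrizedKernelForm, kernelForm_comm ν blocks m q r p]
  ring

end Symmetry

section CosPoint

/-- The homogeneous coordinates of `u` on the interval `[-1, 1/2]`, which are nonnegative there and
sum to `1`. -/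
noncomputable def cosPoint (u : ℝ) : ℝ × ℝ := barycentric ((2 * u + 2) / 3)

variable (u v t : ℝ)

theorem weight_cosPoint : weight (cosPoint u) = 1 := by
  simp only [weight, cosPoint, barycentric]
  ring

theorem twiceCos_cosPoint : twiceCos (cosPoint u) = 2 * u := by
  simp only [twiceCos, cosPoint, barycentric]
  push_cast
  ring

theorem fourSinSq_cosPoint : fourSinSq (cosPoint u) = 4 * (1 - u ^ 2) := by
  simp only [fourSinSq, weight_cosPoint, twiceCos_cosPoint]
  push_cast
  ring

theorem gramDetForm_cosPoint :
    gramDetForm (cosPoint u) (cosPoint v) (cosPoint t)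
      = 65536 * (1 + 2 * u * v * t - u ^ 2 - v ^ 2 - t ^ 2) := by
  simp only [gramDetForm, square, weight_cosPoint, twiceCos_cosPoint]
  push_cast
  ring

theorem kernelForm_cosPoint (ν : ℕ) (blocks : List GramBlock) (m : ℕ) :
    kernelForm ν blocks m (cosPoint u) (cosPoint v) (cosPoint t)
      = ∑ k ∈ range (m + 1), 4 ^ k * (nthBlock blocks k).form (cosPoint u) (cosPoint v) (m - k)
          * gegenbauerKernel ν (t - u * v) ((1 - u ^ 2) * (1 - v ^ 2)) k := by
  rw [← gegenbauerSum_mul_sq_mul]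
  simp only [kernelForm, weight_cosPoint, twiceCos_cosPoint, fourSinSq_cosPoint]
  congr 1
  · push_cast
    ring
  · ring

theorem twoPointForm_cosPoint (blocks : List GramBlock) (c : ℤ) (α : List ℤ) :
    twoPointForm blocks c α (cosPoint u)
      = ∑ k ∈ range 17, 4 ^ k * (nthBlock blocks k).form (cosPoint u) (cosPoint u) (16 - k)
          * gegenbauerKernel 7 (1 - u * u) ((1 - u ^ 2) * (1 - u ^ 2)) k
        + 2 * (2 ^ (nthBlock blocks 0).exponent * c)
          * binaryForm (cosPoint u) 16 ((nthBlock blocks 0).rows.headD [])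
        + ∑ k ∈ range 33, 2 ^ k * (α.getD k 0 : ℤ) * gegenbauerKernel 8 u 1 k := by
  rw [← gegenbauerSum_mul_sq_mul, ← gegenbauerSum_mul_sq_mul]
  simp only [twoPointForm, square, weight_cosPoint, twiceCos_cosPoint, fourSinSq_cosPoint]
  push_cast
  ring_nf

end CosPoint

section CodeInequalities

variable {E : Type*} [NormedAddCommGroup E] [InnerProductSpace ℝ E] [DecidableEq E]
  {S : Finset E}

theorem ThreePointNonneg.sum {ι : Type*} (s : Finset ι) {A : ι → ℝ} {B : ι → ℝ → ℝ}
    {K : ι → ℝ → ℝ → ℝ → ℝ} (h : ∀ i ∈ s, ThreePointNonneg S (A i) (B i) (K i)) :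
    ThreePointNonneg S (∑ i ∈ s, A i) (fun u => ∑ i ∈ s, B i u)
      (fun u v t => ∑ i ∈ s, K i u v t) := by
  classical
  induction s using Finset.induction_on with
  | empty => simpa only [sum_empty] using ThreePointNonneg.zero S
  | insert i s hi ih =>
    simp only [sum_insert hi]
    exact (h i (mem_insert_self i s)).add (ih fun j hj => h j (mem_insert_of_mem hj))

variable [FiniteDimensional ℝ E]

theorem threePointNonneg_gramForm (hS : ∀ x ∈ S, ‖x‖ = 1) {ν : ℕ} (hν : 0 < ν)
    (hE : Module.finrank ℝ E = ν + 3) (d k : ℕ)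
    (rows : List (List ℤ)) :
    ThreePointNonneg S 0
      (fun u => gramForm (cosPoint u) (cosPoint u) d rows
        * gegenbauerKernel ν (1 - u * u) ((1 - u ^ 2) * (1 - u ^ 2)) k)
      (fun u v t => gramForm (cosPoint u) (cosPoint v) d rows
        * gegenbauerKernel ν (t - u * v) ((1 - u ^ 2) * (1 - v ^ 2)) k) := by
  induction rows with
  | nil => simpa [gramForm] using ThreePointNonneg.zero S
  | cons row rows ih =>
    simpa only [gramForm, add_mul, zero_add] using
      (threePointNonneg_gegenbauerKernel_orthogonal hS hν hE
        (fun u => binaryForm (cosPoint u) d row) k).add ih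

theorem threePointNonneg_blockForm (hS : ∀ x ∈ S, ‖x‖ = 1) {ν : ℕ} (hν : 0 < ν)
    (hE : Module.finrank ℝ E = ν + 3) (d k : ℕ) (b : GramBlock) :
    ThreePointNonneg S 0
      (fun u => 4 ^ k * b.form (cosPoint u) (cosPoint u) d
        * gegenbauerKernel ν (1 - u * u) ((1 - u ^ 2) * (1 - u ^ 2)) k)
      (fun u v t => 4 ^ k * b.form (cosPoint u) (cosPoint v) d
        * gegenbauerKernel ν (t - u * v) ((1 - u ^ 2) * (1 - v ^ 2)) k) := by
  have h := (threePointNonneg_gramForm hS hν hE d k b.rows).smul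
    (c := 4 ^ k * 2 ^ b.exponent) (by positivity)
  simpa only [GramBlock.form_eq, mul_zero, mul_assoc] using h

/- The first row of the matrix is completed by the constant `c` before squaring. -/
theorem threePointNonneg_blockForm_const (hS : ∀ x ∈ S, ‖x‖ = 1) {ν : ℕ} (hν : 0 < ν)
    (hE : Module.finrank ℝ E = ν + 3) (d : ℕ)
    {b : GramBlock} (hb : b.rows ≠ []) (c : ℝ) :
    ThreePointNonneg S (2 ^ b.exponent * c ^ 2)
      (fun u => b.form (cosPoint u) (cosPoint u) d
        + 2 * (2 ^ b.exponent * c) * binaryForm (cosPoint u) d (b.rows.headD []))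
      (fun u v _ => b.form (cosPoint u) (cosPoint v) d) := by
  obtain ⟨row, rows, hrows⟩ := List.exists_cons_of_ne_nil hb
  have h := ((threePointNonneg_sq S c fun u => binaryForm (cosPoint u) d row).add
    (threePointNonneg_gramForm hS hν hE d 0 rows)).smul (c := 2 ^ b.exponent) (by positivity)
  simp only [gegenbauerKernel, mul_one, add_zero] at h
  simp only [GramBlock.form_eq, hrows, gramForm, List.headD_cons]
  convert h using 2
  · ring
  · ring

theorem threePointNonneg_gegenbauerSum (hS : ∀ x ∈ S, ‖x‖ = 1) {ν : ℕ} (hν : 0 < ν)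
    (hE : Module.finrank ℝ E = ν + 2) {α : ℕ → ℤ} (hα : ∀ k, 0 ≤ α k) (m : ℕ) :
    ThreePointNonneg S (((gegenbauerSum ν 2 4 1 α m : ℤ) : ℝ) - α 0)
      (fun u => ∑ k ∈ range (m + 1), 2 ^ k * α k * gegenbauerKernel ν u 1 k - α 0)
      (fun _ _ _ => 0) := by
  have h := ThreePointNonneg.sum (range m) fun k _ =>
    (threePointNonneg_gegenbauerKernel hS hν hE (k + 1)).smul (c := 2 ^ (k + 1) * α (k + 1))
      (mul_nonneg (by positivity) (mod_cast hα (k + 1)))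
  simpa [intCast_gegenbauerSum, sum_range_succ' _ m, gegenbauerKernel] using h

theorem threePointNonneg_kernelForm (hS : ∀ x ∈ S, ‖x‖ = 1) {ν : ℕ} (hν : 0 < ν)
    (hE : Module.finrank ℝ E = ν + 3) (m : ℕ) {blocks : List GramBlock}
    (hrows : (nthBlock blocks 0).rows ≠ []) (c : ℝ) :
    ThreePointNonneg S (2 ^ (nthBlock blocks 0).exponent * c ^ 2)
      (fun u => ∑ k ∈ range (m + 1),
          4 ^ k * (nthBlock blocks k).form (cosPoint u) (cosPoint u) (m - k)
            * gegenbauerKernel ν (1 - u * u) ((1 - u ^ 2) * (1 - u ^ 2)) k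
        + 2 * (2 ^ (nthBlock blocks 0).exponent * c)
          * binaryForm (cosPoint u) m ((nthBlock blocks 0).rows.headD []))
      (fun u v t => kernelForm ν blocks m (cosPoint u) (cosPoint v) (cosPoint t)) := by
  have h := (ThreePointNonneg.sum (range m) fun k _ => threePointNonneg_blockForm hS hν hE
    (m - (k + 1)) (k + 1) (nthBlock blocks (k + 1))).add
      (threePointNonneg_blockForm_const hS hν hE m hrows c)
  simpa only [kernelForm_cosPoint, sum_range_succ' _ m, gegenbauerKernel, Nat.sub_zero, pow_zero,
    one_mul, mul_one, sum_const_zero, zero_add, ← add_assoc] using h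

end CodeInequalities

theorem card_mul_le_of_forms {E : Type*} [NormedAddCommGroup E] [InnerProductSpace ℝ E]
    [FiniteDimensional ℝ E] {S : Finset E} (hS : ∀ x ∈ S, ‖x‖ = 1) (hE : Module.finrank ℝ E = 10)
    (hinner : ∀ x ∈ S, ∀ y ∈ S, x ≠ y → inner ℝ x y ≤ 1 / 2) {blocks : List GramBlock} {c : ℤ}
    {α : List ℤ} (hrows : (nthBlock blocks 0).rows ≠ []) (hα : ∀ k, 0 ≤ α.getD k 0)
    (hB : ∀ u ∈ Set.Icc (-1 : ℝ) (1 / 2), twoPointForm blocks c α (cosPoint u) ≤ 0)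
    (hK : ∀ u ∈ Set.Icc (-1 : ℝ) (1 / 2), ∀ v ∈ Set.Icc (-1 : ℝ) (1 / 2),
      ∀ t ∈ Set.Icc (-1 : ℝ) (1 / 2), 0 ≤ 1 + 2 * u * v * t - u ^ 2 - v ^ 2 - t ^ 2 →
        symmetrizedKernelForm 7 blocks 16 (cosPoint u) (cosPoint v) (cosPoint t) ≤ 0) :
    (#S : ℤ) * (#S * α.getD 0 0) ≤ #S * (gegenbauerSum 8 2 4 1 (fun k => α.getD k 0) 32
      + 2 ^ (nthBlock blocks 0).exponent * c ^ 2) := by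
  classical
  have h := (threePointNonneg_kernelForm hS (by norm_num) hE 16 hrows c).add
    (threePointNonneg_gegenbauerSum hS (by norm_num) hE hα 32)
  have hbound := h.card_mul_le hS hinner (b := α.getD 0 0)
    (fun u hu => by linarith [hB u hu, twoPointForm_cosPoint u blocks c α])
    (fun u hu v hv t ht hdet => by
      simpa only [symmetrizedKernelForm, add_zero, add_assoc] using hK u hu v hv t ht hdet)
  have hbound : (#S : ℝ) * (#S * α.getD 0 0) ≤ #S * (gegenbauerSum 8 2 4 1
      (fun k => α.getD k 0) 32 + 2 ^ (nthBlock blocks 0).exponent * c ^ 2 : ℤ) := by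
    push_cast
    linarith
  exact_mod_cast hbound

theorem forall_of_forall_le_le {α : Type*} [LinearOrder α] {P : α → α → α → Prop}
    (hleft : ∀ u v t, P u v t → P v u t) (hright : ∀ u v t, P u v t → P u t v)
    (hP : ∀ u v t, u ≤ v → v ≤ t → P u v t) (u v t : α) : P u v t := by
  have hsorted : ∀ u v t, u ≤ v → P u v t := fun u v t huv => by
    rcases le_total v t with hvt | htv
    · exact hP u v t huv hvt
    · rcases le_total u t with hut | htu
      · exact hright _ _ _ (hP u t v hut htv)
      · exact hright _ _ _ (hleft _ _ _ (hP t u v htu huv))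
  rcases le_total u v with huv | hvu
  · exact hsorted u v t huv
  · exact hleft _ _ _ (hsorted v u t hvu)

/-! ### The certificate in dimension ten -/

section Certificate

/-- The positive semidefinite matrices of the three-point bound in dimension `10`, as exact
rational factorizations (cleared of denominators) of a numerical solution of the semidefinite
program. Block `k` goes with the Gegenbauer kernel of degree `k`. -/
def gramBlocks : List GramBlock := [
  ⟨123, [
    [-114369516656, -3351018154791, 22497124700579, -225871278752147, 303512307948446,
     5097553337323517, -38865929715653145, 125227423475693335, -239953571880887641,
     294796619894383308, -246523235737715789, 138147155997456969, -50794519414748233,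
     10870415647023448, -1050204355211998, -13052551532445, -5513345964261],
    [-31977426177, -1628571699572, 19360040560806, -656255242146986, 6612106451065162,
     -36000243453227984, 108532125364805120, -200858575537752341, 261402288937716146,
     -289189641418412470, 283951276141137959, -205577252327815913, 91250587260840439,
     -22039606057566048, 1720732627773785, 139174737272091, 19130505924329],
    [-53388816181, -467870011883, -78230889366128, 863369218246521, -1310826335514949,
     -7670722675049186, 13728677754004991, 83435585212656152, -338594341738497120,
     544617493654749610, -453993723506048269, 190005212531085339, -33152199064808732,
     275497899517466, 169960033640208, 88692014657286],
    [-47046584792, -2301709494308, 80263970269439, -1493592164865641, 15686569377348262,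
     -94876080568503683, 344619486492098838, -775693656179456127, 1117798583327387864,
     -1080063503977974379, 737507823489567836, -368433675875256485, 130731516640402381,
     -27350551430763431, 2268579384831493],
    [33218621225, 429972976885, -141993647701898, 3917204280371406, -45579682717089388,
     272708628000053465, -963804954481942579, 2152324787573982729, -3126020535555445782,
     2964615717290794623, -1800356216955209984, 662800592950601169, -134484245804118443,
     12043815565288903],
    [27573997654, -518091580941, 100191999196095, -2381274300195462, 23356952038353986,
     -121568642958978659, 380641495955749549, -763256698862056709, 999317628983053334,
     -850369366221869738, 449280944992586675, -137418969830034976, 19304080772464234],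
    [24457960773, 2134916601558, -142045765333014, 3121721557052589, -26099680347135621,
     118892873178326735, -329790898455368481, 568848387427509780, -619130711109990715,
     405852560386321032, -148039290111322476, 24700705267764555],
    [51982431047, -735121514305, 93574534441501, -1767700601230374, 15867970581367967,
     -75518407890220093, 197730563266416831, -302734617499702373, 263418888729384605,
     -122717924108489472, 25591635194884308],
    [5378976994, 251471072191, -59010902638632, 1172075436380769, -10207668947550009,
     42560021517056244, -98238868848418626, 125441906392880966, -85847328642519683,
     26581322994407316],
    [56643205207, -1614777313536, 68330178300132, -1228012531002351, 7369031992689169,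
     -25516843776162027, 44992477480093410, -41525351163570622, 19110513889776406],
    [21475458498, 1340630028397, -100078237166118, 1270806163094327, -6912236029116395,
     16924012116005782, -21950453920260023, 12972547441736363],
    [-14198629099, -1601016144640, 49418992850967, -618489941368512, 2559997036690540,
     -4803899768092583, 3853287873760786],
    [-82865998927, 441891495925, -51926421836579, 340674111972383, -914888805983534,
     1523950543334959],
    [-43834501233, -1841207223994, 33701311366795, -169957943531189, 372324301796833],
    [-15972477707, 608296856296, -12799464152083, 49364094648318],
    [-20200074470, -476959494297, 10061204209044],
    [-3429055161, 501884896129],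
    [562199955]]⟩,
  ⟨119, [
    [133239578192, 539707222530, -158596809518110, 1643668281900824, -10698933280295485,
     52823949870062229, -186660177565371261, 448552867087099749, -707052083364394427,
     726158021150365985, -467013465556627042, 175686145532572643, -36650968098691732,
     3445001035370704, 65059623645997, 18083996238413],
    [44603586891, -1989677133205, 87691451944293, -1706427285670814, 15740697733991589,
     -92757672227423884, 350655710982285859, -817840477417461824, 1180993580475258383,
     -1047811709120988026, 539405144856337454, -144538242692644537, 15545561740436535,
     -438712168726344, 323349923092385],
    [-32899918512, 823569506347, -225510043642791, 4985666902162237, -42175403060037387,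
     185753127335235372, -487977569378816874, 827224429676038249, -956750045356391408,
     781238770892775277, -457037411506653187, 187867903305177723, -48239284133462511,
     5642661969805244],
    [-148240507148, -6654457859938, 175789301198974, -2581963934848512, 21051010976004091,
     -105704896186272084, 355629067332379397, -779764696968854267, 1078492617268180397,
     -912070881289264506, 447198963447671229, -115459803047601061, 11961814962389135],
    [-224197149451, -3756168467785, -40141896669725, 1389585305858191, -12608314261534000,
     61183178013715651, -167986705020605689, 294777644771623295, -339990061755427111,
     239204914362806217, -99636646291554984, 19660158988713106],
    [-124604612992, -8218009150595, 333552377676067, -5278756577774039, 40463639560553114,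
     -167090407703495638, 407089175170990047, -593348239645137374, 498375439270434417,
     -227187332446695373, 43700203052804987],
    [177106090659, 15648429101060, -447203875415730, 6712737911018250, -43418516977501319,
     145643757452119262, -270310476414117932, 278670058226447412, -151187992900026388,
     34625582122390960],
    [4552403063, -2214152234528, 93329931016252, -2309043375993596, 17022112199739641,
     -59254064163119299, 101982611373175907, -89531728221314937, 36474739608702575],
    [-159566130333, -4371794440768, -138669036105437, 1832024856432284, -11110689704274261,
     29704764065978630, -37426281646983621, 22258083969564398],
    [25359142493, -3101259166107, 126468195775196, -1422616715257917, 5436152547241670,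
     -9199132849183090, 7764157120543737],
    [-30914906726, 3935978406544, -89289540592113, 600494242347847, -1630384124435262,
     2196073128491609],
    [20501754605, -1138436859384, 58890526089038, -305269201161111, 534434637598085],
    [109089071989, 8479139004277, -40275985752694, 193935925648953],
    [-290829455370, -10013980515348, 32810151783596],
    [147135076519, 3678498070189],
    [66137584786]]⟩,
  ⟨114, [
    [-444827514589, -10949592054248, 261423308638415, -3494597892387396, 31848229128563778,
     -173094771408483068, 547557553905626675, -1034193181690943608, 1195733579908854228,
     -833823005612214956, 328023977588854229, -65843072457104406, 6292008074294963,
     -636592174751715, 40642846622513],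
    [-25165476308, 7106236725854, -235433433456916, 4322144283589849, -34135240888091576,
     156101765059358619, -455716716275509432, 864398408120943696, -1047448706262305953,
     793241617463541609, -367832432117392287, 98842505096395718, -13711323313802686,
     605582213594600],
    [-316229854928, -4269524500435, 100617401278401, -635906877640144, 3617244304502483,
     -8471934054508565, 18337090822365843, -50415754180272023, 101772465360883605,
     -127679275557456086, 86157659947222071, -30996374099087532, 5360139757957070],
    [9570256491, 3611996831473, -315481455945120, 4871234035582601, -33281957202887222,
     130888318702414494, -324885286923726697, 517135371215637385, -513345791362513898,
     303466161742963849, -97468969204479179, 13410007411479025],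
    [-220107263998, -13379222044297, 397222138176759, -5677328696807943, 40545027281919962,
     -157304410957142058, 344219773578862155, -439776182820460640, 317621256808089376,
     -120053183991502164, 19778816657762105],
    [544811617979, 18992533808132, -382418487869281, 5565819499750665, -34259280363644136,
     107831475190920290, -192699417919404843, 193211305619852660, -106131811343649707,
     28187872217147884],
    [363509761957, -1974506209837, 431965770530430, -6019964315114636, 33000025216333606,
     -87879859385052936, 122654491843775061, -86687466787538610, 26560877885593665],
    [108542073404, 5143589483044, -188479017365060, 2067726077654092, -9017374235488313,
     19166872773481576, -18605295431254900, 8945395044821073],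
    [-274393304579, -11319515448237, 129583987713564, -1109415823076556, 4066495594920467,
     -6808474369447252, 5192452808767222],
    [42887918563, 5543607545730, -119339736371059, 720134503557521, -1639892594332752,
     1683830071910990],
    [112763922802, -63690094695, 74523872123987, -317561819001104, 594838579947121],
    [172485792309, 6467711496044, -28950632378592, 225891373298950],
    [-63213994866, -4544420747199, 38251411463037],
    [256590912364, 4971864772500],
    [129252739619]]⟩,
  ⟨109, [
    [512064885034, 12003837700187, -107884262814796, 2364314446182753, -27906038284003766,
     146490681097729202, -399302224792286308, 625746073676559915, -585228705544050662,
     316165574480536477, -93108180273239820, 14108484052580076, -1277841424242817, 78889904620544],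
    [-83928179011, -22608634051127, 625731809017223, -7514556083948679, 46188444998835385,
     -170866587633381079, 409529071382810461, -623611229872010550, 583600674545289224,
     -330149518281421183, 107528649726573401, -18299419529126265, 1196471290518069],
    [-493296214280, 434554218362, -340427532267433, 5357560433103264, -36375832491454220,
     130288166635713958, -271449635332123050, 344343753941434697, -265654483067595398,
     118800298444218636, -27327067341980300, 2431768688106632],
    [-890268047017, -22882511187936, 616454585198819, -6827167708260314, 40083872536982692,
     -132653274386273044, 256432025542083385, -297580920025377804, 201808728400035320,
     -75501065562196603, 13190850948358178],
    [626120185166, 29445491799235, -525539909346067, 6742255383438309, -39576435669208592,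
     120310721107938258, -201223905576105015, 184739508206992886, -88549067940678742,
     17906947733875109],
    [62146922570, -4943873861639, 325749024988640, -3850628419264162, 18346968992757593,
     -41508307303095702, 47920438921737520, -26106192289430848, 5980992297109080],
    [-153826788093, 9828250197387, -304906769015439, 2449152282410092, -11345797705043941,
     25846109183903037, -27994474595425069, 14526326698524587],
    [-529344356144, -16413981561563, 121193518370055, -992142903111363, 3474710519778299,
     -5838262750664443, 4371888981860377],
    [-36890332400, 4004875426663, -126820401355608, 786132557726677, -1740031015661049,
     1467083745411217],
    [-210046234056, -4615800347345, 70061162514795, -276400454956371, 552691526126352],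
    [171343682809, 10482503593918, -56846267625351, 177687294056031],
    [118670518360, -2338099490996, 19647335755586],
    [321866298139, 6225013393648],
    [73484213095]]⟩,
  ⟨103, [
    [118280332539, -5615923938379, 239363117355125, -5634452233082821, 45092044479541837,
     -168535669099719354, 344866202106327826, -416293927974337343, 296631161398275321,
     -119808803671210671, 25670935324433794, -2801315357948155, 152940344778275],
    [190160463657, 6979000325722, -383984768899887, 5002484381136160, -32239380106412825,
     110114339866886001, -214360826576599767, 236646752549982751, -148419703943551558,
     52610769579937584, -9863662994278667, 799385988578389],
    [-448564388894, -11023085137850, 245574666428191, -3879404643993994, 25250533058034385,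
     -81134370365209452, 143421054608629730, -144252130393913825, 81941279439542806,
     -23769568184584844, 2675670955947791],
    [534079455961, 18317736809610, -482176666342675, 4869099867162409, -23096405127627556,
     55546335317356696, -72984513718312085, 51437695149074013, -18433215850330961,
     3190690429503537],
    [1083884617845, 13798723290734, 104594227608706, -1908942288942629, 10587478078503691,
     -27576375096434461, 36243213671593451, -24126087245637979, 6944019984426693],
    [549749306414, 9128200424403, -131600988070046, 1536523361792178, -8227885033133632,
     18989717240949448, -20058615562666502, 7486153677459928],
    [-143334305722, -9721627675480, 185407845161988, -1261115366171344, 3398283152200274,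
     -4051219689530312, 1787986150149229],
    [-481685921650, -2593569585352, -88588977480862, 728539075005693, -1755795458252631,
     2043296574423810],
    [-303721774652, -9952993777452, 88735672755292, -346780183365827, 449230075526742],
    [233628065008, 6243832962442, -20707093237014, 80946713690028],
    [239275444595, -905117894036, 22668133575486],
    [117832842215, 2444904140573],
    [37188226682]]⟩,
  ⟨98, [
    [-518394297973, 17453278887862, -739497234730900, 7963673702609793, -37158751634289720,
     91463997577642522, -132677745031985986, 118934274644165087, -63698008112617110,
     19471691233732310, -3158434336433886, 234809667288381],
    [-202293872433, -13486097645827, 390737327833463, -4533185326153963, 23037461721757900,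
     -60671201204943947, 87203809805336866, -69828334573608366, 30763122153017472,
     -6883890930109258, 619192932088317],
    [22314830892, 5415688719235, -134665838382644, 1792285689128267, -8469736626646703,
     18081105903037365, -21533180073042193, 14766639833350601, -5558003223768672, 737695798696787],
    [-27884025676, -3731410223714, 114562402282905, -1033874531227652, 4030767480196026,
     -7498644168697624, 7282716368781724, -3392610253398379, 692473497341110],
    [-224117997144, 2248092667434, -174694318168287, 953601376769670, -2630409045459832,
     4947215483783473, -4879879809102929, 2103631160772833],
    [-12076228129, -4106298598323, 84463033246481, -615878473671258, 1829370398456118,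
     -2181731482183082, 954592868557923],
    [94930919781, 4782486077724, -46104355599614, 247474602957141, -429114129764689,
     340491183061850],
    [89454059523, -1725480702582, 50214393451481, -160438801873765, 209943294662907],
    [49964126302, 4108987336253, -21789978330472, 49456908241369],
    [40084835518, -2143883213683, 10353701764027],
    [45112665962, 1030803554499],
    [13601063817]]⟩,
  ⟨92, [
    [-366657444994, -6917427442437, 110154085618080, -1726721297874109, 7032351256017694,
     -14740390932692934, 17222035946516229, -11946539886739213, 4773759158095240,
     -1240047050410649, 173112182618480],
    [-91005763974, 2763774386348, -86369151427623, 515221932768162, -2088764121065580,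
     4851862308708638, -6417952188092113, 4694885645238682, -1846949360588414, 288899590268398],
    [-18346975239, -3508969263734, 92188811314378, -771509758925391, 2710988028470819,
     -4801310986734329, 4432781304749557, -2017287737448124, 343087667401686],
    [-5640729821, 4213004601189, -91191110453494, 547719167384860, -1455908782034513,
     1848358941100928, -1076134934938362, 220631763801791],
    [36236401670, -2970890906065, 70769336645693, -372442167420841, 814339240299362,
     -705119406645551, 232565153794146],
    [28673032811, 3322560883928, -35393257692816, 152957625006854, -233555727804757,
     145239553352836],
    [16605799381, -2745238531890, 24209035361218, -60194271405752, 57985416916023],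
    [13181360732, 2982024218679, -17716335316243, 29549435908034],
    [9937427461, -1266359970746, 4417122221372],
    [13236317262, 531989335311],
    [9347792981]]⟩,
  ⟨86, [
    [805488923, 4265735542399, -85166451386558, 574316962677625, -1858372545166947,
     3234637056382133, -3130235934466132, 1650238826305520, -432269203703727, 42541516537333],
    [1147663644, -4274490103063, 73515853716729, -442798899626948, 1251657548369316,
     -1812235367064279, 1361076909631556, -502910911362253, 72449938742717],
    [4037889079, 2975389001907, -49094065322303, 266595283766278, -652771533500329,
     786096389055109, -451239404370883, 96849901747276],
    [6896972847, -4821335297018, 63237977133693, -275671685788074, 520755787681405,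
     -429722513201901, 123041497050168],
    [4142541440, 3505449474016, -36199257168332, 120485697803939, -150755201093508, 59552280724698],
    [916503480, -2922083228574, 18792154729819, -36826982002357, 22348276625159],
    [-111098813, 2334144851935, -10513785166966, 11510669780307],
    [6810678411, -736803016986, 2324966926896],
    [-3728116903, 195223743796],
    [12268482593]]⟩,
  ⟨81, [
    [447047453645, -20680175213506, 291102829872924, -1549755653674281, 3776733864108642,
     -4735432709467608, 3146289184155108, -996519081947057, 104368807340524],
    [-62306807747, 2229831979164, -27129128053653, 134048451186685, -295952286804945,
     320279220153112, -173797256876889, 38022641007105],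
    [-55033652366, -2258459948324, 23618303348069, -84914897999068, 152157365550732,
     -133461292560519, 42216459751652],
    [-28772387300, 3183776145094, -24844099712558, 71102965056110, -81744940480630, 30642168462692],
    [-7282644615, -1430808040931, 10433510012208, -21991020143990, 13133580217053],
    [8046057402, 1108538452375, -5053766411277, 4877104884895],
    [9490576917, -558456747519, 1304191897865],
    [-15828858842, 107796405025],
    [11362115268]]⟩,
  ⟨75, [
    [-489802012936, 732251614479, -4912318269551, 65225824534391, -162386953297308,
     230293187705205, -167240124645995, 32131680321803],
    [-147343022689, -3982383869664, 37417580159804, -115891090553699, 175451037703876,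
     -114486085263759, 19724902250183],
    [143948873016, 556404149705, -7739061725443, 21784330280755, -40244281391272, 27746327563365],
    [57927928791, -2283050368239, 14189223630673, -31686455003471, 20909874915464],
    [15613643270, 816389844269, -3938056441908, 3865774896041],
    [4563948695, -262318654949, 647499495502],
    [-17081737433, 104943495972],
    [13376822832]]⟩,
  ⟨69, [
    [-894109631, -1946436147642, 16104931977437, -47983307298346, 62867957057210, -35993374835480,
     7267682328125],
    [-6437245885, 1823444129264, -11955930950501, 26209479768892, -22573423971960, 6421294399759],
    [-3777307599, -854610260313, 4557207414890, -7155026237034, 3394923058176],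
    [-11126513485, 382656689326, -1823802632322, 2004810700140],
    [-5768000346, -301327520221, 738460785577],
    [-9931554720, 67449835900],
    [15319155438]]⟩,
  ⟨63, [
    [363883396, 1002359335502, -6171311886129, 12621890590933, -10103449529542, 2666414791348],
    [9780722091, -666663590652, 3238411708078, -4570043567174, 1899182318384],
    [5708640088, 214724848953, -826204637329, 804718653201],
    [9172211785, -69384237107, 298153939796],
    [-7048033750, 84157455585],
    [17577171660]]⟩,
  ⟨56, [
    [-2520083176, -346138471808, 1740478481977, -2443677970315, 985598366874],
    [-14774847755, 313726402034, -948824926237, 654377876476],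
    [14471306086, -131256727855, 210826866645],
    [-24795836430, 73647284345],
    [11735700398]]⟩,
  ⟨50, [
    [-9100306432, 135454299557, -388159449686, 262767296441],
    [28058653137, -140304872251, 150919178540],
    [-16132866681, 47479450285],
    [8220504421]]⟩,
  ⟨44, [
    [19579787528, -87718999113, 81717612418],
    [-16994473771, 38930460145],
    [4578119175]]⟩,
  ⟨38, [
    [-7351206825, 17035742413],
    [4236337865]]⟩,
  ⟨31, [
    [2800496138]]⟩]

/-- The constant term in the square of the three-point bound. -/
def squareConst : ℤ := 36147609751794

/-- The coefficients of the two-point part of the bound. The first one, which is the margin by which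
the rest of the two-point form is negative, normalizes the certificate. -/
def gegenbauerCoeffs : List ℤ :=
  [2 ^ 204, 783881892797108303710732021564555382590703955123039423692800,
   301277203862988486238891533951006727208683115465406910707939,
   14235665501385271740741295113488894947355343687974256290474,
   599494793500892412865284953774451957379658525643672616364,
   26200328231105646150090840316469216449152046238197333276,
   113757876425736760739941448565898036737954746332804333,
   47259087525249699853553398206683809826689544598366,
   178837775982789086917726080651014826812781540812,
   11928780161333989415128228059363102134213264632, 503079833996826043021023233226759880847373759,
   136287603883533770824729491597616405084111103, 290060624124333047762488221737794070119315,
   8430761512921611205789825834547180799876, 126710226718714426328310433095832044807,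
   6651117508351330584735924695771137288, 90742072993833776664862431602743028,
   2716625586189573179006219175409628, 32827309552110000805049931327027,
   978690978756088039720158345153, 12050800805217118988393894403, 309307069781723552410466142,
   3765526968567135141001878, 94220058588993095819085, 1070841196951293527067,
   21717286005803515176, 241447256851126922, 4848504766546521, 53280140983621, 979297122549,
   10017959455, 166815220, 1669542]

section Trees

local notation "X" => SubdivTree.split 0
local notation "Y" => SubdivTree.split 1
local notation "Z" => SubdivTree.split 2
local notation "N" => SubdivTree.bound 0
local notation "P" => SubdivTree.bound
local notation "U" => SubdivTree.disordered 0 1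
local notation "V" => SubdivTree.disordered 1 2

/-- The subdivision that certifies the sign of the symmetrized kernel. -/
def kernelTree : SubdivTree 3 :=
  X (Y (Z (X (Y (P 51539607552) (Z V (X N (X (Y (Z (P 262144) (P 384)) (Z V (X (Y N (Z V (Y N N)))
  (Y N (Z V (Y N (Z V N))))))) (Y (Z (P 262144) N) (Z V (Y N (Z V (X (Y N N) (Y N N)))))))))) (Y U
  (Z V (Y (Z (X (X (Y (P 98304) (Z V N)) (Y U N)) U) (X (X N (Y U (Z N (X (Y N N) (Y U N))))) U)) (X
  (Z V (X (Y (Z N N) (Z V N)) (Y N N))) (Z V (Y (X N U) (X N (Z V N))))))))) (X (Y (X (Y (Z (P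
  805306368) (Z (P 16777216) N)) (Y (Z (P 25165824) (Z (X (P 1572864) (Z (P 98304) N)) (Z N (Y (Z N
  (X (Z N (X (P 12288) (P 768))) N)) (Z N (X (Z N (Z N (Z N (Z N (X (Z N (X (P 12288) (P 6144))) (P
  192)))))) N)))))) (Z (X (P 6144) (Y (P 196608) (P 8192))) (X (Z N (Z N (Z N (Z N (Z N (Z N (X (Z N
  (Z N (Y (P 512) N))) N))))))) N)))) (Y U (Z (Y (X (Z (P 1048576) (Z (P 393216) (X (P 98304) (P
  1536)))) U) (Y (Z (X (P 131072) (X (Z (P 49152) (X (P 24576) (Y U (P 4096)))) U)) (Z (X (Y (Z (P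
  32768) (P 8192)) (X (P 12288) (Z (Z (P 12288) (Y (P 8192) (P 4096))) (P 384)))) (X (Z (X (Y (Z (P
  12288) (X (P 12288) (Z (Y U (P 6144)) (Y U (P 4096))))) (Y (Z (X (P 8192) (Y (P 6144) (P 4096)))
  (Z (X (P 6144) (Y (X (P 6144) (P 4096)) (P 3072))) (P 3072))) (Z (X (P 6144) (P 3072)) (Z (X (P
  3072) N) N)))) (Y U (X (Y (Z (P 3072) (P 768)) N) N))) (Z (Z (X (Y (P 3072) N) N) N) N)) U)) N))
  (X (Z (X (P 24576) (Y (P 24576) N)) (X (P 3072) (Z (Y (Z (Y (P 4096) N) N) N) N))) (Z (X (Y (Z (P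
  6144) (P 3072)) N) N) (X (Z (Y (Z (P 512) N) N) N) N))))) (Z N (X N N))))) (X (Z (X (Y N (Z N (Y N
  (Z N (X N (Y N N)))))) (Y N (Z (X N (Y N N)) (Y N N)))) (Y (X (Z N (Y N (Y (X N N) (Z N (Z N (Z N
  (Z N (Z N (Z N (X N N)))))))))) N) (X (Z (Y N N) (Z N (Z N (Z N (Y (Z N (Z N (X N N))) N))))) (Z
  (Y N N) N)))) (Z (X (Z (Y N (Y N (Z (X N N) N))) (Y (X N (Y N (Z N (Y N N)))) (Y (Z N (X (Y N N)
  N)) (Z N N)))) (Y (Z N (Y (Z N (Y N (X (Y N (Z N N)) (Z N N)))) (Z N (Y (Z (X (X (Y N N) (Y (Z N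
  N) N)) N) N) N)))) (Z (Y (Z N (Y N N)) N) (Y N (Z N (X (Z N N) N)))))) (Y (Y N (Z (X N (Y N (Z N
  N))) N)) (Z (Z (Y (Z (X (Y N N) N) N) (Z (X (Z N N) N) N)) N) (Z N (Z N (X N N)))))))) (Y U (Z (X
  (Y (Z (X (Y N (Z (Y N (X N N)) (Y N (X N N)))) (Y U (Y (X (Z (X N N) (X (Y N N) (Y U N))) U) (X (Z
  N N) N)))) (Z N (X (Y (X (Y (Z N N) (Z N N)) (Z (Y U N) N)) N) N))) (Y (Z (X (Y (Z (X (Y (Z N (X N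
  N)) (Z N (X N N))) N) (X (Y (Z (X N N) N) (X (Z N N) (Z (Z N N) N))) N)) (Z N N)) N) (Z N N)) (X
  (Z N (Z N N)) (Z N (Z N N))))) (Y U (Z N (Z (X (Y N N) N) N)))) (X (Y (Z (X (Y N (Y (X N (Z N N))
  (Z (X (Z N N) (Z (Z N N) N)) N))) (Y U (Z (X (Y (Z (Z N N) N) (Z (Z N N) N)) (Z (Z N N) N)) N)))
  N) (Z (X (X (Z (Z (Y N N) N) N) (Z (Z N N) N)) N) N)) (Z (Y U N) (Y U N))))))) (Z V (X (Y (Z (X (X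
  (Y (Z N (Y (Z N (X N N)) (Z N (Z N N)))) (Z V (Y (Z N (X (Z N N) N)) (Z V (Y N N))))) (Y (Z N (Y
  (Z N N) (Z N N))) (Z V (Y (Z N N) (Z V (Y N (Z V N))))))) (Z (Y N V) (Y (X (Z N (Z N N)) (Z N (Z N
  N))) (X (Y (Z (X (Y N N) (Y N N)) N) (Z V (Y N (Z V (Y N N))))) (Y (Z N N) N))))) (Z (X (Y (Z (X
  (Z (Y (X N N) N) N) (Z (Y N N) N)) N) (X N N)) (Y (Z (X N N) N) (X (Z (Y N N) N) N))) (X (Z N (Y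
  (X N N) N)) (Y (Z N (Z N (X N N))) (X (Y (Z N (Z N (X N (Z N (Z N (Y N N)))))) N) (Z N (Y (Z N (X
  (Z N (Z N (Z N (Z N (Y N N))))) N)) (X N (Z N (Y N N)))))))))) (Z V (X N (X (Y (Z (Y N N) N) N) (Y
  (Y (Z (Z N N) N) N) N))))) (Y (Z (X (X (Y (Z N (Z N N)) (Z V N)) (Y (Z (Y (Z N N) (Z V N)) (Z N
  N)) (Z V N))) (Y (Z (X (X (Y (Z N N) N) N) N) N) (Z V (Z (Y N V) (X N N))))) (Z (X (X (Z (Y N N)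
  N) (Y (Z N N) (Y (Z N N) (Z N N)))) N) (X (Z (X N (Y N N)) (Y (X N N) (X (Z N (Y N (X (Z N (Y N
  N)) (Z N (Y N N))))) N))) (Z (Y N N) (Y N N))))) (Z V (X (X N (Y (Z N (Z N (Z N (Y (Z N (Y (Z N (X
  N N)) N)) N)))) (Z V N))) (Y N (Z V (Y N (Z V (Y N (Z V (Y N (Z V (X (Y N (X N N))
  N))))))))))))))) (Y U (Z V (X (Y (Z (X (Y (Z N N) (Z V N)) (Y U (Z V (X N (Z (.disordered 0 2)
  N))))) (Z (Z (Z (X (Y N N) (Y U N)) (X N N)) N) (Z N (Z (X N N) (Z N (Z N (Z N (X N (Y U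
  N))))))))) (Z V (Y (Z (Y (X N (X N N)) N) N) (Z V (Y N (Z V (Y (Z N (X N N)) (Z V (X (Y N (Z V (Y
  N (Z V (X (Y N (Z V (Y N (Z V (Y N (X N (Z V (Y N (Z V (Y N (Z V (X N N)))))))))))) N))))) (Y N (Z
  V (X N N)))))))))))) (Y U (Z V (X (Y (Z N N) (Z V (Y N (Z V (Z N (Y N (Y N (Z V (X N N))))))))) (Y
  U (Z V N))))))))

/-- The subdivision that certifies the sign of the two-point form. -/
def twoPointTree : SubdivTree 1 :=
  X (X (X (X N N) N) N) (X (X N N) (X (X N N) N))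

end Trees

end Certificate

section KernelCertificate

set_option maxRecDepth 100000
set_option exponentiation.threshold 1000000

theorem normBound_symmetrizedKernelForm_lt :
    (symmetrizedKernelForm 7 gramBlocks 16 NormBound.unitPoint NormBound.unitPoint
      NormBound.unitPoint).toNat < 2 ^ (278 - 1) := by
  decide +kernel

theorem normBound_gramDetForm_lt :
    (gramDetForm NormBound.unitPoint NormBound.unitPoint NormBound.unitPoint).toNat
      < 2 ^ (70 - 1) := by
  decide +kernel

theorem normBound_twoPointForm_lt :
    (twoPointForm gramBlocks squareConst gegenbauerCoeffs NormBound.unitPoint).toNat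
      < 2 ^ (261 - 1) := by
  decide +kernel

/-- The packed Bernstein coefficients of `symmetrizedKernelForm 7 gramBlocks 16`. -/
def packedKernel : ℕ :=
  packedCoeffs 72 278 16 3 176 (2 ^ 51) 56 (symmetrizedKernelForm 7 gramBlocks 16
    (kroneckerPoint 278 17 0) (kroneckerPoint 278 17 1) (kroneckerPoint 278 17 2))

/-- The packed Bernstein coefficients of `gramDetForm`. -/
def packedGramDet : ℕ :=
  packedCoeffs 72 70 16 3 0 (2 ^ 19) 20
    (gramDetForm (kroneckerPoint 70 17 0) (kroneckerPoint 70 17 1) (kroneckerPoint 70 17 2))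

/-- The packed Bernstein coefficients of `twoPointForm gramBlocks squareConst gegenbauerCoeffs`. -/
def packedTwoPoint : ℕ :=
  packedCoeffs 90 261 32 1 164 (2 ^ 54) 56
    (twoPointForm gramBlocks squareConst gegenbauerCoeffs (kroneckerPoint 261 33 0))

theorem slotsLT_packedKernel : slotsLT 72 (17 ^ 3) 56 packedKernel = true := by
  decide +kernel

theorem slotsLT_packedGramDet : slotsLT 72 (17 ^ 3) 20 packedGramDet = true := by
  decide +kernel

theorem slotsLT_packedTwoPoint : slotsLT 90 (33 ^ 1) 56 packedTwoPoint = true := by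
  decide +kernel

theorem check_kernelTree :
    kernelTree.check 72 16 56 20 (2 ^ 51) (2 ^ 19) packedKernel packedGramDet (.root 3 20)
      = true := by
  decide +kernel

theorem check_twoPointTree :
    twoPointTree.check 90 32 56 0 (2 ^ 54) 0 packedTwoPoint 0 (.root 1 20) = true := by
  decide +kernel

theorem gegenbauerCoeffs_getD_nonneg (k : ℕ) : 0 ≤ gegenbauerCoeffs.getD k 0 := by
  have hall : ∀ a ∈ gegenbauerCoeffs, 0 ≤ a := by decide +kernel
  rw [List.getD_eq_getElem?_getD]
  cases h : gegenbauerCoeffs[k]? with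
  | none => exact le_rfl
  | some a => exact hall a (List.mem_of_getElem? h)

theorem gegenbauerSum_gegenbauerCoeffs_lt :
    gegenbauerSum 8 2 4 1 (fun k => gegenbauerCoeffs.getD k 0) 32
      + 2 ^ (nthBlock gramBlocks 0).exponent * squareConst ^ 2
        < 555 * gegenbauerCoeffs.getD 0 0 := by
  decide +kernel

end KernelCertificate

section Nonpositivity

variable {u v t : ℝ}

theorem two_mul_add_two_div_three_mem_Icc (hu : u ∈ Set.Icc (-1 : ℝ) (1 / 2)) :
    (2 * u + 2) / 3 ∈ Set.Icc (0 : ℝ) 1 :=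
  ⟨by linarith [hu.1], by linarith [hu.2]⟩

theorem twoPointForm_nonpos (hu : u ∈ Set.Icc (-1 : ℝ) (1 / 2)) :
    twoPointForm gramBlocks squareConst gegenbauerCoeffs (cosPoint u) ≤ 0 := by
  let x : Fin 1 → ℝ := fun _ => (2 * u + 2) / 3
  have hx : ∀ a, x a ∈ Set.Icc 0 1 := fun _ => two_mul_add_two_div_three_mem_Icc hu
  have hform := ((representsPoint_kroneckerPoint (x := x) 0).twoPointForm gramBlocks squareConst
    gegenbauerCoeffs (w := 261) (n := 33)).cast (D' := fun _ => 32) (by decide)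
  have hpacked : packedForm 90 32 packedTwoPoint x ≤ (2 ^ 54 : ℕ) :=
    SubdivTree.packedForm_le_of_check (by norm_num) (by norm_num) (by norm_num)
      (slot_packedCoeffs_lt (by norm_num) slotsLT_packedTwoPoint)
      (fun i => by rw [slot_zero_left]; norm_num) check_twoPointTree hx
      (Cell.ordered_root (Subsingleton.monotone x))
      (by simp [packedForm, slot_zero_left, bernsteinForm_const])
  exact hform.nonpos_of_packedForm_le (by norm_num) normBound_twoPointForm_lt (by norm_num) hx
    slotsLT_packedTwoPoint hpacked

theorem symmetrizedKernelForm_nonpos_of_le_le (hu : u ∈ Set.Icc (-1 : ℝ) (1 / 2))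
    (hv : v ∈ Set.Icc (-1 : ℝ) (1 / 2)) (ht : t ∈ Set.Icc (-1 : ℝ) (1 / 2)) (huv : u ≤ v)
    (hvt : v ≤ t) (hdet : 0 ≤ 1 + 2 * u * v * t - u ^ 2 - v ^ 2 - t ^ 2) :
    symmetrizedKernelForm 7 gramBlocks 16 (cosPoint u) (cosPoint v) (cosPoint t) ≤ 0 := by
  let x : Fin 3 → ℝ := ![(2 * u + 2) / 3, (2 * v + 2) / 3, (2 * t + 2) / 3]
  have hx : ∀ a, x a ∈ Set.Icc 0 1 := Fin.forall_fin_succ.mpr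
    ⟨two_mul_add_two_div_three_mem_Icc hu, Fin.forall_fin_two.mpr
      ⟨two_mul_add_two_div_three_mem_Icc hv, two_mul_add_two_div_three_mem_Icc ht⟩⟩
  have hmono : Monotone x := Fin.monotone_iff_le_succ.mpr <| Fin.forall_fin_two.mpr
    ⟨by change (2 * u + 2) / 3 ≤ (2 * v + 2) / 3; linarith,
      by change (2 * v + 2) / 3 ≤ (2 * t + 2) / 3; linarith⟩
  have hpoint (w : ℕ) (a : Fin 3) := representsPoint_kroneckerPoint (w := w) (n := 17) (x := x) a
  have hkernel := ((hpoint 278 0).symmetrizedKernelForm (hpoint 278 1) (hpoint 278 2) 7 gramBlocks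
    16).cast (D' := fun _ => 16) (by decide)
  have hgram := ((hpoint 70 0).gramDetForm (hpoint 70 1) (hpoint 70 2)).cast (D' := fun _ => 16)
    (by decide)
  have hdet : 0 ≤ gramDetForm (cosPoint u) (cosPoint v) (cosPoint t) := by
    rw [gramDetForm_cosPoint]
    positivity
  have hpacked : packedForm 72 16 packedKernel x ≤ (2 ^ 51 : ℕ) :=
    SubdivTree.packedForm_le_of_check (by norm_num) (by norm_num) (by norm_num)
      (slot_packedCoeffs_lt (by norm_num) slotsLT_packedKernel)
      (slot_packedCoeffs_lt (by norm_num) slotsLT_packedGramDet) check_kernelTree hx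
      (Cell.ordered_root hmono)
      (hgram.off_le_packedForm (by norm_num) normBound_gramDetForm_lt (by norm_num) hx
        slotsLT_packedGramDet hdet)
  exact hkernel.nonpos_of_packedForm_le (by norm_num) normBound_symmetrizedKernelForm_lt
    (by norm_num) hx slotsLT_packedKernel hpacked

theorem symmetrizedKernelForm_nonpos (u v t : ℝ) :
    u ∈ Set.Icc (-1 : ℝ) (1 / 2) → v ∈ Set.Icc (-1 : ℝ) (1 / 2) →
      t ∈ Set.Icc (-1 : ℝ) (1 / 2) → 0 ≤ 1 + 2 * u * v * t - u ^ 2 - v ^ 2 - t ^ 2 →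
        symmetrizedKernelForm 7 gramBlocks 16 (cosPoint u) (cosPoint v) (cosPoint t) ≤ 0 := by
  refine forall_of_forall_le_le (P := fun u v t => u ∈ Set.Icc (-1 : ℝ) (1 / 2) →
    v ∈ Set.Icc (-1 : ℝ) (1 / 2) → t ∈ Set.Icc (-1 : ℝ) (1 / 2) →
      0 ≤ 1 + 2 * u * v * t - u ^ 2 - v ^ 2 - t ^ 2 →
        symmetrizedKernelForm 7 gramBlocks 16 (cosPoint u) (cosPoint v) (cosPoint t) ≤ 0)
    (fun u v t h hv hu ht hdet => ?_) (fun u v t h hu ht hv hdet => ?_)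
    (fun u v t huv hvt hu hv ht => symmetrizedKernelForm_nonpos_of_le_le hu hv ht huv hvt) u v t
  · rw [symmetrizedKernelForm_swap_left]
    exact h hu hv ht (by linarith)
  · rw [symmetrizedKernelForm_swap_right]
    exact h hu hv ht (by linarith)

end Nonpositivity

end KissingNumber

open KissingNumber

theorem kissing_number_dim10_le_554
    (S : Finset (EuclideanSpace ℝ (Fin 10)))
    (hnorm : ∀ x ∈ S, ‖x‖ = 1)
    (hdist : ∀ x ∈ S, ∀ y ∈ S, x ≠ y → 1 ≤ dist x y) :
    S.card ≤ 554 := by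
  have hinner : ∀ x ∈ S, ∀ y ∈ S, x ≠ y → inner ℝ x y ≤ 1 / 2 := fun x hx y hy hxy =>
    inner_le_half_of_one_le_dist (hnorm x hx) (hnorm y hy) (hdist x hx y hy hxy)
  have hbound := card_mul_le_of_forms hnorm (by simp) hinner (by decide)
    gegenbauerCoeffs_getD_nonneg (fun u => twoPointForm_nonpos)
    (fun u hu v hv t ht => symmetrizedKernelForm_nonpos u v t hu hv ht)
  rcases S.card.eq_zero_or_pos with hcard | hcard
  · omega
  have hcard_mul : (S.card : ℤ) * gegenbauerCoeffs.getD 0 0 < 555 * gegenbauerCoeffs.getD 0 0 :=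
    (le_of_mul_le_mul_left hbound (mod_cast hcard)).trans_lt gegenbauerSum_gegenbauerCoeffs_lt
  have hcard_lt := lt_of_mul_lt_mul_right hcard_mul (gegenbauerCoeffs_getD_nonneg 0)
  omega
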